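/- arXiv:2206.02132 — 3 statements merged into one kernel-verified Lean document; each statement's English description precedes it below -/
import Mathlib

section
/- If u is a C² function on ℝ^{d+1}₊ that is κ-harmonic (i.e. Δ_κu = 0 at every point of ℝ^{d+1}₊ whose x-coordinate is regular), then u is infinitely differentiable on ℝ^{d+1}₊. -/
/-!
Every point of the half-space lies in a ball centred on the axis `x = 0` whose closure is contained
in the half-space. Such a ball is invariant under the reflections, and after an affine change of
variables `u` becomes a function on the closed unit ball, continuous there and `κ`-harmonic inside,
for a root system in `ℝ^(d+1)` acting trivially on the last coordinate. It therefore suffices to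
treat the unit ball (`RootData.smooth_ball`).

*Polynomial Dirichlet problem.* The Fischer decomposition for `Δ_κ = ∑ Tᵢ²`, with `Tᵢ` the Dunkl
operators, shows that every polynomial agrees on the unit sphere with a `κ`-harmonic polynomial
(`RootData.dirichlet`). By Stone–Weierstrass and the weak maximum principle
(`RootData.max_principle`), a `κ`-harmonic function continuous on the closed ball is a uniform limit
of `κ`-harmonic polynomials. It remains to bound the derivatives of a `κ`-harmonic polynomial `H` on
`|x| ≤ r < 1` by its maximum over the sphere, uniformly in the degree (`RootData.deriv_bound`).

*Interior estimates without kernels.* Let `λ(f)` be the value at `0` of the harmonic polynomial with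
boundary values `f` (`RootData.lam`). It is a positive functional, for which homogeneous harmonic
polynomials of different degrees are orthogonal (`RootData.orth`); so the homogeneous components
`Hₙ` of `H` satisfy `λ(Hₙ²) ≤ (max |H|)²` (`RootData.lam_sq_comp`). A subharmonic barrier with its
pole just outside the sphere (`RootData.LapF_bar_nonneg`) bounds `λ` from below on spherical caps.
Together with Markov's inequality (`RootData.markov`) this bounds `max |Hₙ|²` over the sphere by
`λ(Hₙ²)` times a power of `n + 1` (`RootData.nikolskii`). Derivatives cost further powers of `n + 1`
by Markov's inequality, and on `|x| ≤ r` homogeneity gives the factor `rⁿ`, so the series over `n`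
converges.
-/

open MeasureTheory Filter Metric
open scoped RealInnerProductSpace Topology

noncomputable section

/-- Euclidean space `ℝ^d`. -/
abbrev Ed (d : ℕ) : Type := EuclideanSpace ℝ (Fin d)

/-- The reflection `σ_α(x) = x - ⟨α,x⟩α` (for roots normalized by `⟨α,α⟩ = 2`). -/
def reflAt {d : ℕ} (α x : Ed d) : Ed d := x - ⟪α, x⟫ • α

/-- The reflection group `G` generated by the reflections `σ_α`, `α ∈ R`, realized as the
submonoid of self-maps of `ℝ^d` generated by the reflections (each reflection is an
involution, so this is in fact a group of transformations). -/
def dunklGroup {d : ℕ} (R : Finset (Ed d)) : Submonoid (Function.End (Ed d)) :=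
  Submonoid.closure {f : Function.End (Ed d) | ∃ α ∈ R, f = reflAt α}

/-- A (normalized) root system `R` with positive subsystem `Rp` and
`G`-invariant nonnegative multiplicity function `κ`. -/
structure IsRootSystem {d : ℕ} (R Rp : Finset (Ed d)) (κ : Ed d → ℝ) : Prop where
  nonzero : ∀ α ∈ R, α ≠ (0 : Ed d)
  norm_two : ∀ α ∈ R, ⟪α, α⟫ = (2 : ℝ)
  refl_mem : ∀ α ∈ R, ∀ β ∈ R, reflAt α β ∈ R
  pos_sub : Rp ⊆ R
  pos_split : ∀ α ∈ R, (α ∈ Rp ∧ ¬(-α ∈ Rp)) ∨ (¬(α ∈ Rp) ∧ -α ∈ Rp)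
  kappa_nonneg : ∀ α ∈ R, 0 ≤ κ α
  kappa_inv : ∀ σ ∈ dunklGroup R, ∀ α ∈ R, κ (σ α) = κ α

/-- `x ∈ ℝ^d` is regular if `⟨α,x⟩ ≠ 0` for all roots `α ∈ R`. -/
def isRegular {d : ℕ} (R : Finset (Ed d)) (x : Ed d) : Prop :=
  ∀ α ∈ R, ⟪α, x⟫ ≠ (0 : ℝ)

/-- Second directional derivative of `u` at `p` in direction `v`. -/
def pd2 {d : ℕ} (u : Ed d × ℝ → ℝ) (p v : Ed d × ℝ) : ℝ :=
  fderiv ℝ (fun q => fderiv ℝ u q v) p v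

/-- The Euclidean Laplacian on `ℝ^{d+1} = ℝ^d × ℝ`. -/
def lapE {d : ℕ} (u : Ed d × ℝ → ℝ) (p : Ed d × ℝ) : ℝ :=
  (∑ i : Fin d, pd2 u p (EuclideanSpace.single i 1, 0)) + pd2 u p (0, 1)

/-- The Dunkl Laplacian `Δ_κ` on `ℝ^{d+1}` (the Dunkl operators act in the `x`-variables). -/
def dunklLap {d : ℕ} (Rp : Finset (Ed d)) (κ : Ed d → ℝ) (u : Ed d × ℝ → ℝ)
    (p : Ed d × ℝ) : ℝ :=
  lapE u p + 2 * ∑ α ∈ Rp, κ α *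
    (fderiv ℝ u p (α, 0) / ⟪α, p.1⟫ - (u p - u (reflAt α p.1, p.2)) / ⟪α, p.1⟫ ^ 2)

/-- The open upper half-space `ℝ^{d+1}₊`. -/
def upperHS (d : ℕ) : Set (Ed d × ℝ) := {p | 0 < p.2}

/-- `u` is `κ`-harmonic on `Ω`: `u` is `C²` on `Ω` and `Δ_κ u = 0` at every point of `Ω`
whose `x`-coordinate is regular. -/
def KHarmonicOn {d : ℕ} (R Rp : Finset (Ed d)) (κ : Ed d → ℝ) (u : Ed d × ℝ → ℝ)
    (Ω : Set (Ed d × ℝ)) : Prop :=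
  ContDiffOn ℝ 2 u Ω ∧ ∀ p ∈ Ω, isRegular R p.1 → dunklLap Rp κ u p = 0

/-- The cone `Γ_a(x)` of aperture `a` with vertex `(x,0)`. -/
def cone {d : ℕ} (a : ℝ) (x : Ed d) : Set (Ed d × ℝ) :=
  {p | 0 < p.2 ∧ dist p.1 x < a * p.2}

/-- The truncated cone `Γ_a^h(x)`. -/
def coneT {d : ℕ} (a h : ℝ) (x : Ed d) : Set (Ed d × ℝ) :=
  {p | 0 < p.2 ∧ p.2 < h ∧ dist p.1 x < a * p.2}

/-- `u` has a finite non-tangential limit at `(x,0)`. -/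
def HasNTLimit {d : ℕ} (u : Ed d × ℝ → ℝ) (x : Ed d) : Prop :=
  ∀ a > (0 : ℝ), ∃ L : ℝ, Tendsto u (𝓝[cone a x] (x, (0 : ℝ))) (𝓝 L)

/-- `u` is non-tangentially bounded at `(x,0)`. -/
def NTBounded {d : ℕ} (u : Ed d × ℝ → ℝ) (x : Ed d) : Prop :=
  ∃ a > (0 : ℝ), ∃ h > (0 : ℝ), ∃ M : ℝ, ∀ p ∈ coneT a h x, |u p| ≤ M

/-- A subset of `ℝ^d` is `G`-invariant. -/
def GInvSet {d : ℕ} (R : Finset (Ed d)) (E : Set (Ed d)) : Prop :=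
  ∀ σ ∈ dunklGroup R, σ '' E = E

set_option linter.unusedSectionVars false

/-! ### Dunkl operators on polynomials -/

/-- A root system in coordinates, indexed by a type `J`: `a j` are the roots (of squared length
`2`), `s i` is the permutation of the indices induced by the reflection in `a i`, and `k` is an
invariant multiplicity. All roots are listed, positive or not, so `k` plays the role of `κ / 2`. -/
structure RootData (ι J : Type) [Fintype ι] where
  a : J → ι → ℝ
  k : J → ℝ
  s : J → J ≃ J
  norm : ∀ j, a j ⬝ᵥ a j = 2
  a_s : ∀ i j, a (s i j) = a j - (a i ⬝ᵥ a j) • a i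
  k_s : ∀ i j, k (s i j) = k j

namespace RootData
open MvPolynomial

variable {ι J : Type} [Fintype ι] [DecidableEq ι] [Fintype J] (D : RootData ι J)

/-- The linear form `∑ vᵢ Xᵢ` as a polynomial, depending linearly on `v`. -/
def lin : (ι → ℝ) →ₗ[ℝ] MvPolynomial ι ℝ :=
  ∑ i, (LinearMap.proj i : (ι → ℝ) →ₗ[ℝ] ℝ).smulRight (X i)

theorem lin_apply (v : ι → ℝ) : lin v = ∑ i, v i • (X i : MvPolynomial ι ℝ) := by
  simp [lin]

theorem lin_single (i : ι) : lin (Pi.single i 1) = (X i : MvPolynomial ι ℝ) := by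
  rw [lin_apply, Finset.sum_eq_single i] <;> simp +contextual

theorem eval_lin (x v : ι → ℝ) : eval x (lin v) = v ⬝ᵥ x := by
  simp [lin_apply, dotProduct, smul_eval]

theorem lin_ne_zero {v : ι → ℝ} (h : v ⬝ᵥ v = 2) : lin v ≠ 0 := by
  intro h0
  have := eval_lin v v
  rw [h0, h] at this
  simp at this

/-- The reflection in the hyperplane orthogonal to the root `a j`. -/
def r (j : J) : (ι → ℝ) →ₗ[ℝ] (ι → ℝ) where
  toFun v := v - (D.a j ⬝ᵥ v) • D.a j
  map_add' v w := by rw [dotProduct_add]; module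
  map_smul' c v := by simp only [dotProduct_smul, smul_eq_mul, RingHom.id_apply]; module

theorem r_apply (j : J) (v : ι → ℝ) : D.r j v = v - (D.a j ⬝ᵥ v) • D.a j := rfl

theorem r_dot_r (j : J) (v w : ι → ℝ) : D.r j v ⬝ᵥ D.r j w = v ⬝ᵥ w := by
  simp only [r_apply, sub_dotProduct, dotProduct_sub, smul_dotProduct, dotProduct_smul, D.norm,
    smul_eq_mul, dotProduct_comm v (D.a j)]
  ring

theorem dot_r (j : J) (v w : ι → ℝ) : v ⬝ᵥ D.r j w = D.r j v ⬝ᵥ w := by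
  simp only [r_apply, sub_dotProduct, dotProduct_sub, smul_dotProduct, dotProduct_smul,
    smul_eq_mul, dotProduct_comm v (D.a j)]
  ring

theorem r_r (j : J) (v : ι → ℝ) : D.r j (D.r j v) = v := by
  simp only [r_apply, dotProduct_sub, dotProduct_smul, D.norm, smul_eq_mul]
  module

theorem r_self (j : J) : D.r j (D.a j) = -D.a j := by
  rw [r_apply, D.norm]; module

theorem a_s' (i j : J) : D.a (D.s i j) = D.r i (D.a j) := by rw [D.a_s, r_apply]

/-- Composition with a reflection, as an algebra endomorphism of the polynomials. -/
def sg (j : J) : MvPolynomial ι ℝ →ₐ[ℝ] MvPolynomial ι ℝ :=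
  aeval fun i => lin (D.r j (Pi.single i 1))

theorem sg_lin (j : J) (v : ι → ℝ) : D.sg j (lin v) = lin (D.r j v) := by
  have h : (D.sg j).toLinearMap ∘ₗ lin = lin ∘ₗ D.r j := by
    refine (Pi.basisFun ℝ ι).ext fun i => ?_
    simp only [Pi.basisFun_apply, LinearMap.comp_apply, lin_single]
    simp [sg]
  exact LinearMap.congr_fun h v

theorem eval_sg (j : J) (x : ι → ℝ) (f : MvPolynomial ι ℝ) :
    eval x (D.sg j f) = eval (D.r j x) f := by
  induction f using MvPolynomial.induction_on with
  | C c => simp [sg]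
  | add f g hf hg => simp [hf, hg]
  | mul_X f i hf =>
    have : X i = lin (Pi.single i (1 : ℝ)) := (lin_single i).symm
    rw [map_mul, map_mul, map_mul, hf, this, sg_lin, eval_lin, eval_lin, dot_r]

/-- Two operators on polynomials are equal if they agree at `1` and their agreement at `f` passes to
all products of `f` with linear forms. -/
theorem op_ext (U V : MvPolynomial ι ℝ →ₗ[ℝ] MvPolynomial ι ℝ) (h1 : U 1 = V 1)
    (hX : ∀ (v : ι → ℝ) f, U f = V f → U (lin v * f) = V (lin v * f)) (f : MvPolynomial ι ℝ) :
    U f = V f := by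
  induction f using MvPolynomial.induction_on with
  | C c =>
    rw [show (C c : MvPolynomial ι ℝ) = c • 1 by rw [smul_eq_C_mul, mul_one], map_smul, h1,
      map_smul]
  | add f g hf hg => simp [hf, hg]
  | mul_X f i hf => rw [mul_comm, ← lin_single]; exact hX _ _ hf

theorem sg_sg (j : J) (f : MvPolynomial ι ℝ) : D.sg j (D.sg j f) = f := by
  refine op_ext ((D.sg j).toLinearMap ∘ₗ (D.sg j).toLinearMap) LinearMap.id
    (by simp) (fun v f hf => ?_) f
  change D.sg j (D.sg j f) = f at hf
  change D.sg j (D.sg j _) = _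
  rw [map_mul, map_mul, sg_lin, sg_lin, r_r, hf, LinearMap.id_apply]

theorem sg_comm (i j : J) (f : MvPolynomial ι ℝ) :
    D.sg (D.s i j) (D.sg i f) = D.sg i (D.sg j f) := by
  refine op_ext ((D.sg (D.s i j)).toLinearMap ∘ₗ (D.sg i).toLinearMap)
    ((D.sg i).toLinearMap ∘ₗ (D.sg j).toLinearMap) (by simp) (fun v f hf => ?_) f
  change D.sg (D.s i j) (D.sg i f) = D.sg i (D.sg j f) at hf
  change D.sg (D.s i j) (D.sg i _) = D.sg i (D.sg j _)
  simp only [map_mul, sg_lin]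
  rw [hf]
  congr 2
  rw [r_apply _ (D.s i j), a_s', r_dot_r, r_apply _ j, map_sub, map_smul]

theorem dvd_sub_sg (j : J) (f : MvPolynomial ι ℝ) : lin (D.a j) ∣ f - D.sg j f := by
  induction f using MvPolynomial.induction_on with
  | C c => simp [sg]
  | add f g hf hg => rw [map_add, add_sub_add_comm]; exact dvd_add hf hg
  | mul_X f i hf =>
    obtain ⟨q, hq⟩ := hf
    have : X i = lin (Pi.single i (1 : ℝ)) := (lin_single i).symm
    refine ⟨q * X i + D.a j i • D.sg j f, ?_⟩
    rw [map_mul, this, sg_lin, r_apply, map_sub, map_smul, dotProduct_single_one, smul_eq_C_mul,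
      smul_eq_C_mul]
    linear_combination lin (Pi.single i (1 : ℝ)) * hq

theorem exists_Q (j : J) (f : MvPolynomial ι ℝ) : ∃ q, lin (D.a j) * q = f - D.sg j f :=
  let ⟨q, hq⟩ := D.dvd_sub_sg j f; ⟨q, hq.symm⟩

/-- The divided difference `(f - f ∘ σ_α) / ⟨α, ·⟩`, which is again a polynomial. -/
def Q (j : J) : MvPolynomial ι ℝ →ₗ[ℝ] MvPolynomial ι ℝ where
  toFun f := (D.exists_Q j f).choose
  map_add' f g := mul_left_cancel₀ (lin_ne_zero (D.norm j)) <| by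
    rw [mul_add, (D.exists_Q j _).choose_spec, (D.exists_Q j _).choose_spec,
      (D.exists_Q j _).choose_spec, map_add]
    ring
  map_smul' c f := mul_left_cancel₀ (lin_ne_zero (D.norm j)) <| by
    rw [RingHom.id_apply, mul_smul_comm, (D.exists_Q j _).choose_spec,
      (D.exists_Q j _).choose_spec, map_smul, smul_sub]

theorem lin_mul_Q (j : J) (f : MvPolynomial ι ℝ) : lin (D.a j) * D.Q j f = f - D.sg j f :=
  (D.exists_Q j f).choose_spec

theorem Q_unique {j : J} {f q : MvPolynomial ι ℝ} (h : lin (D.a j) * q = f - D.sg j f) :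
    D.Q j f = q :=
  mul_left_cancel₀ (lin_ne_zero (D.norm j)) (by rw [h, lin_mul_Q])

theorem Q_lin_mul (j : J) (v : ι → ℝ) (f : MvPolynomial ι ℝ) :
    D.Q j (lin v * f) = lin v * D.Q j f + (D.a j ⬝ᵥ v) • D.sg j f := by
  apply D.Q_unique
  have := D.lin_mul_Q j f
  rw [map_mul, sg_lin, r_apply, map_sub, map_smul, smul_eq_C_mul, smul_eq_C_mul]
  linear_combination lin v * this

theorem Q_one (j : J) : D.Q j 1 = 0 := D.Q_unique (by simp)

/-- The derivative in the direction `v`. -/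
def dv (v : ι → ℝ) : MvPolynomial ι ℝ →ₗ[ℝ] MvPolynomial ι ℝ :=
  ∑ i, v i • (pderiv i).toLinearMap

theorem dv_apply (v : ι → ℝ) (f : MvPolynomial ι ℝ) : dv v f = ∑ i, v i • pderiv i f := by
  simp [dv]

theorem dv_mul (v : ι → ℝ) (f g : MvPolynomial ι ℝ) : dv v (f * g) = f * dv v g + g * dv v f := by
  simp only [dv_apply, Derivation.leibniz, smul_eq_mul, smul_add, Finset.sum_add_distrib,
    Finset.mul_sum, mul_smul_comm]

theorem dv_one (v : ι → ℝ) : dv v (1 : MvPolynomial ι ℝ) = 0 := by simp [dv_apply]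

theorem dv_lin (v w : ι → ℝ) : dv v (lin w) = C (v ⬝ᵥ w) := by
  simp [dv_apply, lin_apply, pderiv_X, Pi.single_apply, dotProduct, smul_eq_C_mul]

/-- The Dunkl operator in the direction `v`. -/
def T (v : ι → ℝ) : MvPolynomial ι ℝ →ₗ[ℝ] MvPolynomial ι ℝ :=
  dv v + ∑ j, (D.k j * (D.a j ⬝ᵥ v)) • D.Q j

theorem T_apply (v : ι → ℝ) (f : MvPolynomial ι ℝ) :
    D.T v f = dv v f + ∑ j, (D.k j * (D.a j ⬝ᵥ v)) • D.Q j f := by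
  simp [T]

theorem T_one (v : ι → ℝ) : D.T v 1 = 0 := by simp [T_apply, dv_one, Q_one]

theorem dv_add (v w : ι → ℝ) (f : MvPolynomial ι ℝ) : dv (v + w) f = dv v f + dv w f := by
  simp [dv_apply, add_smul, Finset.sum_add_distrib]

theorem dv_smul (c : ℝ) (w : ι → ℝ) (f : MvPolynomial ι ℝ) : dv (c • w) f = c • dv w f := by
  simp [dv_apply, mul_smul, Finset.smul_sum]

theorem T_add (v w : ι → ℝ) (f : MvPolynomial ι ℝ) : D.T (v + w) f = D.T v f + D.T w f := by
  simp only [T_apply, dv_add, dotProduct_add, mul_add, add_smul, Finset.sum_add_distrib]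
  abel

theorem T_smul (c : ℝ) (w : ι → ℝ) (f : MvPolynomial ι ℝ) : D.T (c • w) f = c • D.T w f := by
  simp only [T_apply, dv_smul, dotProduct_smul, smul_add, Finset.smul_sum, smul_smul, smul_eq_mul,
    mul_left_comm]

theorem T_sub (v w : ι → ℝ) (f : MvPolynomial ι ℝ) : D.T (v - w) f = D.T v f - D.T w f := by
  rw [sub_eq_add_neg, T_add, ← neg_one_smul ℝ w, T_smul]; module

theorem T_sum (v : ι → ℝ) (f : MvPolynomial ι ℝ) :
    D.T v f = ∑ i, v i • D.T (Pi.single i 1) f := by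
  let L : (ι → ℝ) →ₗ[ℝ] MvPolynomial ι ℝ :=
    { toFun := fun v => D.T v f, map_add' := fun v w => D.T_add v w f,
      map_smul' := fun c v => D.T_smul c v f }
  change L v = ∑ i, v i • L (Pi.single i 1)
  conv_lhs => rw [pi_eq_sum_univ' v]
  rw [map_sum]
  refine Finset.sum_congr rfl fun i _ => ?_
  rw [map_smul]

/-- The commutation relation between Dunkl operators and multiplication by linear forms. -/
theorem T_lin_mul (v w : ι → ℝ) (f : MvPolynomial ι ℝ) :
    D.T v (lin w * f) = lin w * D.T v f + (v ⬝ᵥ w) • f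
      + ∑ j, (D.k j * (D.a j ⬝ᵥ v) * (D.a j ⬝ᵥ w)) • D.sg j f := by
  simp only [T_apply, dv_mul, dv_lin, Q_lin_mul, smul_add, Finset.sum_add_distrib, mul_add,
    Finset.mul_sum, smul_smul, mul_smul_comm, smul_eq_C_mul f]
  ring

/-- Equivariance of the Dunkl operators under the reflections. -/
theorem sg_T (j : J) (v : ι → ℝ) (f : MvPolynomial ι ℝ) :
    D.sg j (D.T v f) = D.T (D.r j v) (D.sg j f) := by
  refine op_ext ((D.sg j).toLinearMap ∘ₗ D.T v) (D.T (D.r j v) ∘ₗ (D.sg j).toLinearMap)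
    (by simp [T_one]) (fun w f hf => ?_) f
  change D.sg j (D.T v f) = D.T (D.r j v) (D.sg j f) at hf
  change D.sg j (D.T v _) = D.T (D.r j v) (D.sg j _)
  rw [T_lin_mul, map_mul, sg_lin, T_lin_mul, map_add, map_add, map_mul, sg_lin, map_smul, map_sum]
  simp only [map_smul]
  rw [hf, r_dot_r, ← (D.s j).sum_comp fun l => (D.k l * (D.a l ⬝ᵥ D.r j v)
    * (D.a l ⬝ᵥ D.r j w)) • D.sg l (D.sg j f)]
  refine congrArg₂ _ rfl (Finset.sum_congr rfl fun l _ => ?_)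
  rw [D.k_s, a_s', r_dot_r, r_dot_r, sg_comm]

theorem sg_T' (j : J) (v : ι → ℝ) (f : MvPolynomial ι ℝ) :
    D.sg j (D.T v f) = D.T v (D.sg j f) - (D.a j ⬝ᵥ v) • D.T (D.a j) (D.sg j f) := by
  rw [sg_T, r_apply, T_sub, T_smul]

/-- Dunkl operators commute: their commutator kills `1` and is compatible with multiplication by
linear forms, in the sense of `op_ext`. -/
theorem T_comm (v w : ι → ℝ) (f : MvPolynomial ι ℝ) : D.T v (D.T w f) = D.T w (D.T v f) := by
  refine op_ext (D.T v ∘ₗ D.T w) (D.T w ∘ₗ D.T v) (by simp [T_one]) (fun x f hf => ?_) f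
  change D.T v (D.T w f) = D.T w (D.T v f) at hf
  change D.T v (D.T w _) = D.T w (D.T v _)
  simp only [T_lin_mul, map_add, map_smul, map_sum, hf, add_assoc]
  refine congrArg₂ _ rfl ?_
  have key : ∀ v w : ι → ℝ, ∑ j, (D.k j * (D.a j ⬝ᵥ v) * (D.a j ⬝ᵥ x)) • D.sg j (D.T w f)
      = ∑ j, (D.k j * (D.a j ⬝ᵥ v) * (D.a j ⬝ᵥ x)) • D.T w (D.sg j f)
      - ∑ j, (D.k j * (D.a j ⬝ᵥ v) * (D.a j ⬝ᵥ x) * (D.a j ⬝ᵥ w)) • D.T (D.a j) (D.sg j f) := by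
    intro v w
    rw [← Finset.sum_sub_distrib]
    refine Finset.sum_congr rfl fun j _ => ?_
    rw [sg_T']; module
  rw [key v w, key w v]
  have : ∑ j, (D.k j * (D.a j ⬝ᵥ v) * (D.a j ⬝ᵥ x) * (D.a j ⬝ᵥ w)) • D.T (D.a j) (D.sg j f)
    = ∑ j, (D.k j * (D.a j ⬝ᵥ w) * (D.a j ⬝ᵥ x) * (D.a j ⬝ᵥ v)) • D.T (D.a j) (D.sg j f) :=
    Finset.sum_congr rfl fun j _ => congrArg₂ _ (by ring) rfl
  rw [this]
  abel

/-- The Dunkl Laplacian on polynomials, as the sum of the squares of the Dunkl operators. -/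
def lap : MvPolynomial ι ℝ →ₗ[ℝ] MvPolynomial ι ℝ :=
  ∑ i, D.T (Pi.single i 1) ∘ₗ D.T (Pi.single i 1)

theorem lap_apply (f : MvPolynomial ι ℝ) :
    D.lap f = ∑ i, D.T (Pi.single i 1) (D.T (Pi.single i 1) f) := by
  simp [lap]

theorem lap_one : D.lap 1 = 0 := by simp [lap_apply, T_one]

theorem T_lap (v : ι → ℝ) (f : MvPolynomial ι ℝ) : D.T v (D.lap f) = D.lap (D.T v f) := by
  simp only [lap_apply, map_sum]
  exact Finset.sum_congr rfl fun i _ => by rw [T_comm, T_comm _ v]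

theorem lap_lin_mul (w : ι → ℝ) (f : MvPolynomial ι ℝ) :
    D.lap (lin w * f) = lin w * D.lap f + (2 : ℝ) • D.T w f := by
  have h1 : ∀ i : ι, D.T (Pi.single i 1) (D.T (Pi.single i 1) (lin w * f))
      = lin w * D.T (Pi.single i 1) (D.T (Pi.single i 1) f)
        + (2 : ℝ) • w i • D.T (Pi.single i 1) f
        + (∑ j, (D.k j * (D.a j ⬝ᵥ w)) • D.a j i • D.sg j (D.T (Pi.single i 1) f)
          + ∑ j, (D.k j * (D.a j ⬝ᵥ w)) • D.a j i • D.T (Pi.single i 1) (D.sg j f)) := by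
    intro i
    simp only [T_lin_mul, map_add, map_smul, map_sum, single_one_dotProduct, dotProduct_single_one,
      smul_smul]
    simp only [mul_right_comm _ (D.a _ i)]
    module
  rw [lap_apply, Finset.sum_congr rfl fun i _ => h1 i]
  simp only [Finset.sum_add_distrib]
  rw [← Finset.mul_sum, ← lap_apply, ← Finset.smul_sum, ← T_sum]
  rw [Finset.sum_comm, Finset.sum_comm (f := fun i j => _ • _ • D.T _ _), ← Finset.sum_add_distrib,
    Finset.sum_eq_zero, add_zero]
  intro j _
  rw [← Finset.smul_sum, ← Finset.smul_sum, ← smul_add, ← T_sum]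
  simp only [← map_smul (D.sg j), ← map_sum]
  rw [← T_sum, sg_T, r_self, ← neg_one_smul ℝ, T_smul]
  module

theorem sg_lap (j : J) (f : MvPolynomial ι ℝ) : D.sg j (D.lap f) = D.lap (D.sg j f) := by
  refine op_ext ((D.sg j).toLinearMap ∘ₗ D.lap) (D.lap ∘ₗ (D.sg j).toLinearMap)
    (by simp [lap_one]) (fun w f hf => ?_) f
  change D.sg j (D.lap f) = D.lap (D.sg j f) at hf
  change D.sg j (D.lap _) = D.lap (D.sg j _)
  rw [lap_lin_mul, map_mul, sg_lin, lap_lin_mul, map_add, map_mul, sg_lin, map_smul, hf, sg_T]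

/-- Leibniz rule for Dunkl operators. Each term of the last sum is odd under a reflection
(`sg_Q_mul`), hence has mean zero. -/
theorem T_mul (v : ι → ℝ) (f g : MvPolynomial ι ℝ) :
    D.T v (f * g) = D.T v f * g + f * D.T v g
      - ∑ j, (D.k j * (D.a j ⬝ᵥ v)) • (D.Q j f * (g - D.sg j g)) := by
  have hQ : ∀ j, D.Q j (f * g) = D.Q j f * g + f * D.Q j g - D.Q j f * (g - D.sg j g) := by
    intro j
    apply D.Q_unique
    rw [map_mul]
    linear_combination (D.sg j g) * D.lin_mul_Q j f + f * D.lin_mul_Q j g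
  simp only [T_apply, dv_mul, hQ, smul_sub, smul_add, Finset.sum_sub_distrib, Finset.sum_add_distrib,
    add_mul, mul_add, Finset.sum_mul, Finset.mul_sum, smul_mul_assoc, mul_smul_comm]
  ring

theorem sg_Q_mul (j : J) (f g : MvPolynomial ι ℝ) :
    D.sg j (D.Q j f * (g - D.sg j g)) = -(D.Q j f * (g - D.sg j g)) := by
  have h : D.sg j (D.Q j f) = D.Q j f := by
    apply mul_left_cancel₀ (lin_ne_zero (D.norm j))
    have := congrArg (D.sg j) (D.lin_mul_Q j f)
    rw [map_mul, sg_lin, r_self, map_neg, map_sub, sg_sg] at this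
    linear_combination -this - D.lin_mul_Q j f
  rw [map_mul, h, map_sub, sg_sg]
  ring

end RootData

/-! ### Homogeneity and the Fischer decomposition -/

namespace RootData
open MvPolynomial

variable {ι J : Type} [Fintype ι] [DecidableEq ι] [Fintype J] (D : RootData ι J)

/-- The Euler operator `∑ xᵢ ∂ᵢ`. -/
def eul : MvPolynomial ι ℝ →ₗ[ℝ] MvPolynomial ι ℝ :=
  ∑ i, LinearMap.mulLeft ℝ (X i) ∘ₗ (pderiv i).toLinearMap

theorem eul_apply (f : MvPolynomial ι ℝ) : eul f = ∑ i, X i * pderiv i f := by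
  simp [eul]

theorem eul_lin_mul (v : ι → ℝ) (f : MvPolynomial ι ℝ) :
    eul (lin v * f) = lin v * (f + eul f) := by
  have h : ∀ i : ι, pderiv i (lin v) = C (v i) := by
    intro i
    have := dv_lin (Pi.single i (1 : ℝ)) v
    rw [single_one_dotProduct] at this
    rw [← this, dv_apply, Finset.sum_eq_single i] <;> simp +contextual
  have h2 : lin v = ∑ i, X i * C (v i) := by
    rw [lin_apply]; simp [smul_eq_C_mul, mul_comm]
  simp only [eul_apply, Derivation.leibniz, h, smul_eq_mul, mul_add, Finset.sum_add_distrib,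
    Finset.mul_sum]
  rw [add_comm]
  refine congrArg₂ _ ?_ (Finset.sum_congr rfl fun i _ => by ring)
  rw [h2, Finset.sum_mul]
  exact Finset.sum_congr rfl fun i _ => by ring

theorem eul_of_homog {f : MvPolynomial ι ℝ} {n : ℕ} (h : f.IsHomogeneous n) :
    eul f = (n : ℝ) • f := by
  rw [eul_apply, h.sum_X_mul_pderiv, Nat.cast_smul_eq_nsmul]

theorem comp_eul (f : MvPolynomial ι ℝ) (n : ℕ) :
    homogeneousComponent n (eul f) = (n : ℝ) • homogeneousComponent n f := by
  conv_lhs => rw [← sum_homogeneousComponent f, map_sum, map_sum]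
  have h : ∀ i, homogeneousComponent n (eul (homogeneousComponent i f))
      = if n = i then (n : ℝ) • homogeneousComponent n f else 0 := by
    intro i
    rw [eul_of_homog (homogeneousComponent_isHomogeneous i f), map_smul,
      homogeneousComponent_of_mem (homogeneousComponent_mem i f)]
    split_ifs with h <;> simp [h]
  simp only [h, Finset.sum_ite_eq, Finset.mem_range]
  split_ifs with h
  · rfl
  · rw [homogeneousComponent_eq_zero _ _ (by omega), smul_zero]

theorem homog_of_eul {f : MvPolynomial ι ℝ} {n : ℕ} (h : eul f = (n : ℝ) • f) :
    f.IsHomogeneous n := by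
  have h0 : ∀ i, i ≠ n → homogeneousComponent i f = 0 := by
    intro i hi
    have h1 := comp_eul f i
    rw [h, map_smul, ← sub_eq_zero, ← sub_smul, smul_eq_zero, sub_eq_zero] at h1
    exact h1.resolve_left fun h2 => hi (by exact_mod_cast h2.symm)
  rw [← sum_homogeneousComponent f]
  refine IsHomogeneous.sum _ _ _ fun i _ => ?_
  by_cases hi : i = n
  · subst hi; exact homogeneousComponent_isHomogeneous _ _
  · rw [h0 i hi]; exact isHomogeneous_zero _ _ _

theorem eul_sg (j : J) (f : MvPolynomial ι ℝ) : eul (D.sg j f) = D.sg j (eul f) := by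
  refine op_ext (eul ∘ₗ (D.sg j).toLinearMap) ((D.sg j).toLinearMap ∘ₗ eul)
    (by simp [eul_apply]) (fun w f hf => ?_) f
  change eul (D.sg j f) = D.sg j (eul f) at hf
  change eul (D.sg j _) = D.sg j (eul _)
  rw [map_mul, sg_lin, eul_lin_mul, eul_lin_mul, map_mul, sg_lin, map_add, hf]

theorem eul_T (v : ι → ℝ) (f : MvPolynomial ι ℝ) : eul (D.T v f) = D.T v (eul f) - D.T v f := by
  refine op_ext (eul ∘ₗ D.T v) (D.T v ∘ₗ eul - D.T v) (by simp [eul_apply, T_one])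
    (fun w f hf => ?_) f
  change eul (D.T v f) = D.T v (eul f) - D.T v f at hf
  change eul (D.T v _) = D.T v (eul _) - D.T v _
  rw [eul_lin_mul, mul_add, map_add, add_sub_cancel_left, T_lin_mul, T_lin_mul]
  simp only [map_add, map_smul, map_sum, eul_lin_mul, eul_sg, hf]
  rw [add_sub_cancel]

theorem T_const {f : MvPolynomial ι ℝ} (h : f.IsHomogeneous 0) (v : ι → ℝ) : D.T v f = 0 := by
  rw [← totalDegree_zero_iff_isHomogeneous, totalDegree_eq_zero_iff_eq_C] at h
  rw [h, show ∀ c : ℝ, (C c : MvPolynomial ι ℝ) = c • 1 from fun c => by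
    rw [smul_eq_C_mul, mul_one], map_smul, T_one, smul_zero]

theorem T_homog {f : MvPolynomial ι ℝ} {n : ℕ} (h : f.IsHomogeneous (n + 1)) (v : ι → ℝ) :
    (D.T v f).IsHomogeneous n := by
  apply homog_of_eul
  rw [eul_T, eul_of_homog h, map_smul]
  push_cast
  module

theorem lap_homog {f : MvPolynomial ι ℝ} {n : ℕ} (h : f.IsHomogeneous (n + 2)) :
    (D.lap f).IsHomogeneous n := by
  rw [lap_apply]
  exact IsHomogeneous.sum _ _ _ fun i _ => D.T_homog (D.T_homog h _) _

theorem lap_homog_zero {f : MvPolynomial ι ℝ} {n : ℕ} (h : f.IsHomogeneous n) (hn : n < 2) :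
    D.lap f = 0 := by
  rw [lap_apply]
  refine Finset.sum_eq_zero fun i _ => ?_
  interval_cases n
  · rw [D.T_const h, map_zero]
  · exact D.T_const (D.T_homog h _) _

theorem comp_lap (f : MvPolynomial ι ℝ) (n : ℕ) :
    homogeneousComponent n (D.lap f) = D.lap (homogeneousComponent (n + 2) f) := by
  conv_lhs => rw [← sum_homogeneousComponent f, map_sum, map_sum]
  have h : ∀ i, homogeneousComponent n (D.lap (homogeneousComponent i f))
      = if n + 2 = i then D.lap (homogeneousComponent (n + 2) f) else 0 := by
    intro i
    by_cases hi : i < 2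
    · rw [D.lap_homog_zero (homogeneousComponent_isHomogeneous i f) hi, map_zero,
        if_neg (by omega)]
    · obtain ⟨m, rfl⟩ : ∃ m, i = m + 2 := ⟨i - 2, by omega⟩
      rw [homogeneousComponent_of_mem
        (D.lap_homog (homogeneousComponent_isHomogeneous (m + 2) f) : _ ∈ homogeneousSubmodule ι ℝ m)]
      by_cases hm : n = m
      · simp [hm]
      · simp [hm]
  simp only [h, Finset.sum_ite_eq, Finset.mem_range]
  split_ifs with h
  · rfl
  · rw [homogeneousComponent_eq_zero _ _ (by omega), map_zero]

/-- Homogeneous components of harmonic polynomials are harmonic. -/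
theorem lap_comp {f : MvPolynomial ι ℝ} (h : D.lap f = 0) (n : ℕ) :
    D.lap (homogeneousComponent n f) = 0 := by
  by_cases hn : n < 2
  · exact D.lap_homog_zero (homogeneousComponent_isHomogeneous n f) hn
  · obtain ⟨m, rfl⟩ : ∃ m, n = m + 2 := ⟨n - 2, by omega⟩
    rw [← comp_lap, h, map_zero]

/-- The square of the Euclidean norm. -/
def nsq : MvPolynomial ι ℝ := ∑ i, X i * X i

theorem eval_nsq (x : ι → ℝ) : eval x nsq = x ⬝ᵥ x := by
  simp [nsq, dotProduct]

theorem nsq_homog : (nsq : MvPolynomial ι ℝ).IsHomogeneous 2 :=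
  IsHomogeneous.sum _ _ _ fun i _ => (isHomogeneous_X ℝ i).mul (isHomogeneous_X ℝ i)

theorem sg_nsq (j : J) : D.sg j nsq = nsq := by
  apply MvPolynomial.funext
  intro x
  rw [eval_sg, eval_nsq, eval_nsq, r_dot_r]

/-- The sum of the multiplicities. -/
def gam : ℝ := ∑ j, D.k j

theorem sum_X_mul_T (f : MvPolynomial ι ℝ) :
    ∑ i, X i * D.T (Pi.single i 1) f = eul f + ∑ j, D.k j • (f - D.sg j f) := by
  have h : ∀ i, X i * D.T (Pi.single i 1) f
      = X i * pderiv i f + ∑ j, D.k j • ((D.a j i • X i) * D.Q j f) := by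
    intro i
    rw [T_apply, mul_add, Finset.mul_sum, dv_apply]
    refine congrArg₂ _ ?_ (Finset.sum_congr rfl fun j _ => ?_)
    · rw [Finset.sum_eq_single i] <;> simp +contextual
    · rw [dotProduct_single_one]
      simp only [smul_eq_C_mul, map_mul]; ring
  simp only [h, Finset.sum_add_distrib, ← eul_apply]
  rw [Finset.sum_comm]
  refine congrArg₂ _ rfl (Finset.sum_congr rfl fun j _ => ?_)
  rw [← Finset.smul_sum, ← Finset.sum_mul, ← lin_apply, lin_mul_Q]

theorem lap_nsq_mul (f : MvPolynomial ι ℝ) :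
    D.lap (nsq * f) = nsq * D.lap f + (4 : ℝ) • eul f
      + (2 * (Fintype.card ι : ℝ) + 4 * D.gam) • f := by
  have h : ∀ i : ι, D.lap (X i * X i * f) = X i * X i * D.lap f
      + (4 : ℝ) • (X i * D.T (Pi.single i 1) f) + (2 : ℝ) • f
      + (2 : ℝ) • ∑ j, (D.k j * D.a j i * D.a j i) • D.sg j f := by
    intro i
    rw [← lin_single i, mul_assoc, lap_lin_mul, lap_lin_mul, T_lin_mul]
    simp only [dotProduct_single_one, Pi.single_eq_same, smul_eq_C_mul]
    simp only [map_one, map_ofNat]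
    ring
  rw [nsq, Finset.sum_mul, map_sum]
  simp only [h, Finset.sum_add_distrib, ← Finset.smul_sum, ← Finset.sum_mul]
  rw [sum_X_mul_T, Finset.sum_comm]
  have h2 : ∀ j, ∑ i, (D.k j * D.a j i * D.a j i) • D.sg j f = (2 * D.k j) • D.sg j f := by
    intro j
    rw [← Finset.sum_smul]
    congr 1
    have := D.norm j
    simp only [dotProduct] at this
    rw [mul_comm, ← this, Finset.mul_sum]
    exact Finset.sum_congr rfl fun i _ => by ring
  rw [Finset.sum_congr rfl fun j _ => h2 j]
  simp only [smul_sub, Finset.sum_sub_distrib, mul_smul, ← Finset.smul_sum, Finset.sum_const,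
    Finset.card_univ, ← Finset.sum_smul]
  rw [gam]
  module

variable [Nonempty ι]

/-- The `sl₂` relation between `Δ_κ` and `|x|²`. The constant is positive because the
multiplicities are nonnegative. -/
theorem lap_nsq_pow_mul (hk : ∀ j, 0 ≤ D.k j) (n j : ℕ) :
    ∃ c : ℝ, 0 < c ∧ ∀ f : MvPolynomial ι ℝ, f.IsHomogeneous n →
      D.lap (nsq ^ (j + 1) * f) = nsq ^ (j + 1) * D.lap f + c • (nsq ^ j * f) := by
  have hg : 0 ≤ D.gam := Finset.sum_nonneg fun j _ => hk j
  have hc : (0 : ℝ) < Fintype.card ι := by exact_mod_cast Fintype.card_pos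
  induction j with
  | zero =>
    refine ⟨4 * n + (2 * (Fintype.card ι : ℝ) + 4 * D.gam), by positivity, fun f hf => ?_⟩
    rw [zero_add, pow_one, pow_zero, one_mul, lap_nsq_mul, eul_of_homog hf]
    module
  | succ j ih =>
    obtain ⟨c, hc0, ih⟩ := ih
    refine ⟨c + 4 * (2 * (j + 1) + n) + (2 * (Fintype.card ι : ℝ) + 4 * D.gam), by positivity,
      fun f hf => ?_⟩
    rw [pow_succ', mul_assoc, lap_nsq_mul, ih f hf,
      eul_of_homog (((nsq_homog (ι := ι)).pow (j + 1)).mul hf)]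
    push_cast
    simp only [smul_eq_C_mul, map_add, map_mul]
    ring

/-- Surjectivity of `q ↦ Δ_κ(|x|² q)` on homogeneous polynomials (the case `j = 0`); the power of
`|x|²` makes the induction on the degree work. -/
theorem exists_lap_nsq_mul (hk : ∀ j, 0 ≤ D.k j) (n : ℕ) : ∀ (j : ℕ) (g : MvPolynomial ι ℝ),
    g.IsHomogeneous n → ∃ q : MvPolynomial ι ℝ, q.IsHomogeneous (2 * j + n) ∧
      D.lap (nsq * q) = nsq ^ j * g := by
  induction n using Nat.strong_induction_on with
  | _ n ih =>
  intro j g hg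
  obtain ⟨c, hc, hlap⟩ := D.lap_nsq_pow_mul hk n j
  have h1 := hlap g hg
  have hh : (c⁻¹ • (nsq ^ j * g)).IsHomogeneous (2 * j + n) := by
    rw [smul_eq_C_mul]
    simpa using (isHomogeneous_C ι c⁻¹).mul (((nsq_homog (ι := ι)).pow j).mul hg)
  have hl : D.lap (nsq * c⁻¹ • (nsq ^ j * g)) = c⁻¹ • (nsq ^ (j + 1) * D.lap g) + nsq ^ j * g := by
    rw [mul_smul_comm, ← mul_assoc, ← pow_succ', map_smul, h1, smul_add, smul_smul,
      inv_mul_cancel₀ hc.ne', one_smul]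
  by_cases hn : n < 2
  · refine ⟨_, hh, ?_⟩
    rw [hl, D.lap_homog_zero hg hn, mul_zero, smul_zero, zero_add]
  · obtain ⟨m, rfl⟩ : ∃ m, n = m + 2 := ⟨n - 2, by omega⟩
    obtain ⟨q, hq, hlq⟩ := ih m (by omega) (j + 1) (D.lap g) (D.lap_homog hg)
    refine ⟨c⁻¹ • (nsq ^ j * g) - c⁻¹ • q, hh.sub ?_, ?_⟩
    · rw [smul_eq_C_mul]
      have := (isHomogeneous_C ι c⁻¹).mul hq
      rwa [show 0 + (2 * (j + 1) + m) = 2 * j + (m + 2) by omega] at this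
    · rw [mul_sub, map_sub, hl, mul_smul_comm, map_smul, hlq, add_sub_cancel_left]

/-- The Fischer decomposition: a homogeneous polynomial is a harmonic one plus a multiple of
`|x|²`. -/
theorem fischer (hk : ∀ j, 0 ≤ D.k j) {n : ℕ} {f : MvPolynomial ι ℝ}
    (hf : f.IsHomogeneous (n + 2)) : ∃ h q : MvPolynomial ι ℝ, h.IsHomogeneous (n + 2) ∧
      D.lap h = 0 ∧ q.IsHomogeneous n ∧ f = h + nsq * q := by
  obtain ⟨q, hq, hlq⟩ := D.exists_lap_nsq_mul hk n 0 (D.lap f) (D.lap_homog hf)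
  rw [mul_zero, zero_add] at hq
  refine ⟨f - nsq * q, q, hf.sub ?_, ?_, hq, by ring⟩
  · have := (nsq_homog (ι := ι)).mul hq
    rwa [add_comm] at this
  · rw [map_sub, hlq]; simp

/-- The Dirichlet problem on the unit sphere with polynomial data has a polynomial solution. -/
theorem dirichlet (hk : ∀ j, 0 ≤ D.k j) (f : MvPolynomial ι ℝ) :
    ∃ H, D.lap H = 0 ∧ ∀ x : ι → ℝ, x ⬝ᵥ x = 1 → eval x H = eval x f := by
  have key : ∀ n, ∀ f : MvPolynomial ι ℝ, f.IsHomogeneous n →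
      ∃ H, D.lap H = 0 ∧ ∀ x : ι → ℝ, x ⬝ᵥ x = 1 → eval x H = eval x f := by
    intro n
    induction n using Nat.strong_induction_on with
    | _ n ih =>
    intro f hf
    by_cases hn : n < 2
    · exact ⟨f, D.lap_homog_zero hf hn, fun _ _ => rfl⟩
    · obtain ⟨m, rfl⟩ : ∃ m, n = m + 2 := ⟨n - 2, by omega⟩
      obtain ⟨h, q, -, hh, hq, rfl⟩ := D.fischer hk hf
      obtain ⟨H, hH, hHq⟩ := ih m (by omega) q hq
      exact ⟨h + H, by rw [map_add, hh, hH, add_zero], fun x hx => by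
        rw [map_add, map_add, hHq x hx, map_mul, eval_nsq, hx, one_mul]⟩
  choose H hH hHf using fun n =>
    key n (homogeneousComponent n f) (homogeneousComponent_isHomogeneous n f)
  refine ⟨∑ i ∈ Finset.range (f.totalDegree + 1), H i, by simp [hH], fun x hx => ?_⟩
  conv_rhs => rw [← sum_homogeneousComponent f]
  rw [map_sum, map_sum]
  exact Finset.sum_congr rfl fun i _ => hHf i x hx

end RootData

/-! ### The harmonic mean functional and orthogonality of harmonic polynomials -/

namespace RootData
open MvPolynomial

variable {ι J : Type} [Fintype ι] [DecidableEq ι] [Fintype J] (D : RootData ι J)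

/-- Nonnegativity of the multiplicities, together with the weak maximum principle on the unit ball
for harmonic polynomials, evaluated at the centre. -/
structure MaxPrin : Prop where
  k_nonneg : ∀ j, 0 ≤ D.k j
  mp : ∀ H : MvPolynomial ι ℝ, D.lap H = 0 → (∀ x : ι → ℝ, x ⬝ᵥ x = 1 → 0 ≤ eval x H) →
    0 ≤ eval 0 H

variable {D} [Nonempty ι] (hD : D.MaxPrin)

theorem MaxPrin.eval_zero_eq (hD : D.MaxPrin) {H₁ H₂ : MvPolynomial ι ℝ} (h₁ : D.lap H₁ = 0)
    (h₂ : D.lap H₂ = 0) (h : ∀ x : ι → ℝ, x ⬝ᵥ x = 1 → eval x H₁ = eval x H₂) :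
    eval 0 H₁ = eval 0 H₂ := by
  have a := hD.mp (H₁ - H₂) (by rw [map_sub, h₁, h₂, sub_zero]) fun x hx => by simp [h x hx]
  have b := hD.mp (H₂ - H₁) (by rw [map_sub, h₁, h₂, sub_zero]) fun x hx => by simp [h x hx]
  rw [map_sub] at a b
  linarith

/-- The value at the origin of the harmonic polynomial which agrees with `f` on the unit sphere.
It stands for the mean of `f` with respect to the weighted surface measure, and is a positive
functional by the maximum principle. -/
def lam (hD : D.MaxPrin) : MvPolynomial ι ℝ →ₗ[ℝ] ℝ where
  toFun f := eval 0 (D.dirichlet hD.k_nonneg f).choose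
  map_add' f g := by
    rw [← map_add]
    refine hD.eval_zero_eq (D.dirichlet hD.k_nonneg _).choose_spec.1 ?_ fun x hx => ?_
    · rw [map_add, (D.dirichlet hD.k_nonneg _).choose_spec.1,
        (D.dirichlet hD.k_nonneg _).choose_spec.1, add_zero]
    · rw [map_add, (D.dirichlet hD.k_nonneg _).choose_spec.2 x hx,
        (D.dirichlet hD.k_nonneg _).choose_spec.2 x hx,
        (D.dirichlet hD.k_nonneg _).choose_spec.2 x hx, map_add]
  map_smul' c f := by
    rw [RingHom.id_apply, smul_eq_mul, ← smul_eval]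
    refine hD.eval_zero_eq (D.dirichlet hD.k_nonneg _).choose_spec.1 ?_ fun x hx => ?_
    · rw [map_smul, (D.dirichlet hD.k_nonneg _).choose_spec.1, smul_zero]
    · rw [smul_eval, (D.dirichlet hD.k_nonneg _).choose_spec.2 x hx,
        (D.dirichlet hD.k_nonneg _).choose_spec.2 x hx, smul_eval]

theorem lam_eq {f H : MvPolynomial ι ℝ} (hH : D.lap H = 0)
    (h : ∀ x : ι → ℝ, x ⬝ᵥ x = 1 → eval x H = eval x f) : lam hD f = eval 0 H :=
  hD.eval_zero_eq (D.dirichlet hD.k_nonneg f).choose_spec.1 hH fun x hx => by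
    rw [(D.dirichlet hD.k_nonneg f).choose_spec.2 x hx, h x hx]

theorem lam_harm {H : MvPolynomial ι ℝ} (hH : D.lap H = 0) : lam hD H = eval 0 H :=
  lam_eq hD hH fun _ _ => rfl

theorem lam_congr {f g : MvPolynomial ι ℝ}
    (h : ∀ x : ι → ℝ, x ⬝ᵥ x = 1 → eval x f = eval x g) : lam hD f = lam hD g := by
  obtain ⟨H, hH, hHg⟩ := D.dirichlet hD.k_nonneg g
  rw [lam_eq hD hH hHg, lam_eq hD hH fun x hx => by rw [hHg x hx, h x hx]]

theorem lam_nonneg {f : MvPolynomial ι ℝ} (h : ∀ x : ι → ℝ, x ⬝ᵥ x = 1 → 0 ≤ eval x f) :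
    0 ≤ lam hD f :=
  hD.mp _ (D.dirichlet hD.k_nonneg f).choose_spec.1 fun x hx => by
    rw [(D.dirichlet hD.k_nonneg f).choose_spec.2 x hx]; exact h x hx

theorem lam_nsq_mul (f : MvPolynomial ι ℝ) : lam hD (nsq * f) = lam hD f :=
  lam_congr hD fun x hx => by rw [map_mul, eval_nsq, hx, one_mul]

theorem lam_sg (j : J) (f : MvPolynomial ι ℝ) : lam hD (D.sg j f) = lam hD f := by
  obtain ⟨H, hH, hHg⟩ := D.dirichlet hD.k_nonneg f
  rw [lam_eq hD hH hHg, lam_eq hD (H := D.sg j H) (by rw [← sg_lap, hH, map_zero]) fun x hx => by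
    rw [eval_sg, eval_sg, hHg _ (by rw [r_dot_r, hx])], eval_sg, map_zero]

theorem lam_sg_mul (j : J) (f g : MvPolynomial ι ℝ) :
    lam hD (D.sg j f * g) = lam hD (f * D.sg j g) := by
  rw [← lam_sg hD j, map_mul, sg_sg]

theorem lam_odd (j : J) (f : MvPolynomial ι ℝ) (h : D.sg j f = -f) : lam hD f = 0 := by
  have := lam_sg hD j f
  rw [h, map_neg] at this
  linarith

theorem eval_zero_homog {f : MvPolynomial ι ℝ} {n : ℕ} (h : f.IsHomogeneous (n + 1)) :
    eval (0 : ι → ℝ) f = 0 := by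
  have h0 : coeff 0 f = 0 := h.coeff_eq_zero (by simp)
  rw [← h0, ← constantCoeff_eq]
  simp [eval_zero]

theorem T_nsq_mul (v : ι → ℝ) (q : MvPolynomial ι ℝ) :
    D.T v (nsq * q) = nsq * D.T v q + (2 : ℝ) • (lin v * q) := by
  have hQ : ∀ j, D.Q j nsq = 0 := fun j => D.Q_unique (by rw [sg_nsq]; simp)
  have hd : dv v (nsq : MvPolynomial ι ℝ) = (2 : ℝ) • lin v := by
    rw [nsq, map_sum, lin_apply, Finset.smul_sum]
    refine Finset.sum_congr rfl fun i _ => ?_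
    have := dv_lin v (Pi.single i 1)
    rw [lin_single, dotProduct_single_one] at this
    rw [dv_mul, this]
    simp only [smul_eq_C_mul, map_ofNat]; ring
  rw [T_mul, T_apply]
  simp only [hQ, hd, smul_zero, Finset.sum_const_zero, zero_mul, sub_zero, add_zero, smul_mul_assoc]
  rw [add_comm]

/-- Integration by parts for the mean over the unit sphere. -/
theorem lam_T {n : ℕ} : ∀ {f : MvPolynomial ι ℝ}, f.IsHomogeneous n → ∀ v : ι → ℝ,
    lam hD (D.T v f) = (n + Fintype.card ι - 1 + 2 * D.gam) * lam hD (lin v * f) := by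
  have hg : 0 ≤ D.gam := Finset.sum_nonneg fun j _ => hD.k_nonneg j
  have hcd : (1 : ℝ) ≤ Fintype.card ι := by exact_mod_cast Fintype.card_pos
  have hlin : ∀ v : ι → ℝ, (lin v : MvPolynomial ι ℝ).IsHomogeneous 1 := fun v => by
    rw [lin_apply]
    refine IsHomogeneous.sum _ _ _ fun i _ => ?_
    rw [smul_eq_C_mul]
    simpa using (isHomogeneous_C ι (v i)).mul (isHomogeneous_X ℝ i)
  have harm : ∀ (n : ℕ) (h : MvPolynomial ι ℝ), h.IsHomogeneous (n + 1) → D.lap h = 0 → ∀ v : ι → ℝ,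
      lam hD (D.T v h) = ((n + 1 : ℕ) + Fintype.card ι - 1 + 2 * D.gam) * lam hD (lin v * h) := by
    intro n h hh hl v
    set c : ℝ := 4 * n + (2 * (Fintype.card ι : ℝ) + 4 * D.gam) with hc
    have hc0 : 0 < c := by positivity
    have hTl : D.lap (D.T v h) = 0 := by rw [← T_lap, hl, map_zero]
    have h1 : D.lap (lin v * h - (2 / c) • (nsq * D.T v h)) = 0 := by
      rw [map_sub, map_smul, lap_lin_mul, lap_nsq_mul, hl, hTl, eul_of_homog (D.T_homog hh v),
        mul_zero, mul_zero, zero_add, zero_add, smul_smul, ← add_smul, ← hc, smul_smul,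
        div_mul_cancel₀ _ hc0.ne', sub_self]
    have h2 := lam_harm hD h1
    have h3 : eval (0 : ι → ℝ) (lin v * h) = 0 := by rw [map_mul, eval_zero_homog hh, mul_zero]
    have h4 : eval (0 : ι → ℝ) (nsq * D.T v h) = 0 := by
      rw [map_mul, eval_zero_homog (n := 1) nsq_homog, zero_mul]
    rw [map_sub, map_smul, lam_nsq_mul, map_sub, smul_eval, h3, h4, smul_eq_mul] at h2
    have h5 : lam hD (lin v * h) = 2 / c * lam hD (D.T v h) := by linarith
    rw [h5]
    rcases n with _ | n
    · simp only [hc] at *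
      push_cast at *
      field_simp
      ring
    · rw [lam_harm hD hTl, eval_zero_homog (D.T_homog hh v)]; simp
  induction n using Nat.strong_induction_on with
  | _ n ih =>
  intro f hf v
  rcases n with _ | _ | n
  · rw [D.T_const hf, map_zero]
    have h1 := (hlin v).mul hf
    rw [lam_harm hD (D.lap_homog_zero h1 (by norm_num)), eval_zero_homog (n := 0) h1, mul_zero]
  · exact harm 0 f hf (D.lap_homog_zero hf (by norm_num)) v
  · obtain ⟨h, q, hh, hl, hq, rfl⟩ := D.fischer hD.k_nonneg hf
    have e1 := harm (n + 1) h hh hl v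
    have e2 := ih n (by omega) hq v
    rw [map_add, map_add, e1, T_nsq_mul, map_add, map_smul, lam_nsq_mul, e2, mul_add, map_add,
      show lin v * (nsq * q) = nsq * (lin v * q) by ring, lam_nsq_mul, smul_eq_mul]
    push_cast
    ring

/-- Orthogonality of harmonic polynomials of different degrees. Integrating `∑ᵢ Tᵢf Tᵢg` by parts in
two ways gives `n ⟨f, g⟩ = m ⟨f, g⟩`. -/
theorem orth {n m : ℕ} (hnm : n ≠ m) {f g : MvPolynomial ι ℝ} (hf : f.IsHomogeneous n)
    (hg : g.IsHomogeneous m) (hlf : D.lap f = 0) (hlg : D.lap g = 0) : lam hD (f * g) = 0 := by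
  have h0 : ∀ {m : ℕ}, m ≠ 0 → ∀ {f g : MvPolynomial ι ℝ}, f.IsHomogeneous 0 →
      g.IsHomogeneous m → D.lap g = 0 → lam hD (f * g) = 0 := by
    intro m hm f g hf hg hlg
    obtain ⟨m, rfl⟩ := Nat.exists_eq_succ_of_ne_zero hm
    rw [← totalDegree_zero_iff_isHomogeneous, totalDegree_eq_zero_iff_eq_C] at hf
    rw [hf, ← smul_eq_C_mul, map_smul, lam_harm hD hlg, eval_zero_homog hg, smul_zero]
  rcases n with _ | n
  · exact h0 hnm.symm hf hg hlg
  rcases m with _ | m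
  · rw [mul_comm]; exact h0 hnm hg hf hlf
  have hgam : 0 ≤ D.gam := Finset.sum_nonneg fun j _ => hD.k_nonneg j
  have hcd : (1 : ℝ) ≤ Fintype.card ι := by exact_mod_cast Fintype.card_pos
  have key : ∀ {n m : ℕ} {f g : MvPolynomial ι ℝ}, f.IsHomogeneous (n + 1) →
      g.IsHomogeneous (m + 1) → D.lap f = 0 →
      lam hD (∑ i, D.T (Pi.single i 1) f * D.T (Pi.single i 1) g)
        = (n + m + Fintype.card ι + 2 * D.gam) *
          ((n + 1) * lam hD (f * g) + ∑ j, D.k j * (lam hD (f * g) - lam hD (D.sg j f * g))) := by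
    intro n m f g hf hg hlf
    have e1 : ∀ i : ι, lam hD (D.T (Pi.single i 1) (D.T (Pi.single i 1) f) * g)
        + lam hD (D.T (Pi.single i 1) f * D.T (Pi.single i 1) g)
        = (n + m + Fintype.card ι + 2 * D.gam) * lam hD (X i * D.T (Pi.single i 1) f * g) := by
      intro i
      have := lam_T hD ((D.T_homog hf (Pi.single i 1)).mul hg) (Pi.single i 1)
      rw [T_mul, map_sub, map_add, map_sum, Finset.sum_eq_zero, sub_zero, lin_single, ← mul_assoc]
        at this
      · rw [this]; push_cast; ring
      · intro j _
        rw [map_smul, lam_odd hD j _ (D.sg_Q_mul j _ _), smul_zero]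
    have e2 := Finset.sum_congr rfl fun i (_ : i ∈ Finset.univ) => e1 i
    rw [Finset.sum_add_distrib, ← map_sum, ← Finset.sum_mul, ← lap_apply, hlf, zero_mul, map_zero,
      zero_add, ← Finset.mul_sum, ← map_sum, ← map_sum, ← Finset.sum_mul, sum_X_mul_T,
      eul_of_homog hf] at e2
    rw [e2, add_mul (_ • f), Finset.sum_mul, map_add, smul_mul_assoc, map_smul, map_sum]
    simp only [smul_mul_assoc, map_smul, sub_mul, map_sub, smul_eq_mul]
    push_cast
    ring
  have k1 := key hf hg hlf
  have k2 := key hg hf hlg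
  simp only [mul_comm (D.T _ g)] at k2
  rw [k1] at k2
  simp only [mul_comm g f, lam_sg_mul hD _ g f, mul_comm g (D.sg _ f)] at k2
  have hc : (0 : ℝ) < n + m + Fintype.card ι + 2 * D.gam := by positivity
  rw [add_comm (m : ℝ) n] at k2
  have k3 := mul_left_cancel₀ hc.ne' k2
  have k4 : ((n : ℝ) - m) * lam hD (f * g) = 0 := by linarith
  rcases mul_eq_zero.1 k4 with h | h
  · exact absurd (by exact_mod_cast sub_eq_zero.1 h) fun h' => hnm (by rw [h'])
  · exact h

/-- Bessel's inequality for the homogeneous components of a harmonic polynomial. -/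
theorem lam_sq_comp {H : MvPolynomial ι ℝ} (hH : D.lap H = 0) {M : ℝ}
    (hM : ∀ x : ι → ℝ, x ⬝ᵥ x = 1 → |eval x H| ≤ M) (n : ℕ) :
    lam hD (homogeneousComponent n H ^ 2) ≤ M ^ 2 := by
  have h1 : lam hD (H ^ 2) ≤ M ^ 2 := by
    have hC : lam hD (C (M ^ 2)) = M ^ 2 := by
      rw [lam_harm hD, eval_C]
      exact D.lap_homog_zero (isHomogeneous_C ι _) (by norm_num)
    have := lam_nonneg hD (f := C (M ^ 2) - H ^ 2) fun x hx => by
      rw [map_sub, eval_C, map_pow, sub_nonneg]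
      exact sq_le_sq' (abs_le.1 (hM x hx)).1 (abs_le.1 (hM x hx)).2
    rw [map_sub, hC] at this
    linarith
  refine le_trans ?_ h1
  by_cases hn : H.totalDegree < n
  · rw [homogeneousComponent_eq_zero _ _ hn, zero_pow two_ne_zero, map_zero]
    exact lam_nonneg hD fun x _ => by rw [map_pow]; positivity
  have h2 : lam hD (H ^ 2) = ∑ i ∈ Finset.range (H.totalDegree + 1),
      lam hD (homogeneousComponent i H ^ 2) := by
    conv_lhs => rw [← sum_homogeneousComponent H]
    rw [sq, Finset.sum_mul_sum, map_sum]
    refine Finset.sum_congr rfl fun i hi => ?_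
    rw [map_sum, Finset.sum_eq_single_of_mem i hi, sq]
    intro j _ hj
    exact orth hD hj.symm (homogeneousComponent_isHomogeneous i H)
      (homogeneousComponent_isHomogeneous j H) (D.lap_comp hH i) (D.lap_comp hH j)
  rw [h2]
  exact Finset.single_le_sum (f := fun i => lam hD (homogeneousComponent i H ^ 2))
    (fun i _ => lam_nonneg hD fun x _ => by rw [map_pow]; positivity)
    (Finset.mem_range.2 (by omega))

end RootData

/-! ### The Dunkl Laplacian of a `C²` function and the maximum principle -/

namespace RootData
open MvPolynomial

variable {ι J : Type} [Fintype ι] [DecidableEq ι] [Fintype J] (D : RootData ι J)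

/-- The second directional derivative. -/
def pdd (F : (ι → ℝ) → ℝ) (x v : ι → ℝ) : ℝ := fderiv ℝ (fun y => fderiv ℝ F y v) x v

/-- The contribution of one root to the Dunkl Laplacian. -/
def rt (j : J) (F : (ι → ℝ) → ℝ) (x : ι → ℝ) : ℝ :=
  fderiv ℝ F x (D.a j) / (D.a j ⬝ᵥ x) - (F x - F (D.r j x)) / (D.a j ⬝ᵥ x) ^ 2

/-- The Dunkl Laplacian of a function, meaningful at regular points. All roots are listed, not only
the positive ones, so the multiplicities `k` are half of the usual ones. -/
def LapF (F : (ι → ℝ) → ℝ) (x : ι → ℝ) : ℝ :=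
  ∑ i, pdd F x (Pi.single i 1) + ∑ j, 2 * D.k j * D.rt j F x

/-- Regular points: those on no reflecting hyperplane. -/
def reg (x : ι → ℝ) : Prop := ∀ j, D.a j ⬝ᵥ x ≠ 0

theorem fderiv_add_eventually {F G : (ι → ℝ) → ℝ} {x : ι → ℝ} (hF : ContDiffAt ℝ 2 F x)
    (hG : ContDiffAt ℝ 2 G x) (v : ι → ℝ) :
    (fun y => fderiv ℝ (F + G) y v) =ᶠ[𝓝 x] fun y => fderiv ℝ F y v + fderiv ℝ G y v := by
  filter_upwards [hF.eventually (by simp), hG.eventually (by simp)] with y h1 h2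
  rw [fderiv_add (h1.differentiableAt (by simp)) (h2.differentiableAt (by simp))]
  rfl

theorem differentiableAt_fderiv_apply {F : (ι → ℝ) → ℝ} {x : ι → ℝ} (hF : ContDiffAt ℝ 2 F x)
    (v : ι → ℝ) : DifferentiableAt ℝ (fun y => fderiv ℝ F y v) x :=
  ((hF.fderiv_right (m := 1) (by norm_num)).differentiableAt (by simp)).clm_apply
    (differentiableAt_const v)

theorem pdd_add {F G : (ι → ℝ) → ℝ} {x : ι → ℝ} (hF : ContDiffAt ℝ 2 F x)
    (hG : ContDiffAt ℝ 2 G x) (v : ι → ℝ) : pdd (F + G) x v = pdd F x v + pdd G x v := by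
  rw [pdd, (fderiv_add_eventually hF hG v).fderiv_eq,
    fderiv_fun_add (differentiableAt_fderiv_apply hF v) (differentiableAt_fderiv_apply hG v)]
  rfl

theorem pdd_smul {F : (ι → ℝ) → ℝ} (x : ι → ℝ) (c : ℝ) (v : ι → ℝ) :
    pdd (c • F) x v = c * pdd F x v := by
  have : (fun y => fderiv ℝ (c • F) y v) = c • fun y => fderiv ℝ F y v := by
    ext y; rw [fderiv_const_smul_field]; rfl
  rw [pdd, this, fderiv_const_smul_field]
  rfl

theorem LapF_add {F G : (ι → ℝ) → ℝ} {x : ι → ℝ} (hF : ContDiffAt ℝ 2 F x)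
    (hG : ContDiffAt ℝ 2 G x) : D.LapF (F + G) x = D.LapF F x + D.LapF G x := by
  have h : ∀ j, D.rt j (F + G) x = D.rt j F x + D.rt j G x := fun j => by
    simp only [rt, fderiv_add (hF.differentiableAt (by simp)) (hG.differentiableAt (by simp)),
      Pi.add_apply, add_apply]
    ring
  simp only [LapF, pdd_add hF hG, h, mul_add, Finset.sum_add_distrib]
  ring

theorem LapF_smul (F : (ι → ℝ) → ℝ) (x : ι → ℝ) (c : ℝ) :
    D.LapF (c • F) x = c * D.LapF F x := by
  have h : ∀ j, D.rt j (c • F) x = c * D.rt j F x := fun j => by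
    simp only [rt, fderiv_const_smul_field, Pi.smul_apply, smul_apply,
      smul_eq_mul]
    ring
  simp only [LapF, pdd_smul, h, mul_add, Finset.mul_sum]
  exact congrArg₂ _ rfl (Finset.sum_congr rfl fun j _ => by ring)

/-! #### Polynomials -/

theorem hasFDerivAt_eval (f : MvPolynomial ι ℝ) (x : ι → ℝ) :
    HasFDerivAt (fun y => eval y f)
      (∑ i, eval x (pderiv i f) • (ContinuousLinearMap.proj i : (ι → ℝ) →L[ℝ] ℝ)) x := by
  induction f using MvPolynomial.induction_on with
  | C c => simpa using hasFDerivAt_const c x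
  | add f g hf hg =>
    simp only [map_add, add_smul, Finset.sum_add_distrib]
    exact hf.add hg
  | mul_X f i hf =>
    have h1 : HasFDerivAt (fun y : ι → ℝ => y i) (ContinuousLinearMap.proj i) x :=
      (ContinuousLinearMap.proj (R := ℝ) (φ := fun _ : ι => ℝ) i).hasFDerivAt
    simp only [map_mul, eval_X]
    refine (hf.mul h1).congr_fderiv ?_
    ext v
    simp only [add_apply, smul_apply,
      sum_apply, ContinuousLinearMap.proj_apply, smul_eq_mul,
      Derivation.leibniz, pderiv_X, map_add, map_mul, add_mul, Finset.sum_add_distrib, eval_X]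
    refine congrArg₂ _ ?_ ?_
    · rw [Finset.sum_eq_single i] <;> simp +contextual
    · rw [Finset.mul_sum]; exact Finset.sum_congr rfl fun j _ => by ring

theorem fderiv_eval (f : MvPolynomial ι ℝ) (x v : ι → ℝ) :
    fderiv ℝ (fun y => eval y f) x v = eval x (dv v f) := by
  rw [(hasFDerivAt_eval f x).fderiv, dv_apply]
  simp [smul_eval, mul_comm]

theorem contDiff_eval {n : WithTop ℕ∞} (f : MvPolynomial ι ℝ) :
    ContDiff ℝ n fun y : ι → ℝ => eval y f := by
  induction f using MvPolynomial.induction_on with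
  | C c => simpa using contDiff_const
  | add f g hf hg => simpa using hf.add hg
  | mul_X f i hf => simpa using hf.mul (contDiff_apply ℝ ℝ i)

theorem pdd_eval (f : MvPolynomial ι ℝ) (x v : ι → ℝ) :
    pdd (fun y => eval y f) x v = eval x (dv v (dv v f)) := by
  simp only [pdd, fderiv_eval]

/-- On polynomials the explicit Dunkl Laplacian is the sum of the squares of the Dunkl operators. -/
theorem LapF_eval (f : MvPolynomial ι ℝ) {x : ι → ℝ} (hx : D.reg x) :
    D.LapF (fun y => eval y f) x = eval x (D.lap f) := by
  simp only [LapF, rt, pdd_eval, fderiv_eval]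
  have step : ∀ (w : ι → ℝ) (f : MvPolynomial ι ℝ),
      (∑ i, eval x (dv (Pi.single i 1) (dv (Pi.single i 1) f)) + ∑ j, 2 * D.k j *
        (eval x (dv (D.a j) f) / (D.a j ⬝ᵥ x) - (eval x f - eval (D.r j x) f) / (D.a j ⬝ᵥ x) ^ 2)
        = eval x (D.lap f)) →
      (∑ i, eval x (dv (Pi.single i 1) (dv (Pi.single i 1) (lin w * f))) + ∑ j, 2 * D.k j *
        (eval x (dv (D.a j) (lin w * f)) / (D.a j ⬝ᵥ x)
          - (eval x (lin w * f) - eval (D.r j x) (lin w * f)) / (D.a j ⬝ᵥ x) ^ 2)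
        = eval x (D.lap (lin w * f))) := by
    intro w f hf
    have e1 : ∀ v : ι → ℝ, dv v (lin w * f) = lin w * dv v f + (v ⬝ᵥ w) • f := fun v => by
      rw [dv_mul, dv_lin, smul_eq_C_mul]; ring
    have e2 : ∀ v : ι → ℝ, dv v (dv v (lin w * f))
        = lin w * dv v (dv v f) + (2 : ℝ) • (v ⬝ᵥ w) • dv v f := fun v => by
      rw [e1, map_add, map_smul, dv_mul, dv_lin]
      simp only [smul_eq_C_mul, map_ofNat]; ring
    have e3 : ∑ i, w i * eval x (dv (Pi.single i 1) f) = eval x (dv w f) := by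
      simp only [dv_apply, map_sum, smul_eval, Pi.single_apply]
      simp
    have e4 : ∀ j, 2 * D.k j * (eval x (dv (D.a j) (lin w * f)) / (D.a j ⬝ᵥ x)
          - (eval x (lin w * f) - eval (D.r j x) (lin w * f)) / (D.a j ⬝ᵥ x) ^ 2)
        = (w ⬝ᵥ x) * (2 * D.k j * (eval x (dv (D.a j) f) / (D.a j ⬝ᵥ x)
          - (eval x f - eval (D.r j x) f) / (D.a j ⬝ᵥ x) ^ 2))
          + 2 * (D.k j * (D.a j ⬝ᵥ w) * eval x (D.Q j f)) := by
      intro j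
      have h := congrArg (eval x) (D.lin_mul_Q j f)
      rw [map_mul, eval_lin, map_sub, eval_sg] at h
      have h' : eval x (D.Q j f) = (eval x f - eval (D.r j x) f) / (D.a j ⬝ᵥ x) := by
        rw [eq_div_iff (hx j), mul_comm, h]
      have h3 : w ⬝ᵥ D.r j x = w ⬝ᵥ x - (D.a j ⬝ᵥ x) * (D.a j ⬝ᵥ w) := by
        rw [r_apply, dotProduct_sub, dotProduct_smul, smul_eq_mul, dotProduct_comm w (D.a j)]
      rw [h', e1]
      simp only [map_add, map_mul, eval_lin, smul_eval, h3]
      have := hx j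
      field_simp
      ring
    rw [lap_lin_mul, T_apply, Finset.sum_congr rfl fun j _ => e4 j]
    simp only [e2, map_add, map_mul, eval_lin, smul_eval, map_sum, Finset.sum_add_distrib,
      ← Finset.mul_sum, single_one_dotProduct, e3, ← hf]
    ring
  induction f using MvPolynomial.induction_on with
  | C c =>
    have h : ∀ v : ι → ℝ, dv v (C c : MvPolynomial ι ℝ) = 0 := fun v => by simp [dv_apply]
    rw [D.lap_homog_zero (isHomogeneous_C ι c) (by norm_num)]
    simp [h]
  | add f g hf hg =>
    simp only [map_add, ← hf, ← hg]
    have : ∀ j, 2 * D.k j * ((eval x (dv (D.a j) f) + eval x (dv (D.a j) g)) / (D.a j ⬝ᵥ x)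
        - (eval x f + eval x g - (eval (D.r j x) f + eval (D.r j x) g)) / (D.a j ⬝ᵥ x) ^ 2)
        = 2 * D.k j * (eval x (dv (D.a j) f) / (D.a j ⬝ᵥ x)
          - (eval x f - eval (D.r j x) f) / (D.a j ⬝ᵥ x) ^ 2)
        + 2 * D.k j * (eval x (dv (D.a j) g) / (D.a j ⬝ᵥ x)
          - (eval x g - eval (D.r j x) g) / (D.a j ⬝ᵥ x) ^ 2) := fun j => by ring
    simp only [this, Finset.sum_add_distrib]
    ring
  | mul_X f i hf =>
    rw [mul_comm, ← lin_single]
    exact step _ f hf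

theorem LapF_nsq {x : ι → ℝ} (hx : D.reg x) :
    D.LapF (fun y => y ⬝ᵥ y) x = 2 * Fintype.card ι + 4 * D.gam := by
  have h := D.LapF_eval nsq hx
  have h1 := D.lap_nsq_mul 1
  rw [mul_one, lap_one] at h1
  simp only [eval_nsq] at h
  rw [h, h1, eul_apply]
  simp [smul_eval]

/-! #### Second order conditions -/

theorem taylor_le {φ φ' φ'' : ℝ → ℝ} {c : ℝ}
    (h1 : ∀ t ∈ Set.Icc (0 : ℝ) 1, HasDerivAt φ (φ' t) t)
    (h2 : ∀ t ∈ Set.Icc (0 : ℝ) 1, HasDerivAt φ' (φ'' t) t)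
    (h3 : ∀ t ∈ Set.Icc (0 : ℝ) 1, φ'' t ≤ c) : φ 1 ≤ φ 0 + φ' 0 + c / 2 := by
  have d1 : ∀ t ∈ Set.Icc (0 : ℝ) 1, HasDerivAt (fun t => c * t - φ' t) (c - φ'' t) t :=
    fun t ht => by
      have := ((hasDerivAt_id t).const_mul c).sub (h2 t ht)
      rwa [mul_one] at this
  have m1 : MonotoneOn (fun t => c * t - φ' t) (Set.Icc 0 1) := by
    refine monotoneOn_of_deriv_nonneg (convex_Icc 0 1)
      (fun t ht => (d1 t ht).continuousAt.continuousWithinAt)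
      (fun t ht => (d1 t (interior_subset ht)).differentiableAt.differentiableWithinAt)
      fun t ht => ?_
    rw [(d1 t (interior_subset ht)).deriv]
    linarith [h3 t (interior_subset ht)]
  have d2 : ∀ t ∈ Set.Icc (0 : ℝ) 1,
      HasDerivAt (fun t => c / 2 * t ^ 2 + φ' 0 * t - φ t) (c * t + φ' 0 - φ' t) t := by
    intro t ht
    have := (((hasDerivAt_pow 2 t).const_mul (c / 2)).add
      ((hasDerivAt_id t).const_mul (φ' 0))).sub (h1 t ht)
    refine this.congr_deriv ?_
    simp
    ring
  have m2 : MonotoneOn (fun t => c / 2 * t ^ 2 + φ' 0 * t - φ t) (Set.Icc 0 1) := by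
    refine monotoneOn_of_deriv_nonneg (convex_Icc 0 1)
      (fun t ht => (d2 t ht).continuousAt.continuousWithinAt)
      (fun t ht => (d2 t (interior_subset ht)).differentiableAt.differentiableWithinAt)
      fun t ht => ?_
    rw [(d2 t (interior_subset ht)).deriv]
    have := m1 (Set.left_mem_Icc.2 zero_le_one) (interior_subset ht) (interior_subset ht).1
    simp at this
    linarith
  have := m2 (Set.left_mem_Icc.2 zero_le_one) (Set.right_mem_Icc.2 zero_le_one) zero_le_one
  simp at this
  linarith

theorem hasDerivAt_line {F : (ι → ℝ) → ℝ} {x v : ι → ℝ} {t : ℝ}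
    (hF : DifferentiableAt ℝ F (x + t • v)) :
    HasDerivAt (fun t : ℝ => F (x + t • v)) (fderiv ℝ F (x + t • v) v) t := by
  have h : HasDerivAt (fun t : ℝ => x + t • v) v t := by
    simpa using ((hasDerivAt_id t).smul_const v).const_add x
  exact hF.hasFDerivAt.comp_hasDerivAt t h

theorem pdd_nonpos {G : (ι → ℝ) → ℝ} {x : ι → ℝ} (hG : ContDiffAt ℝ 2 G x) (hm : IsLocalMax G x)
    (v : ι → ℝ) : pdd G x v ≤ 0 := by
  by_contra! hpos
  have hl : Tendsto (fun t : ℝ => x + t • v) (𝓝 0) (𝓝 x) := by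
    have : Continuous fun t : ℝ => x + t • v := by fun_prop
    simpa using this.tendsto 0
  set φ : ℝ → ℝ := fun t => G (x + t • v) with hφ
  have hd : deriv φ =ᶠ[𝓝 0] fun t => fderiv ℝ G (x + t • v) v := by
    filter_upwards [hl.eventually (hG.eventually (by simp))] with t ht
    exact (hasDerivAt_line (ht.differentiableAt (by simp))).deriv
  have hdd : deriv (deriv φ) 0 = pdd G x v := by
    rw [hd.deriv_eq]
    have h0 : DifferentiableAt ℝ (fun y => fderiv ℝ G y v) (x + (0 : ℝ) • v) := by
      simpa using differentiableAt_fderiv_apply hG v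
    rw [(hasDerivAt_line h0).deriv]
    simp [pdd]
  have hmax : IsLocalMax φ 0 := by
    have := hl.eventually hm
    simpa [IsLocalMax, IsMaxFilter, hφ] using this
  have hc : ContinuousAt φ 0 := by
    have h0 : DifferentiableAt ℝ G (x + (0 : ℝ) • v) := by
      simpa using hG.differentiableAt (by simp)
    exact (hasDerivAt_line h0).continuousAt
  have hmin : IsLocalMin φ 0 :=
    isLocalMin_of_deriv_deriv_pos (by rw [hdd]; exact hpos) hmax.deriv_eq_zero hc
  have hconst : φ =ᶠ[𝓝 0] fun _ => φ 0 := by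
    filter_upwards [hmax, hmin] with t h1 h2
    exact le_antisymm h1 h2
  have h2 := hconst.deriv.deriv_eq
  rw [hdd] at h2
  simp at h2
  linarith

theorem dense_reg : Dense {x : ι → ℝ | D.reg x} := by
  have h : {x : ι → ℝ | D.reg x} = ⋂ j, {x | D.a j ⬝ᵥ x ≠ 0} := by
    ext x; simp [reg]
  have hcont : ∀ j, Continuous fun x : ι → ℝ => D.a j ⬝ᵥ x := fun j =>
    Continuous.dotProduct continuous_const continuous_id
  rw [h]
  refine dense_iInter_of_isOpen (fun j => isOpen_ne_fun (hcont j) continuous_const) fun j => ?_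
  intro x
  by_cases hx : D.a j ⬝ᵥ x ≠ 0
  · exact subset_closure hx
  have ht : Tendsto (fun t : ℝ => x + t • D.a j) (𝓝[≠] 0) (𝓝 x) := by
    have : Continuous fun t : ℝ => x + t • D.a j := by fun_prop
    have h2 := this.tendsto 0
    simp only [zero_smul, add_zero] at h2
    exact h2.mono_left nhdsWithin_le_nhds
  refine mem_closure_of_tendsto ht ?_
  filter_upwards [self_mem_nhdsWithin] with t ht
  push Not at hx
  simp only [dotProduct_add, dotProduct_smul, D.norm, hx, smul_eq_mul]
  simpa using ht

/-- Near an interior maximum the Dunkl Laplacian is at most an arbitrarily small constant. The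
maximum may lie on a reflecting hyperplane, where `LapF` itself is meaningless, so the bound is
formulated at nearby regular points. -/
theorem eventually_LapF_le (hk : ∀ j, 0 ≤ D.k j) {G : (ι → ℝ) → ℝ} {x : ι → ℝ}
    (hG : ContDiffAt ℝ 2 G x) (hm : IsLocalMax G x) (hr : ∀ j, G (D.r j x) ≤ G x)
    (hrc : ∀ j, ContinuousAt G (D.r j x)) {η : ℝ} (hη : 0 < η) :
    ∀ᶠ y in 𝓝 x, D.reg y → D.LapF G y ≤ η := by
  have hpc : ∀ v, ContinuousAt (fun y => pdd G y v) x := by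
    intro v
    have h1 : ContDiffAt ℝ 1 (fun y => fderiv ℝ G y v) x :=
      (hG.fderiv_right (m := 1) (by norm_num)).clm_apply contDiffAt_const
    exact ((h1.fderiv_right (m := 0) (by norm_num)).continuousAt).clm_apply continuousAt_const
  have hfc : ∀ v, ContinuousAt (fun y => fderiv ℝ G y v) x := fun v =>
    (differentiableAt_fderiv_apply hG v).continuousAt
  have hdot : ∀ j, Continuous fun x : ι → ℝ => D.a j ⬝ᵥ x := fun j =>
    Continuous.dotProduct continuous_const continuous_id
  have hfd : fderiv ℝ G x = 0 := hm.fderiv_eq_zero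
  obtain ⟨δ, hδ, hδη⟩ : ∃ δ > 0, (Fintype.card ι + ∑ j, 2 * D.k j) * δ ≤ η := by
    have h0 : 0 ≤ ∑ j, 2 * D.k j := Finset.sum_nonneg fun j _ => by linarith [hk j]
    have h1 : (0 : ℝ) < Fintype.card ι + ∑ j, 2 * D.k j + 1 := by positivity
    refine ⟨η / (Fintype.card ι + ∑ j, 2 * D.k j + 1), by positivity, ?_⟩
    rw [mul_div_assoc', div_le_iff₀ h1]
    nlinarith
  have A : ∀ i : ι, ∀ᶠ y in 𝓝 x, pdd G y (Pi.single i 1) ≤ δ := fun i =>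
    ((hpc _).eventually_lt_const ((pdd_nonpos hG hm _).trans_lt hδ)).mono fun _ h => h.le
  have B : ∀ j, ∀ᶠ y in 𝓝 x, D.a j ⬝ᵥ y ≠ 0 → D.rt j G y ≤ δ := by
    intro j
    by_cases hj : D.a j ⬝ᵥ x = 0
    -- On the wall: Taylor expansion along the segment from `y` to its reflection.
    · have h1 : ∀ᶠ z in 𝓝 x, ContDiffAt ℝ 2 G z ∧ pdd G z (D.a j) < δ :=
        (hG.eventually (by simp)).and
          ((hpc _).eventually_lt_const ((pdd_nonpos hG hm _).trans_lt hδ))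
      obtain ⟨ρ, hρ, hball⟩ := Metric.eventually_nhds_iff_ball.1 h1
      have h2 : ∀ᶠ y in 𝓝 x, dist y x + |D.a j ⬝ᵥ y| * ‖D.a j‖ < ρ := by
        have : ContinuousAt (fun y => dist y x + |D.a j ⬝ᵥ y| * ‖D.a j‖) x := by
          have := hdot j; fun_prop
        refine this.eventually_lt_const ?_
        simpa [hj] using hρ
      filter_upwards [h2] with y hy hy0
      set s := D.a j ⬝ᵥ y with hs
      have hmem : ∀ t ∈ Set.Icc (0 : ℝ) 1, y + t • (-s • D.a j) ∈ ball x ρ := by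
        intro t ht
        rw [mem_ball]
        calc dist (y + t • (-s • D.a j)) x ≤ dist (y + t • (-s • D.a j)) y + dist y x :=
              dist_triangle _ _ _
          _ ≤ |s| * ‖D.a j‖ + dist y x := by
              gcongr
              rw [dist_eq_norm, add_sub_cancel_left, norm_smul, norm_smul, Real.norm_eq_abs,
                Real.norm_eq_abs, abs_neg, abs_of_nonneg ht.1]
              exact mul_le_of_le_one_left (by positivity) ht.2
          _ < ρ := by linarith
      have hp : ∀ z, ContDiffAt ℝ 2 G z →
          pdd G z (-s • D.a j) = s ^ 2 * pdd G z (D.a j) := by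
        intro z hz
        have : (fun y => fderiv ℝ G y (-s • D.a j)) = (-s) • fun y => fderiv ℝ G y (D.a j) := by
          ext y; simp
        rw [pdd, this, fderiv_const_smul_field, pdd]
        simp only [Pi.smul_apply, smul_apply, map_smul, smul_eq_mul]
        ring
      have key := taylor_le (c := s ^ 2 * δ)
        (fun t ht => hasDerivAt_line ((hball _ (hmem t ht)).1.differentiableAt (by simp)))
        (fun t ht => hasDerivAt_line
          (differentiableAt_fderiv_apply (hball _ (hmem t ht)).1 (-s • D.a j)))
        (fun t ht => by
          have := hp _ (hball _ (hmem t ht)).1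
          rw [pdd] at this
          rw [this]
          exact mul_le_mul_of_nonneg_left (hball _ (hmem t ht)).2.le (sq_nonneg s))
      rw [one_smul, zero_smul, add_zero, map_smul, smul_eq_mul,
        show y + -s • D.a j = D.r j y by rw [r_apply]; module] at key
      have hs2 : 0 < s ^ 2 := by positivity
      rw [rt, ← hs]
      have e : fderiv ℝ G y (D.a j) / s - (G y - G (D.r j y)) / s ^ 2
          = (s * fderiv ℝ G y (D.a j) - (G y - G (D.r j y))) / s ^ 2 := by
        field_simp
      rw [e, div_le_iff₀ hs2]
      nlinarith
    · have hc : ContinuousAt (fun y => D.rt j G y) x := by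
        have c1 : ContinuousAt (fun y => D.a j ⬝ᵥ y) x := (hdot j).continuousAt
        have c2 : ContinuousAt (fun y => G (D.r j y)) x :=
          ContinuousAt.comp (f := fun y => D.r j y) (hrc j)
            (LinearMap.continuous_of_finiteDimensional (D.r j)).continuousAt
        exact ((hfc _).div c1 hj).sub ((hG.continuousAt.sub c2).div (c1.pow 2) (pow_ne_zero 2 hj))
      refine (hc.eventually_lt_const (lt_of_le_of_lt ?_ hδ)).mono fun _ h _ => h.le
      simp only [rt, hfd]
      have : 0 ≤ (G x - G (D.r j x)) / (D.a j ⬝ᵥ x) ^ 2 :=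
        div_nonneg (sub_nonneg.2 (hr j)) (sq_nonneg _)
      simpa using this
  filter_upwards [eventually_all.2 A, eventually_all.2 B] with y hA hB hreg
  calc D.LapF G y ≤ ∑ _i : ι, δ + ∑ j, 2 * D.k j * δ :=
        add_le_add (Finset.sum_le_sum fun i _ => hA i) (Finset.sum_le_sum fun j _ =>
          mul_le_mul_of_nonneg_left (hB j (hreg j)) (by linarith [hk j]))
    _ = (Fintype.card ι + ∑ j, 2 * D.k j) * δ := by
        rw [Finset.sum_const, Finset.card_univ, nsmul_eq_mul, ← Finset.sum_mul]; ring
    _ ≤ η := hδη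

theorem isCompact_le_one : IsCompact {x : ι → ℝ | x ⬝ᵥ x ≤ 1} := by
  have hc : Continuous fun x : ι → ℝ => x ⬝ᵥ x := Continuous.dotProduct continuous_id continuous_id
  refine Metric.isCompact_of_isClosed_isBounded (isClosed_le hc continuous_const) ?_
  refine (Metric.isBounded_closedBall (x := (0 : ι → ℝ)) (r := 1)).subset fun x hx => ?_
  rw [mem_closedBall_zero_iff, pi_norm_le_iff_of_nonneg zero_le_one]
  intro i
  have h1 : x i * x i ≤ x ⬝ᵥ x :=
    Finset.single_le_sum (f := fun i => x i * x i) (fun i _ => mul_self_nonneg _)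
      (Finset.mem_univ i)
  rw [Real.norm_eq_abs, ← abs_one (α := ℝ), ← sq_le_sq]
  have : x ⬝ᵥ x ≤ 1 := hx
  nlinarith

variable [Nonempty ι]

/-- The weak maximum principle on the unit ball for `Δ_κ`-subharmonic functions. -/
theorem max_principle (hk : ∀ j, 0 ≤ D.k j) {F : (ι → ℝ) → ℝ} {m : ℝ}
    (hc : ContinuousOn F {x | x ⬝ᵥ x ≤ 1}) (h2 : ∀ x, x ⬝ᵥ x < 1 → ContDiffAt ℝ 2 F x)
    (hL : ∀ x, x ⬝ᵥ x < 1 → D.reg x → 0 ≤ D.LapF F x) (hm : ∀ x, x ⬝ᵥ x = 1 → F x ≤ m)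
    {x : ι → ℝ} (hx : x ⬝ᵥ x ≤ 1) : F x ≤ m := by
  by_contra! hlt
  have hxx : 0 ≤ x ⬝ᵥ x := Finset.sum_nonneg fun i _ => mul_self_nonneg (x i)
  set ε := (F x - m) / 2 with hε
  have hε0 : 0 < ε := by rw [hε]; linarith
  have hN : Continuous fun x : ι → ℝ => x ⬝ᵥ x := Continuous.dotProduct continuous_id continuous_id
  set N : (ι → ℝ) → ℝ := fun x => x ⬝ᵥ x with hNdef
  have hN2 : ∀ x, ContDiffAt ℝ 2 N x := by
    intro x
    have := (contDiff_eval (n := 2) (nsq : MvPolynomial ι ℝ)).contDiffAt (x := x)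
    simpa only [eval_nsq] using this
  -- The term `ε |x|²` makes the Laplacian strictly positive, still with an interior maximum.
  set G : (ι → ℝ) → ℝ := F + ε • N with hGdef
  have hGc : ContinuousOn G {x | x ⬝ᵥ x ≤ 1} := hc.add (hN.continuousOn.const_smul ε)
  obtain ⟨z, hz, hzmax⟩ := isCompact_le_one.exists_isMaxOn ⟨x, hx⟩ hGc
  have hGx : ∀ y, G y = F y + ε * (y ⬝ᵥ y) := fun y => rfl
  have hz1 : z ⬝ᵥ z < 1 := by
    refine lt_of_le_of_ne hz fun h1 => ?_
    have a := hzmax hx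
    simp only [Set.mem_ofPred_eq, hGx] at a
    have b := hm z h1
    rw [h1] at a
    nlinarith
  have hopen : IsOpen {x : ι → ℝ | x ⬝ᵥ x < 1} := isOpen_lt hN continuous_const
  have hnb : {x : ι → ℝ | x ⬝ᵥ x < 1} ∈ 𝓝 z := hopen.mem_nhds hz1
  have hle : ∀ y : ι → ℝ, y ⬝ᵥ y < 1 → G y ≤ G z := fun y hy => hzmax (le_of_lt hy)
  have hD : (0 : ℝ) < Fintype.card ι := by exact_mod_cast Fintype.card_pos
  have hg : 0 ≤ D.gam := Finset.sum_nonneg fun j _ => hk j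
  have ev := D.eventually_LapF_le hk ((h2 z hz1).add ((hN2 z).const_smul ε))
    (Filter.mem_of_superset hnb hle)
    (fun j => hle _ (by rwa [r_dot_r]))
    (fun j => hGc.continuousAt (Filter.mem_of_superset
      (hopen.mem_nhds (show D.r j z ⬝ᵥ D.r j z < 1 by rwa [r_dot_r])) fun y (hy : y ⬝ᵥ y < 1) => 
        (show y ⬝ᵥ y ≤ 1 from hy.le)))
    (η := ε * Fintype.card ι) (by positivity)
  obtain ⟨y, hy, hreg⟩ := (mem_closure_iff_nhds.1 (D.dense_reg z)) _ (ev.and hnb)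
  have l1 := hy.1 hreg
  have hy1 : y ⬝ᵥ y < 1 := hy.2
  have l2 : D.LapF G y = D.LapF F y + ε * D.LapF N y := by
    rw [hGdef, D.LapF_add (G := ε • N) (h2 y hy1) ((hN2 y).const_smul ε), LapF_smul]
  have l3 := D.LapF_nsq hreg
  have l4 := hL y hy1 hreg
  change D.LapF G y ≤ _ at l1
  rw [l2, l3] at l1
  nlinarith [mul_pos hε0 hD, mul_nonneg hε0.le hg]

theorem maxPrin (hk : ∀ j, 0 ≤ D.k j) : D.MaxPrin where
  k_nonneg := hk
  mp H hH hS := by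
    have := D.max_principle hk (F := fun x => eval x (-H)) (m := 0) (x := 0)
      (contDiff_eval (n := 2) _).continuous.continuousOn
      (fun x _ => (contDiff_eval (n := 2) _).contDiffAt)
      (fun x _ hx => by rw [D.LapF_eval _ hx, map_neg, hH]; simp)
      (fun x hx => by simpa using hS x hx) (by simp)
    simpa using this

end RootData

/-! ### A subharmonic barrier -/

namespace RootData
open MvPolynomial

variable {ι J : Type} [Fintype ι] [DecidableEq ι] [Fintype J] (D : RootData ι J)

/-- The rational function `g / s ^ n`. -/
def bar (g s : MvPolynomial ι ℝ) (n : ℕ) (x : ι → ℝ) : ℝ := eval x g * (eval x s)⁻¹ ^ n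

theorem bar_contDiffAt (g : MvPolynomial ι ℝ) {s : MvPolynomial ι ℝ} (n : ℕ) {x : ι → ℝ}
    (hx : eval x s ≠ 0) {m : WithTop ℕ∞} : ContDiffAt ℝ m (bar g s n) x :=
  (contDiff_eval g).contDiffAt.mul (((contDiff_eval s).contDiffAt.inv hx).pow n)

theorem fderiv_bar (g : MvPolynomial ι ℝ) {s : MvPolynomial ι ℝ} (n : ℕ) {x : ι → ℝ}
    (hx : eval x s ≠ 0) (v : ι → ℝ) :
    fderiv ℝ (bar g s n) x v = bar (dv v g) s n x - n * bar (g * dv v s) s (n + 1) x := by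
  have hg := ((contDiff_eval (n := 1) g).differentiable (by simp) x).hasFDerivAt
  have hs := ((contDiff_eval (n := 1) s).differentiable (by simp) x).hasFDerivAt
  have h := hg.mul ((hasDerivAt_inv hx).comp_hasFDerivAt x hs |>.pow n)
  have e : bar g s n = (fun y => eval y g) * (((fun y => y⁻¹) ∘ fun y => eval y s) ^ n) := rfl
  rw [e]
  refine (congrArg (fun l => l v) (HasFDerivAt.fderiv h)).trans ?_
  simp only [add_apply, smul_apply, fderiv_eval, smul_eq_mul,
    bar, map_mul, Function.comp_apply]
  rcases n with _ | n
  · simp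
  · simp only [Nat.add_sub_cancel, nsmul_eq_mul]
    push_cast
    ring

theorem pdd_bar (g : MvPolynomial ι ℝ) {s : MvPolynomial ι ℝ} (n : ℕ) {x : ι → ℝ}
    (hx : eval x s ≠ 0) (v : ι → ℝ) :
    pdd (bar g s n) x v = bar (dv v (dv v g)) s n x - 2 * n * bar (dv v g * dv v s) s (n + 1) x
      - n * bar (g * dv v (dv v s)) s (n + 1) x
      + n * (n + 1) * bar (g * dv v s * dv v s) s (n + 2) x := by
  have hev : ∀ᶠ y in 𝓝 x, eval y s ≠ 0 :=
    ((contDiff_eval (n := 0) s).continuous.continuousAt).eventually_ne hx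
  have h1 : (fun y => fderiv ℝ (bar g s n) y v)
      =ᶠ[𝓝 x] (bar (dv v g) s n - (n : ℝ) • bar (g * dv v s) s (n + 1)) := by
    filter_upwards [hev] with y hy
    rw [fderiv_bar g n hy]; rfl
  have d1 := (bar_contDiffAt (dv v g) n hx (m := 1)).differentiableAt (by simp)
  have d2 := (bar_contDiffAt (g * dv v s) (n + 1) hx (m := 1)).differentiableAt (by simp)
  rw [pdd, h1.fderiv_eq, fderiv_sub d1 (d2.const_smul _), fderiv_const_smul_field]
  simp only [sub_apply, smul_apply, Pi.smul_apply, fderiv_bar _ _ hx, smul_eq_mul]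
  have e : bar (dv v (g * dv v s)) s (n + 1) x
      = bar (g * dv v (dv v s)) s (n + 1) x + bar (dv v g * dv v s) s (n + 1) x := by
    rw [dv_mul]; simp only [bar, map_add, map_mul]; ring
  rw [e]
  push_cast
  ring

theorem dv_nsq (v : ι → ℝ) : dv v (nsq : MvPolynomial ι ℝ) = (2 : ℝ) • lin v := by
  rw [nsq, map_sum, lin_apply, Finset.smul_sum]
  refine Finset.sum_congr rfl fun i _ => ?_
  have := dv_lin v (Pi.single i 1)
  rw [lin_single, dotProduct_single_one] at this
  rw [dv_mul, this]
  simp only [smul_eq_C_mul, map_ofNat]; ring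

theorem dv_C (v : ι → ℝ) (c : ℝ) : dv v (C c : MvPolynomial ι ℝ) = 0 := by simp [dv_apply]

/-- The tangent line inequality for the convex function `t ↦ t ^ (-n)`. -/
theorem inv_pow_tangent {a b : ℝ} (ha : 0 < a) (hb : 0 < b) (n : ℕ) :
    a⁻¹ ^ n - n * a⁻¹ ^ (n + 1) * (b - a) ≤ b⁻¹ ^ n := by
  have hy : 0 < a / b := by positivity
  have h1 := one_add_mul_le_pow (a := a / b - 1) (by linarith) n
  rw [add_sub_cancel] at h1
  have h2 : 1 - b / a ≤ a / b - 1 := by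
    have e : a / b - 1 - (1 - b / a) = (a - b) ^ 2 / (a * b) := by field_simp
    have : 0 ≤ (a - b) ^ 2 / (a * b) := by positivity
    linarith
  have h3 : 1 + n * (1 - b / a) ≤ (a / b) ^ n :=
    le_trans (by gcongr) h1
  have h4 := mul_le_mul_of_nonneg_left h3 (by positivity : 0 ≤ a⁻¹ ^ n)
  have e1 : a⁻¹ ^ n * (a / b) ^ n = b⁻¹ ^ n := by
    rw [← mul_pow]; congr 1; field_simp
  have e2 : a⁻¹ ^ n * (1 + n * (1 - b / a)) = a⁻¹ ^ n - n * a⁻¹ ^ (n + 1) * (b - a) := by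
    rw [pow_succ]; field_simp; ring
  rwa [e1, e2] at h4

/-- Numerator of the barrier: `|q|² - |x|²`. -/
def bg (q : ι → ℝ) : MvPolynomial ι ℝ := C (q ⬝ᵥ q) - nsq

/-- Denominator of the barrier: `|x - q|²`. -/
def bs (q : ι → ℝ) : MvPolynomial ι ℝ := nsq - (2 : ℝ) • lin q + C (q ⬝ᵥ q)

theorem eval_bg (q x : ι → ℝ) : eval x (bg q) = q ⬝ᵥ q - x ⬝ᵥ x := by simp [bg, eval_nsq]

theorem eval_bs (q x : ι → ℝ) : eval x (bs q) = x ⬝ᵥ x - 2 * (q ⬝ᵥ x) + q ⬝ᵥ q := by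
  simp [bs, eval_nsq, eval_lin, smul_eval]

theorem eval_bs' (q x : ι → ℝ) : eval x (bs q) = (x - q) ⬝ᵥ (x - q) := by
  rw [eval_bs]; simp only [sub_dotProduct, dotProduct_sub, dotProduct_comm x q]; ring

theorem bs_pos {q x : ι → ℝ} (h : x ⬝ᵥ x < q ⬝ᵥ q) : 0 < eval x (bs q) := by
  rw [eval_bs']
  refine lt_of_le_of_ne (Finset.sum_nonneg fun i _ => mul_self_nonneg _) fun h0 => ?_
  have := dotProduct_self_eq_zero.1 h0.symm
  rw [sub_eq_zero] at this
  rw [this] at h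
  exact lt_irrefl _ h

/-- The barrier `(|q|² - |x|²) / |x - q|^(2n)` is subharmonic in the ball `|x| < |q|`, once `2n` is at
least the homogeneous dimension. For the reflection terms this uses that `|x|` is invariant and
that `t ↦ t^(-n)` is convex. -/
theorem LapF_bar_nonneg (hk : ∀ j, 0 ≤ D.k j) {q x : ι → ℝ} (h : x ⬝ᵥ x < q ⬝ᵥ q)
    (hx : D.reg x) {n : ℕ} (hn : Fintype.card ι + 2 * D.gam ≤ 2 * n) :
    0 ≤ D.LapF (bar (bg q) (bs q) n) x := by
  have hs := bs_pos h
  have hg : 0 < eval x (bg q) := by rw [eval_bg]; linarith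
  set s := eval x (bs q) with hsdef
  set g := eval x (bg q) with hgdef
  set ρ := s⁻¹ with hρ
  have hρ0 : 0 < ρ := inv_pos.2 hs
  have hsρ : s * ρ = 1 := mul_inv_cancel₀ hs.ne'
  have e1 : ∀ v, eval x (dv v (bg q)) = -2 * (v ⬝ᵥ x) := fun v => by
    rw [bg, map_sub, dv_C, dv_nsq]; simp [smul_eval, eval_lin]
  have e2 : ∀ v, eval x (dv v (dv v (bg q))) = -2 * (v ⬝ᵥ v) := fun v => by
    rw [bg, map_sub, dv_C, dv_nsq, map_sub, map_smul, dv_lin]; simp [smul_eval]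
  have e3 : ∀ v, eval x (dv v (bs q)) = 2 * (v ⬝ᵥ x - v ⬝ᵥ q) := fun v => by
    rw [bs, map_add, map_sub, dv_C, dv_nsq, map_smul, dv_lin]; simp [smul_eval, eval_lin]; ring
  have e4 : ∀ v, eval x (dv v (dv v (bs q))) = 2 * (v ⬝ᵥ v) := fun v => by
    rw [bs, map_add, map_sub, dv_C, dv_nsq, map_smul, dv_lin, map_add, map_sub, map_smul, map_smul,
      dv_lin, dv_C]
    simp [smul_eval]
  have P : ∀ i, pdd (bar (bg q) (bs q) n) x (Pi.single i 1)
      = -2 * ρ ^ n - 2 * n * ρ ^ (n + 1) * g + 8 * n * ρ ^ (n + 1) * (x i * x i - q i * x i)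
        + 4 * n * (n + 1) * g * ρ ^ (n + 2) * ((x i - q i) * (x i - q i)) := fun i => by
    rw [pdd_bar _ _ hs.ne']
    simp only [bar, map_mul, e1, e2, e3, e4, single_one_dotProduct, Pi.single_eq_same, ← hsdef,
      ← hgdef, ← hρ]
    ring
  have hsum : ∑ i, pdd (bar (bg q) (bs q) n) x (Pi.single i 1)
      = (4 * n - 2 * Fintype.card ι) * (ρ ^ n + n * g * ρ ^ (n + 1)) := by
    simp only [P, Finset.sum_add_distrib, Finset.sum_sub_distrib, ← Finset.mul_sum,
      Finset.sum_const, Finset.card_univ, nsmul_eq_mul]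
    have c1 : ∑ i, x i * x i - ∑ i, q i * x i = (s - g) / 2 := by
      change x ⬝ᵥ x - q ⬝ᵥ x = _
      rw [hsdef, hgdef, eval_bs, eval_bg]; ring
    have c2 : ∑ i, (x i - q i) * (x i - q i) = s := by
      rw [hsdef, eval_bs']; rfl
    rw [c1, c2]
    have p1 : s * ρ ^ (n + 1) = ρ ^ n := by rw [pow_succ']; rw [← mul_assoc, hsρ, one_mul]
    have p2 : s * ρ ^ (n + 2) = ρ ^ (n + 1) := by
      rw [pow_succ' ρ (n + 1), ← mul_assoc, hsρ, one_mul]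
    linear_combination (4 * n) * p1 + (4 * n * (n + 1) * g) * p2
  have R : ∀ j, -2 * (ρ ^ n + n * g * ρ ^ (n + 1)) ≤ D.rt j (bar (bg q) (bs q) n) x := by
    intro j
    have ht := hx j
    set t := D.a j ⬝ᵥ x with htdef
    have ht2 : 0 < t ^ 2 := by positivity
    have hgr : eval (D.r j x) (bg q) = g := by rw [eval_bg, r_dot_r, hgdef, eval_bg]
    have hsr : eval (D.r j x) (bs q) = s + 2 * t * (D.a j ⬝ᵥ q) := by
      rw [eval_bs, r_dot_r, hsdef, eval_bs, r_apply, dotProduct_sub, dotProduct_smul,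
        dotProduct_comm q (D.a j), smul_eq_mul, ← htdef]
      ring
    have hsr0 : 0 < eval (D.r j x) (bs q) := bs_pos (by rwa [r_dot_r])
    have tan := inv_pow_tangent hs hsr0 n
    rw [rt, fderiv_bar _ _ hs.ne', ← htdef]
    simp only [bar, map_mul, e1, e3, hgr, ← hsdef, ← hgdef, ← hρ, ← htdef]
    rw [← hρ] at tan
    have e : ∀ u w : ℝ, u / t - w / t ^ 2 = (t * u - w) / t ^ 2 := fun u w => by field_simp
    rw [e, le_div_iff₀ ht2]
    have tan2 := mul_le_mul_of_nonneg_left tan hg.le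
    have hd : eval (D.r j x) (bs q) - s = 2 * t * (D.a j ⬝ᵥ q) := by rw [hsr]; ring
    rw [hd] at tan2
    nlinarith
  have hR : ∑ j, 2 * D.k j * (-2 * (ρ ^ n + n * g * ρ ^ (n + 1)))
      ≤ ∑ j, 2 * D.k j * D.rt j (bar (bg q) (bs q) n) x :=
    Finset.sum_le_sum fun j _ => mul_le_mul_of_nonneg_left (R j) (by linarith [hk j])
  have hR2 : ∑ j, 2 * D.k j * (-2 * (ρ ^ n + n * g * ρ ^ (n + 1)))
      = -4 * D.gam * (ρ ^ n + n * g * ρ ^ (n + 1)) := by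
    rw [← Finset.sum_mul, ← Finset.mul_sum, gam]; ring
  have hpos : 0 ≤ ρ ^ n + n * g * ρ ^ (n + 1) := by positivity
  rw [LapF, hsum]
  nlinarith [mul_nonneg (sub_nonneg.2 hn) hpos]

end RootData

/-! ### Markov's inequality for homogeneous polynomials -/

namespace RootData
open MvPolynomial

variable {ι J : Type} [Fintype ι] [DecidableEq ι] [Fintype J] (D : RootData ι J)

theorem eval_smul_homog {p : MvPolynomial ι ℝ} {n : ℕ} (hp : p.IsHomogeneous n) (c : ℝ)
    (x : ι → ℝ) : eval (c • x) p = c ^ n * eval x p := by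
  rw [eval_eq', eval_eq', Finset.mul_sum]
  refine Finset.sum_congr rfl fun m hm => ?_
  have hdeg := hp.degree_eq_sum_deg_support hm
  have : ∏ i, (c • x) i ^ m i = c ^ n * ∏ i, x i ^ m i := by
    simp only [Pi.smul_apply, smul_eq_mul, mul_pow, Finset.prod_mul_distrib]
    rw [Finset.prod_pow_eq_pow_sum]
    congr 2
    rw [hdeg]
    exact (Finsupp.sum_fintype m (fun _ e => e) (by simp)).symm
  rw [this]; ring

theorem dot_self_nonneg (x : ι → ℝ) : 0 ≤ x ⬝ᵥ x :=
  Finset.sum_nonneg fun i _ => mul_self_nonneg (x i)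

/-- A homogeneous polynomial scales by the power of the radius. -/
theorem homog_bound [Nonempty ι] {p : MvPolynomial ι ℝ} {n : ℕ} (hp : p.IsHomogeneous n) {M : ℝ}
    (hM : ∀ x : ι → ℝ, x ⬝ᵥ x = 1 → |eval x p| ≤ M) {ρ : ℝ} (hρ : 0 ≤ ρ) {x : ι → ℝ}
    (hx : x ⬝ᵥ x ≤ ρ ^ 2) : |eval x p| ≤ ρ ^ n * M := by
  have hM0 : 0 ≤ M := (abs_nonneg _).trans
    (hM (Pi.single (Classical.arbitrary ι) 1) (by simp))
  by_cases h0 : x = 0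
  · subst h0
    rcases n with _ | n
    · rw [pow_zero, one_mul]
      have h1 : eval (0 : ι → ℝ) p = eval (Pi.single (Classical.arbitrary ι) 1 : ι → ℝ) p := by
        have := eval_smul_homog hp 0 (Pi.single (Classical.arbitrary ι) 1)
        simpa using this
      rw [h1]
      exact hM _ (by simp)
    · rw [eval_zero_homog hp, abs_zero]; positivity
  · have hpos : 0 < x ⬝ᵥ x := lt_of_le_of_ne (dot_self_nonneg x)
      fun h => h0 (dotProduct_self_eq_zero.1 h.symm)
    set t := Real.sqrt (x ⬝ᵥ x) with ht
    have ht0 : 0 < t := Real.sqrt_pos.2 hpos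
    have htt : t * t = x ⬝ᵥ x := Real.mul_self_sqrt hpos.le
    have hy : (t⁻¹ • x) ⬝ᵥ (t⁻¹ • x) = 1 := by
      rw [smul_dotProduct, dotProduct_smul, ← htt, smul_eq_mul, smul_eq_mul]; field_simp
    have e : eval x p = t ^ n * eval (t⁻¹ • x) p := by
      rw [← eval_smul_homog hp, smul_smul, mul_inv_cancel₀ ht0.ne', one_smul]
    rw [e, abs_mul, abs_of_nonneg (by positivity)]
    have htρ : t ≤ ρ := Real.sqrt_le_iff.2 ⟨hρ, hx⟩
    exact mul_le_mul (pow_le_pow_left₀ ht0.le htρ n) (hM _ hy) (abs_nonneg _) (by positivity)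

/-- The univariate Markov inequality at an endpoint. -/
theorem markov_endpoint {n : ℕ} {P : Polynomial ℝ} (hd : P.natDegree ≤ n) {M : ℝ}
    (hM : ∀ t ∈ Set.Icc (-1 : ℝ) 1, |P.eval t| ≤ M) :
    |P.derivative.eval 1| ≤ n ^ 2 * M := by
  have hM0 : 0 ≤ M := (abs_nonneg _).trans (hM 1 (by simp))
  have key : ∀ Q : Polynomial ℝ, Q.natDegree ≤ n → ∀ K : ℝ, 0 < K →
      (∀ t ∈ Set.Icc (-1 : ℝ) 1, |Q.eval t| ≤ K) → Q.derivative.eval 1 ≤ n ^ 2 * K := by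
    intro Q hQ K hK hb
    have h := Polynomial.Chebyshev.eval_iterate_derivative_le_of_forall_abs_le_one (n := n)
      (P := Polynomial.C K⁻¹ * Q) (k := 1) (x := 1) le_rfl
      (Polynomial.natDegree_le_iff_degree_le.1
        ((Polynomial.natDegree_C_mul_le _ _).trans hQ))
      (fun t ht => by
        rw [Polynomial.eval_mul, Polynomial.eval_C, abs_mul, abs_of_pos (inv_pos.2 hK)]
        calc K⁻¹ * |Q.eval t| ≤ K⁻¹ * K := by gcongr; exact hb t ht
          _ = 1 := inv_mul_cancel₀ hK.ne')
    simp only [Function.iterate_one, Polynomial.derivative_C_mul, Polynomial.eval_mul,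
      Polynomial.eval_C, Polynomial.Chebyshev.derivative_T_eval_one] at h
    rw [inv_mul_le_iff₀ hK] at h
    push_cast at h
    linarith
  have lim : ∀ Q : Polynomial ℝ, Q.natDegree ≤ n →
      (∀ t ∈ Set.Icc (-1 : ℝ) 1, |Q.eval t| ≤ M) → Q.derivative.eval 1 ≤ n ^ 2 * M := by
    intro Q hQ hb
    refine le_of_forall_pos_le_add fun ε hε => ?_
    have hn : (0 : ℝ) < n ^ 2 + 1 := by positivity
    have := key Q hQ (M + ε / (n ^ 2 + 1)) (by positivity)
      fun t ht => (hb t ht).trans (by have : 0 < ε / ((n : ℝ) ^ 2 + 1) := by positivity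
                                      linarith)
    have e : (n : ℝ) ^ 2 * (ε / (n ^ 2 + 1)) ≤ ε := by
      rw [← mul_div_assoc, div_le_iff₀ hn]; nlinarith
    linarith
  refine abs_le'.2 ⟨lim P hd hM, ?_⟩
  have := lim (-P) (by rwa [Polynomial.natDegree_neg]) fun t ht => by
    rw [Polynomial.eval_neg, abs_neg]; exact hM t ht
  simpa using this

/-- Markov's inequality on the unit ball, with a cubic (non-sharp) constant: apply the univariate
inequality on a segment of length `1 / (n + 1)` in direction `w`; leaving the ball by that much
increases a homogeneous polynomial of degree `n` at most by the factor `3`. -/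
theorem markov [Nonempty ι] {p : MvPolynomial ι ℝ} {n : ℕ} (hp : p.IsHomogeneous n) {M : ℝ}
    (hM : ∀ x : ι → ℝ, x ⬝ᵥ x = 1 → |eval x p| ≤ M) {z w : ι → ℝ} (hz : z ⬝ᵥ z ≤ 1)
    (hw : w ⬝ᵥ w ≤ 1) : |eval z (dv w p)| ≤ 6 * (n + 1) ^ 3 * M := by
  have hM0 : 0 ≤ M := (abs_nonneg _).trans
    (hM (Pi.single (Classical.arbitrary ι) 1) (by simp))
  set N : ℝ := n + 1 with hN
  have hN0 : 0 < N := by positivity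
  have hzw : z ⬝ᵥ w ≤ 1 := by
    have := dot_self_nonneg (z - w)
    simp only [sub_dotProduct, dotProduct_sub, dotProduct_comm w z] at this
    linarith
  let P : Polynomial ℝ := aeval (fun i => Polynomial.C (z i) +
    Polynomial.C (w i / (2 * N)) * (1 - Polynomial.X)) p
  have hPe : ∀ t : ℝ, P.eval t = eval (z + ((1 - t) / (2 * N)) • w) p := by
    intro t
    change Polynomial.evalRingHom t (aeval _ p) = _
    rw [aeval_def, hom_eval₂]
    change eval₂ _ _ p = eval₂ (RingHom.id ℝ) _ p
    congr 1
    · ext; simp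
    · funext i; simp; ring
  have hPd : P.natDegree ≤ n := by
    have := aeval_natDegree_le (m := n) (n := 1) p hp.totalDegree_le
      (fun i => Polynomial.C (z i) + Polynomial.C (w i / (2 * N)) * (1 - Polynomial.X))
      (fun i => by compute_degree)
    simpa using this
  have hb : ∀ t ∈ Set.Icc (-1 : ℝ) 1, |P.eval t| ≤ 3 * M := by
    intro t ht
    rw [hPe]
    set c := (1 - t) / (2 * N) with hc
    have hc0 : 0 ≤ c := div_nonneg (by linarith [ht.2]) (by positivity)
    have hc1 : c ≤ N⁻¹ := by
      rw [hc, div_le_iff₀ (by positivity)]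
      have : N⁻¹ * (2 * N) = 2 := by field_simp
      linarith [ht.1]
    have h1 : (z + c • w) ⬝ᵥ (z + c • w) ≤ (1 + N⁻¹) ^ 2 := by
      have e : (z + c • w) ⬝ᵥ (z + c • w) = z ⬝ᵥ z + 2 * c * (z ⬝ᵥ w) + c ^ 2 * (w ⬝ᵥ w) := by
        simp only [add_dotProduct, dotProduct_add, smul_dotProduct, dotProduct_smul, smul_eq_mul,
          dotProduct_comm w z]
        ring
      have h2 : (z + c • w) ⬝ᵥ (z + c • w) ≤ (1 + c) ^ 2 := by
        rw [e]; nlinarith [mul_le_mul_of_nonneg_left hzw hc0,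
          mul_le_mul_of_nonneg_left hw (sq_nonneg c)]
      exact h2.trans (pow_le_pow_left₀ (by positivity) (by linarith) 2)
    have h2 := homog_bound hp hM (by positivity) h1
    refine h2.trans (mul_le_mul_of_nonneg_right ?_ hM0)
    calc (1 + N⁻¹) ^ n ≤ (1 + N⁻¹) ^ (n + 1) :=
          pow_le_pow_right₀ (by have := inv_pos.2 hN0; linarith) (Nat.le_succ n)
      _ ≤ Real.exp 1 := by
          have := Real.one_add_inv_pow_le_exp (n := n + 1)
          rwa [Nat.cast_succ] at this
      _ ≤ 3 := Real.exp_one_lt_three.le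
  have hm := markov_endpoint hPd hb
  have hder : P.derivative.eval 1 = -(1 / (2 * N)) * eval z (dv w p) := by
    have h1 : HasDerivAt (fun t => P.eval t) (P.derivative.eval 1) 1 := P.hasDerivAt 1
    have h2 : HasDerivAt (fun t : ℝ => eval (z + ((1 - t) / (2 * N)) • w) p)
        (-(1 / (2 * N)) * eval z (dv w p)) 1 := by
      have hF : DifferentiableAt ℝ (fun y => eval y p) (z + (0 : ℝ) • w) :=
        (contDiff_eval (n := 1) p).differentiable (by simp) _
      have h3 := hasDerivAt_line hF
      have h4 : HasDerivAt (fun t : ℝ => (1 - t) / (2 * N)) (-(1 / (2 * N))) 1 := by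
        have := ((hasDerivAt_id (1 : ℝ)).const_sub 1).div_const (2 * N)
        refine this.congr_deriv ?_
        ring
      have h5 := HasDerivAt.comp (1 : ℝ) (h₂ := fun s : ℝ => eval (z + s • w) p)
        (h := fun t : ℝ => (1 - t) / (2 * N)) (by
          rw [show (1 - (1 : ℝ)) / (2 * N) = 0 by simp]; exact h3) h4
      refine h5.congr_deriv ?_
      rw [fderiv_eval, zero_smul, add_zero, mul_comm]
    rw [show (fun t => P.eval t) = fun t : ℝ => eval (z + ((1 - t) / (2 * N)) • w) p from
      funext hPe] at h1
    exact h1.unique h2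
  rw [hder, abs_mul, abs_neg, abs_of_pos (by positivity : 0 < 1 / (2 * N)), one_div,
    inv_mul_le_iff₀ (by positivity)] at hm
  refine hm.trans ?_
  have hn2 : (n : ℝ) ^ 2 ≤ N ^ 2 := pow_le_pow_left₀ (by positivity) (by linarith) 2
  calc 2 * N * ((n : ℝ) ^ 2 * (3 * M)) ≤ 2 * N * (N ^ 2 * (3 * M)) := by gcongr
    _ = 6 * N ^ 3 * M := by ring

end RootData

/-! ### A Nikolskii inequality -/

namespace RootData
open MvPolynomial

variable {ι J : Type} [Fintype ι] [DecidableEq ι] [Fintype J] (D : RootData ι J)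

theorem markov' [Nonempty ι] {p : MvPolynomial ι ℝ} {n : ℕ} (hp : p.IsHomogeneous n) {M : ℝ}
    (hM : ∀ x : ι → ℝ, x ⬝ᵥ x = 1 → |eval x p| ≤ M) {z v : ι → ℝ} (hz : z ⬝ᵥ z ≤ 1) {t : ℝ}
    (ht : 0 < t) (hv : v ⬝ᵥ v ≤ t ^ 2) : |eval z (dv v p)| ≤ 6 * (n + 1) ^ 3 * M * t := by
  have hw : (t⁻¹ • v) ⬝ᵥ (t⁻¹ • v) ≤ 1 := by
    rw [smul_dotProduct, dotProduct_smul, smul_eq_mul, smul_eq_mul, ← mul_assoc, ← mul_inv,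
      inv_mul_le_iff₀ (by positivity)]
    linarith
  have h := markov hp hM hz hw
  rw [dv_smul, smul_eval, abs_mul, abs_of_pos (inv_pos.2 ht), inv_mul_le_iff₀ ht] at h
  linarith

theorem homog_lip [Nonempty ι] {p : MvPolynomial ι ℝ} {n : ℕ} (hp : p.IsHomogeneous n) {M : ℝ}
    (hM : ∀ x : ι → ℝ, x ⬝ᵥ x = 1 → |eval x p| ≤ M) {x y : ι → ℝ} (hx : x ⬝ᵥ x ≤ 1)
    (hy : y ⬝ᵥ y ≤ 1) {t : ℝ} (ht : 0 < t) (hv : (y - x) ⬝ᵥ (y - x) ≤ t ^ 2) :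
    |eval y p - eval x p| ≤ 6 * (n + 1) ^ 3 * M * t := by
  have hd : ∀ s : ℝ, HasDerivAt (fun s : ℝ => eval (x + s • (y - x)) p)
      (eval (x + s • (y - x)) (dv (y - x) p)) s := fun s => by
    rw [← fderiv_eval]
    exact hasDerivAt_line ((contDiff_eval (n := 1) p).differentiable (by simp) _)
  have hxy : x ⬝ᵥ y ≤ 1 := by
    have := dot_self_nonneg (x - y)
    simp only [sub_dotProduct, dotProduct_sub, dotProduct_comm y x] at this
    linarith
  have := norm_image_sub_le_of_norm_deriv_le_segment_01' (f := fun s : ℝ => eval (x + s • (y - x)) p)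
    (C := 6 * (n + 1) ^ 3 * M * t) (fun s _ => (hd s).hasDerivWithinAt) (fun s hs => by
      rw [Real.norm_eq_abs]
      refine markov' hp hM ?_ ht hv
      have e : (x + s • (y - x)) ⬝ᵥ (x + s • (y - x))
          = (1 - s) ^ 2 * (x ⬝ᵥ x) + 2 * (s * (1 - s)) * (x ⬝ᵥ y) + s ^ 2 * (y ⬝ᵥ y) := by
        simp only [add_dotProduct, dotProduct_add, smul_dotProduct, dotProduct_smul, smul_eq_mul,
          sub_dotProduct, dotProduct_sub, dotProduct_comm y x]
        ring
      rw [e]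
      have h1 := mul_le_mul_of_nonneg_left hxy (mul_nonneg hs.1 (by linarith [hs.2] : 0 ≤ 1 - s))
      nlinarith [mul_le_mul_of_nonneg_left hx (sq_nonneg (1 - s)),
        mul_le_mul_of_nonneg_left hy (sq_nonneg s)])
  simpa using this

/-- The functional `lam` charges every spherical cap: comparison with the subharmonic barrier
whose pole lies slightly outside the ball, behind the centre `p₀` of the cap. -/
theorem lam_cap [Nonempty ι] (hD : D.MaxPrin) {A : ℕ}
    (hA : Fintype.card ι + 2 * D.gam ≤ 2 * A) {p₀ : ι → ℝ} (hp₀ : p₀ ⬝ᵥ p₀ = 1)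
    {δ : ℝ} (hδ : 0 < δ) (hδ1 : δ ≤ 1) {f : MvPolynomial ι ℝ}
    (hf : ∀ x : ι → ℝ, x ⬝ᵥ x = 1 → 0 ≤ eval x f) {m : ℝ} (hm : 0 ≤ m)
    (hfm : ∀ x : ι → ℝ, x ⬝ᵥ x = 1 → (x - p₀) ⬝ᵥ (x - p₀) ≤ δ ^ 2 → m ≤ eval x f) :
    m * ((((δ ^ 2 / 4) ^ A / 6) ^ 2) ^ A / (6 * 4 ^ A)) ≤ lam hD f := by
  -- With this `ε` the barrier off the cap is at most half of its value at the origin.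
  set ε := (δ ^ 2 / 4) ^ A / 6 with hε
  have hε0 : 0 < ε := by positivity
  have hε1 : ε ≤ 1 := by
    have : (δ ^ 2 / 4) ^ A ≤ 1 := pow_le_one₀ (by positivity) (by nlinarith)
    rw [hε]; linarith
  set τ := 1 + ε with hτ
  have hττ : (τ • p₀) ⬝ᵥ (τ • p₀) = τ ^ 2 := by
    rw [smul_dotProduct, dotProduct_smul, hp₀]; simp [sq]
  have hτ1 : 1 < τ ^ 2 := by nlinarith
  have hτ4 : τ ^ 2 ≤ 4 := by nlinarith
  have hgap : τ ^ 2 - 1 ≤ 3 * ε := by nlinarith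
  set B := bar (bg (τ • p₀)) (bs (τ • p₀)) A with hB
  set Bm : ℝ := 3 * ((ε ^ 2)⁻¹) ^ A with hBm
  have hBm0 : 0 < Bm := by positivity
  set b : ℝ := (τ ^ 2 - 1) * ((δ ^ 2)⁻¹) ^ A with hb
  have hb0 : 0 ≤ b := mul_nonneg (by linarith) (by positivity)
  have hb1 : b ≤ (4⁻¹) ^ A / 2 := by
    calc b ≤ 3 * ε * ((δ ^ 2)⁻¹) ^ A := mul_le_mul_of_nonneg_right hgap (by positivity)
      _ = (δ ^ 2 / 4 * (δ ^ 2)⁻¹) ^ A / 2 := by rw [hε, mul_pow]; ring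
      _ = (4⁻¹) ^ A / 2 := by
          have : δ ^ 2 / 4 * (δ ^ 2)⁻¹ = 4⁻¹ := by field_simp
          rw [this]
  have hsx : ∀ x : ι → ℝ, x ⬝ᵥ x = 1 →
      eval x (bs (τ • p₀)) = ε ^ 2 + τ * ((x - p₀) ⬝ᵥ (x - p₀)) := by
    intro x hx
    rw [eval_bs, hττ, hx, smul_dotProduct, smul_eq_mul]
    simp only [sub_dotProduct, dotProduct_sub, hx, hp₀, dotProduct_comm x p₀]
    rw [hτ]; ring
  have hBx : ∀ x : ι → ℝ, x ⬝ᵥ x = 1 → B x = (τ ^ 2 - 1) * (eval x (bs (τ • p₀)))⁻¹ ^ A := by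
    intro x hx
    rw [hB, bar, eval_bg, hττ, hx]
  have hBle : ∀ x : ι → ℝ, x ⬝ᵥ x = 1 → B x ≤ Bm := by
    intro x hx
    rw [hBx x hx, hsx x hx]
    have h0 := dot_self_nonneg (x - p₀)
    have h1 : ε ^ 2 ≤ ε ^ 2 + τ * ((x - p₀) ⬝ᵥ (x - p₀)) := by nlinarith
    calc (τ ^ 2 - 1) * (ε ^ 2 + τ * ((x - p₀) ⬝ᵥ (x - p₀)))⁻¹ ^ A
        ≤ 3 * ((ε ^ 2)⁻¹) ^ A := by
          gcongr
          linarith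
      _ = Bm := rfl
  have hBoff : ∀ x : ι → ℝ, x ⬝ᵥ x = 1 → δ ^ 2 < (x - p₀) ⬝ᵥ (x - p₀) → B x ≤ b := by
    intro x hx hcap
    rw [hBx x hx, hsx x hx]
    have h1 : δ ^ 2 ≤ ε ^ 2 + τ * ((x - p₀) ⬝ᵥ (x - p₀)) := by nlinarith
    have h2 : 0 ≤ τ ^ 2 - 1 := by linarith
    have h3 : 0 < ε ^ 2 + τ * ((x - p₀) ⬝ᵥ (x - p₀)) := lt_of_lt_of_le (by positivity) h1
    exact mul_le_mul_of_nonneg_left (pow_le_pow_left₀ (inv_nonneg.2 h3.le)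
      (inv_anti₀ (by positivity) h1) A) h2
  have hB0 : (4⁻¹) ^ A ≤ B 0 := by
    rw [hB, bar, eval_bg, eval_bs, hττ]
    simp only [dotProduct_zero, mul_zero, sub_zero, zero_add]
    calc ((4 : ℝ)⁻¹) ^ A ≤ (τ ^ 2)⁻¹ ^ A := by gcongr
      _ ≤ τ ^ 2 * (τ ^ 2)⁻¹ ^ A := le_mul_of_one_le_left (by positivity) hτ1.le
  obtain ⟨H, hH, hHf⟩ := D.dirichlet hD.k_nonneg f
  have hlam : lam hD f = eval 0 H := lam_eq hD hH hHf
  have hcd : ∀ x : ι → ℝ, x ⬝ᵥ x ≤ 1 → ContDiffAt ℝ 2 B x := fun x hx =>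
    bar_contDiffAt _ _ (bs_pos (by rw [hττ]; linarith)).ne'
  have hcdH : ∀ x : ι → ℝ, ContDiffAt ℝ 2 (fun y => eval y (-H - C (m / Bm * b))) x := fun x =>
    (contDiff_eval _).contDiffAt
  have mp := D.max_principle hD.k_nonneg
    (F := (m / Bm) • B + fun y => eval y (-H - C (m / Bm * b))) (m := 0) (x := 0)
    (fun x hx => (((hcd x hx).const_smul (m / Bm)).add (hcdH x)).continuousAt.continuousWithinAt)
    (fun x hx => ((hcd x hx.le).const_smul (m / Bm)).add (hcdH x))
    (fun x hx hr => by
      rw [D.LapF_add (F := (m / Bm) • B) ((hcd x hx.le).const_smul (m / Bm)) (hcdH x),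
        LapF_smul, D.LapF_eval _ hr, map_sub, map_neg, hH, D.lap_homog_zero (isHomogeneous_C ι _) (by norm_num)]
      have := D.LapF_bar_nonneg hD.k_nonneg (q := τ • p₀) (x := x) (by rw [hττ]; linarith) hr hA
      have h2 : 0 ≤ m / Bm := by positivity
      simpa using mul_nonneg h2 this)
    (fun x hx => by
      simp only [Pi.add_apply, Pi.smul_apply, smul_eq_mul, map_sub, map_neg, eval_C, hHf x hx]
      have h2 : 0 ≤ m / Bm := by positivity
      by_cases hcap : (x - p₀) ⬝ᵥ (x - p₀) ≤ δ ^ 2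
      · have h3 := mul_le_mul_of_nonneg_left (hBle x hx) h2
        rw [div_mul_cancel₀ _ hBm0.ne'] at h3
        have := hfm x hx hcap
        have := mul_nonneg h2 hb0
        linarith
      · have h3 := mul_le_mul_of_nonneg_left (hBoff x hx (not_le.1 hcap)) h2
        have := hf x hx
        linarith)
    (by simp)
  simp only [Pi.add_apply, Pi.smul_apply, smul_eq_mul, map_sub, map_neg, eval_C] at mp
  rw [hlam]
  have h2 : 0 ≤ m / Bm := by positivity
  have h3 : m / Bm * ((4⁻¹) ^ A / 2) ≤ m / Bm * (B 0 - b) :=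
    mul_le_mul_of_nonneg_left (by linarith) h2
  have h4 : m * ((ε ^ 2) ^ A / (6 * 4 ^ A)) = m / Bm * ((4⁻¹) ^ A / 2) := by
    rw [hBm, inv_pow, inv_pow]; field_simp; ring
  linarith

/-- The supremum over the sphere of a homogeneous polynomial of degree `n` is bounded by its
quadratic mean, up to a factor of polynomial growth in `n`. -/
theorem nikolskii [Nonempty ι] (hD : D.MaxPrin) : ∃ (c : ℝ) (K : ℕ), 0 ≤ c ∧
    ∀ (n : ℕ) (p : MvPolynomial ι ℝ), p.IsHomogeneous n → ∀ x : ι → ℝ, x ⬝ᵥ x = 1 →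
      eval x p ^ 2 ≤ c * (n + 1) ^ K * lam hD (p ^ 2) := by
  obtain ⟨A₀, hA₀⟩ := exists_nat_ge (Fintype.card ι + 2 * D.gam)
  set A := A₀ + 1 with hAdef
  have hA : Fintype.card ι + 2 * D.gam ≤ 2 * (A : ℝ) := by
    rw [hAdef]; push_cast; have : (0 : ℝ) ≤ A₀ := by positivity
    linarith
  refine ⟨4 * (6 * 4 ^ A * (6 * 576 ^ A) ^ (2 * A)), 12 * A * A, by positivity, ?_⟩
  intro n p hp x hx
  have hS : IsCompact {x : ι → ℝ | x ⬝ᵥ x = 1} :=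
    isCompact_le_one.of_isClosed_subset (isClosed_eq (Continuous.dotProduct continuous_id
      continuous_id) continuous_const) fun y hy => le_of_eq hy
  obtain ⟨p₀, hp₀, hmax⟩ := hS.exists_isMaxOn ⟨x, hx⟩
    (contDiff_eval (n := 0) p).continuous.abs.continuousOn
  set M := |eval p₀ p| with hMdef
  have hM : ∀ y : ι → ℝ, y ⬝ᵥ y = 1 → |eval y p| ≤ M := fun y hy => hmax hy
  have hM0 : 0 ≤ M := abs_nonneg _
  set N : ℝ := n + 1 with hN
  have hN1 : 1 ≤ N := by rw [hN]; linarith [(Nat.cast_nonneg n : (0 : ℝ) ≤ n)]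
  -- By Markov's inequality `|p| ≥ M / 2` on the cap of radius `δ` around the maximum.
  set δ : ℝ := (12 * N ^ 3)⁻¹ with hδ
  have hδ0 : 0 < δ := by positivity
  have hδ1 : δ ≤ 1 := inv_le_one_of_one_le₀ (by nlinarith [one_le_pow₀ hN1 (n := 3)])
  have cap := D.lam_cap hD hA hp₀ hδ0 hδ1 (f := p ^ 2) (m := M ^ 2 / 4)
    (fun y _ => by rw [map_pow]; positivity) (by positivity) (fun y hy hyc => by
      have h1 := homog_lip hp hM (le_of_eq hp₀) (le_of_eq hy) hδ0 hyc
      have h2 : 6 * N ^ 3 * M * δ = M / 2 := by rw [hδ]; field_simp; ring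
      rw [← hN, h2, abs_sub_comm] at h1
      have h3 : M / 2 ≤ |eval y p| := by
        have := abs_sub_abs_le_abs_sub (eval p₀ p) (eval y p)
        linarith
      rw [map_pow, ← sq_abs (eval y p)]
      nlinarith)
  have hle : eval x p ^ 2 ≤ M ^ 2 := by
    rw [← sq_abs]; exact pow_le_pow_left₀ (abs_nonneg _) (hM x hx) 2
  refine hle.trans ?_
  set c : ℝ := (((δ ^ 2 / 4) ^ A / 6) ^ 2) ^ A / (6 * 4 ^ A) with hc
  have hc0 : 0 < c := by positivity
  have e : (6 * 4 ^ A * (6 * 576 ^ A) ^ (2 * A)) * N ^ (12 * A * A) = c⁻¹ := by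
    have e1 : δ ^ 2 / 4 = (576 * N ^ 6)⁻¹ := by rw [hδ]; field_simp; norm_num
    rw [hc, e1, inv_div, div_eq_mul_inv, mul_assoc]
    congr 1
    have e2 : ((576 * N ^ 6)⁻¹ ^ A / 6)⁻¹ = 6 * 576 ^ A * N ^ (6 * A) := by
      rw [inv_pow, mul_pow, ← pow_mul]; field_simp
    rw [← pow_mul, ← inv_pow, e2, mul_pow _ (N ^ _), ← pow_mul N]
    congr 2
    ring
  rw [mul_assoc 4, e]
  have h5 : M ^ 2 = 4 * c⁻¹ * (M ^ 2 / 4 * c) := by field_simp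
  rw [h5]
  gcongr

end RootData

/-! ### Interior derivative estimates for harmonic polynomials -/

namespace RootData
open MvPolynomial

variable {ι J : Type} [Fintype ι] [DecidableEq ι] [Fintype J] (D : RootData ι J)

/-- Iterated partial derivatives, along a list of coordinate directions. -/
def pds : List ι → MvPolynomial ι ℝ →ₗ[ℝ] MvPolynomial ι ℝ
  | [] => LinearMap.id
  | i :: β => pds β ∘ₗ (pderiv i : Derivation ℝ (MvPolynomial ι ℝ) (MvPolynomial ι ℝ)).toLinearMap

theorem pds_cons (i : ι) (β : List ι) (f : MvPolynomial ι ℝ) :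
    pds (i :: β) f = pds β (pderiv i f) := rfl

theorem dv_single (i : ι) (f : MvPolynomial ι ℝ) : dv (Pi.single i 1) f = pderiv i f := by
  simp [dv_apply, Pi.single_apply]

theorem pds_homog [Nonempty ι] (β : List ι) : ∀ {n : ℕ} {p : MvPolynomial ι ℝ} {M : ℝ},
    p.IsHomogeneous n → (∀ x : ι → ℝ, x ⬝ᵥ x = 1 → |eval x p| ≤ M) →
    (pds β p).IsHomogeneous (n - β.length) ∧
      ∀ x : ι → ℝ, x ⬝ᵥ x = 1 → |eval x (pds β p)| ≤ (6 * (n + 1) ^ 3) ^ β.length * M := by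
  induction β with
  | nil => intro n p M hp hM; simpa [pds] using ⟨hp, hM⟩
  | cons i β ih =>
    intro n p M hp hM
    have hM0 : 0 ≤ M := (abs_nonneg _).trans
      (hM (Pi.single (Classical.arbitrary ι) 1) (by simp))
    have h1 : ∀ x : ι → ℝ, x ⬝ᵥ x = 1 → |eval x (pderiv i p)| ≤ 6 * (n + 1) ^ 3 * M := by
      intro x hx
      rw [← dv_single]
      exact markov hp hM hx.le (by simp)
    obtain ⟨h2, h3⟩ := ih hp.pderiv h1
    rw [List.length_cons, pds_cons]
    refine ⟨by rwa [show n - (β.length + 1) = n - 1 - β.length by omega], fun x hx => ?_⟩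
    refine (h3 x hx).trans ?_
    have h4 : (((n - 1 : ℕ) : ℝ)) ≤ n := by exact_mod_cast Nat.sub_le n 1
    rw [pow_succ (6 * ((n : ℝ) + 1) ^ 3), mul_assoc (_ ^ β.length)]
    gcongr

theorem summable_growth (k : ℕ) {r : ℝ} (h0 : 0 < r) (h1 : r < 1) :
    Summable fun n : ℕ => ((n : ℝ) + 1) ^ k * r ^ n := by
  have h := (summable_nat_add_iff 1).2 (summable_pow_mul_geometric_of_norm_lt_one k
    (r := r) (by rwa [Real.norm_eq_abs, abs_of_pos h0]))
  refine (h.mul_left r⁻¹).congr fun n => ?_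
  push_cast
  rw [pow_succ]
  field_simp

/-- Interior estimates: the derivatives of a harmonic polynomial inside the ball are controlled
by its maximum over the sphere, uniformly in the degree. -/
theorem deriv_bound [Nonempty ι] (hD : D.MaxPrin) (β : List ι) {r : ℝ} (hr0 : 0 < r)
    (hr1 : r < 1) : ∃ B : ℝ, ∀ (H : MvPolynomial ι ℝ) (M : ℝ), D.lap H = 0 →
      (∀ x : ι → ℝ, x ⬝ᵥ x = 1 → |eval x H| ≤ M) →
      ∀ x : ι → ℝ, x ⬝ᵥ x ≤ r ^ 2 → |eval x (pds β H)| ≤ B * M := by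
  obtain ⟨c, K, hc, hnik⟩ := D.nikolskii hD
  set b := β.length with hb
  set a : ℕ → ℝ := fun n => r⁻¹ ^ b * 6 ^ b * (1 + c) * (((n : ℝ) + 1) ^ (3 * b + K) * r ^ n)
    with ha
  have hs : Summable a := (summable_growth _ hr0 hr1).mul_left _
  have ha0 : ∀ n, 0 ≤ a n := fun n => by positivity
  refine ⟨∑' n, a n, fun H M hH hM x hx => ?_⟩
  have hM0 : 0 ≤ M := (abs_nonneg _).trans
    (hM (Pi.single (Classical.arbitrary ι) 1) (by simp))
  have comp : ∀ n, |eval x (pds β (homogeneousComponent n H))| ≤ a n * M := by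
    intro n
    have hh := homogeneousComponent_isHomogeneous n H
    have h1 : ∀ y : ι → ℝ, y ⬝ᵥ y = 1 →
        |eval y (homogeneousComponent n H)| ≤ (1 + c) * (n + 1) ^ K * M := by
      intro y hy
      refine abs_le_of_sq_le_sq ?_ (by positivity)
      have hN : (1 : ℝ) ≤ (n + 1) ^ K :=
        one_le_pow₀ (by linarith [(Nat.cast_nonneg n : (0 : ℝ) ≤ n)])
      calc eval y (homogeneousComponent n H) ^ 2
          ≤ c * (n + 1) ^ K * lam hD (homogeneousComponent n H ^ 2) := hnik n _ hh y hy
        _ ≤ c * (n + 1) ^ K * M ^ 2 := by gcongr; exact lam_sq_comp hD hH hM n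
        _ ≤ ((1 + c) * (n + 1) ^ K) ^ 2 * M ^ 2 := by
            gcongr
            nlinarith [mul_nonneg hc (by linarith : (0 : ℝ) ≤ (n + 1) ^ K)]
        _ = ((1 + c) * (n + 1) ^ K * M) ^ 2 := by ring
    obtain ⟨h2, h3⟩ := pds_homog β hh h1
    refine (homog_bound h2 h3 hr0.le hx).trans ?_
    have h4 : r ^ (n - b) ≤ r⁻¹ ^ b * r ^ n := by
      by_cases hnb : b ≤ n
      · conv_rhs => rw [← Nat.sub_add_cancel hnb, pow_add]
        rw [inv_pow, mul_left_comm, inv_mul_cancel₀ (by positivity), mul_one]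
      · rw [show n - b = 0 by omega, pow_zero, inv_pow, inv_mul_eq_div,
          one_le_div (by positivity)]
        exact pow_le_pow_of_le_one hr0.le hr1.le (by omega)
    calc r ^ (n - b) * ((6 * ((n : ℝ) + 1) ^ 3) ^ b * ((1 + c) * (n + 1) ^ K * M))
        ≤ r⁻¹ ^ b * r ^ n * ((6 * ((n : ℝ) + 1) ^ 3) ^ b * ((1 + c) * (n + 1) ^ K * M)) := by
          gcongr
      _ = a n * M := by simp only [ha, mul_pow, ← pow_mul, pow_add]; ring
  have e : eval x (pds β H) = ∑ n ∈ Finset.range (H.totalDegree + 1),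
      eval x (pds β (homogeneousComponent n H)) := by
    conv_lhs => rw [← sum_homogeneousComponent H]
    rw [map_sum, map_sum]
  rw [e]
  calc _ ≤ ∑ n ∈ Finset.range (H.totalDegree + 1),
        |eval x (pds β (homogeneousComponent n H))| := Finset.abs_sum_le_sum_abs _ _
    _ ≤ ∑ n ∈ Finset.range (H.totalDegree + 1), a n * M := Finset.sum_le_sum fun n _ => comp n
    _ ≤ (∑' n, a n) * M := by
        rw [← Finset.sum_mul]
        exact mul_le_mul_of_nonneg_right (hs.sum_le_tsum _ fun n _ => ha0 n) hM0

end RootData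

/-! ### Smoothness of harmonic functions in the unit ball -/

namespace RootData
open MvPolynomial

variable {ι J : Type} [Fintype ι] [DecidableEq ι] [Fintype J] (D : RootData ι J)

/-- A pointwise limit of polynomials all of whose derivatives are uniformly Cauchy is smooth. -/
theorem contDiffOn_of_limit {s : Set (ι → ℝ)} (hs : IsOpen s) (m : ℕ) :
    ∀ (f : ℕ → MvPolynomial ι ℝ) (u : (ι → ℝ) → ℝ),
      (∀ β, UniformCauchySeqOn (fun k x => eval x (pds β (f k))) atTop s) →
      (∀ x ∈ s, Tendsto (fun k => eval x (f k)) atTop (𝓝 (u x))) → ContDiffOn ℝ m u s := by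
  induction m with
  | zero =>
    intro f u hf hu
    have h := (hf []).tendstoUniformlyOn_of_tendsto hu
    rw [Nat.cast_zero, contDiffOn_zero]
    exact h.continuousOn (Eventually.frequently (Eventually.of_forall fun k =>
      (contDiff_eval (n := 0) (f k)).continuous.continuousOn))
  | succ m ih =>
    intro f u hf hu
    have hlim : ∀ i, ∀ x, ∃ y, x ∈ s → Tendsto (fun k => eval x (pderiv i (f k))) atTop (𝓝 y) := by
      intro i x
      by_cases hx : x ∈ s
      · obtain ⟨y, hy⟩ := cauchySeq_tendsto_of_complete ((hf [i]).cauchySeq hx)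
        exact ⟨y, fun _ => hy⟩
      · exact ⟨0, fun h => absurd h hx⟩
    choose g hg using hlim
    have hgC : ∀ i, ContDiffOn ℝ m (g i) s := fun i =>
      ih (fun k => pderiv i (f k)) (g i) (fun β => hf (i :: β)) (hg i)
    let L : (ι → ℝ) →L[ℝ] ((ι → ℝ) →L[ℝ] ℝ) :=
      ∑ i, (ContinuousLinearMap.proj i : (ι → ℝ) →L[ℝ] ℝ).smulRight
        (ContinuousLinearMap.proj i : (ι → ℝ) →L[ℝ] ℝ)
    have hL : ∀ c, L c = ∑ i, c i • (ContinuousLinearMap.proj i : (ι → ℝ) →L[ℝ] ℝ) := fun c => by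
      simp [L, sum_apply]
    have hunif : TendstoUniformlyOn (fun k x => fun i => eval x (pderiv i (f k)))
        (fun x i => g i x) atTop s := by
      rw [Metric.tendstoUniformlyOn_iff]
      intro ε hε
      have : ∀ i, ∀ᶠ k in atTop, ∀ x ∈ s, dist (g i x) (eval x (pderiv i (f k))) < ε := fun i =>
        Metric.tendstoUniformlyOn_iff.1 ((hf [i]).tendstoUniformlyOn_of_tendsto (hg i)) ε hε
      filter_upwards [eventually_all.2 this] with k hk x hx
      exact (dist_pi_lt_iff hε).2 fun i => hk i x hx
    have hder : ∀ x ∈ s, HasFDerivAt u (L fun i => g i x) x := fun x hx =>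
      hasFDerivAt_of_tendstoUniformlyOn hs
        (f := fun k x => eval x (f k))
        (L.uniformContinuous.comp_tendstoUniformlyOn hunif)
        (fun k x _ => by
          simp only [Function.comp_apply, hL]
          exact hasFDerivAt_eval (f k) x) hu hx
    rw [Nat.cast_succ, contDiffOn_succ_iff_hasFDerivWithinAt_of_uniqueDiffOn hs.uniqueDiffOn]
    refine ⟨fun h => absurd h (by simp), fun x => L fun i => g i x,
      L.contDiff.comp_contDiffOn (contDiffOn_pi.2 hgC), fun x hx => (hder x hx).hasFDerivWithinAt⟩

/-- Stone–Weierstrass on the unit sphere. -/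
theorem exists_poly_near {v : (ι → ℝ) → ℝ} (hv : ContinuousOn v {x | x ⬝ᵥ x ≤ 1}) {ε : ℝ}
    (hε : 0 < ε) : ∃ f : MvPolynomial ι ℝ, ∀ x : ι → ℝ, x ⬝ᵥ x = 1 → |v x - eval x f| ≤ ε := by
  have hS : IsCompact {x : ι → ℝ | x ⬝ᵥ x = 1} :=
    isCompact_le_one.of_isClosed_subset (isClosed_eq (Continuous.dotProduct continuous_id
      continuous_id) continuous_const) fun y hy => le_of_eq hy
  have : CompactSpace {x : ι → ℝ | x ⬝ᵥ x = 1} := isCompact_iff_compactSpace.1 hS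
  let X' : ι → C({x : ι → ℝ | x ⬝ᵥ x = 1}, ℝ) := fun i =>
    ⟨fun x => x.1 i, (continuous_apply i).comp continuous_subtype_val⟩
  have hX : ∀ (f : MvPolynomial ι ℝ) (x : {x : ι → ℝ | x ⬝ᵥ x = 1}), aeval X' f x = eval x.1 f := by
    intro f x
    induction f using MvPolynomial.induction_on with
    | C a => simp
    | add p q hp hq => simp [hp, hq]
    | mul_X p i hp => simp [hp, X']
  obtain ⟨⟨_, f, rfl⟩, hf⟩ := ContinuousMap.exists_mem_subalgebra_near_continuous_of_separatesPoints
    (aeval X' : MvPolynomial ι ℝ →ₐ[ℝ] _).range (by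
      intro x y hxy
      obtain ⟨i, hi⟩ : ∃ i, x.1 i ≠ y.1 i := by
        by_contra! h
        exact hxy (Subtype.ext (funext h))
      exact ⟨_, ⟨X' i, ⟨X i, by simp⟩, rfl⟩, hi⟩)
    (fun x => v x.1) (continuousOn_iff_continuous_domRestrict.1
      (hv.mono fun x (hx : x ⬝ᵥ x = 1) => le_of_eq hx)) ε hε
  refine ⟨f, fun x hx => ?_⟩
  have := hf ⟨x, hx⟩
  rw [Real.norm_eq_abs, abs_sub_comm] at this
  refine le_of_lt ?_
  rw [← hX f ⟨x, hx⟩]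
  exact this

/-- Harmonic functions on the unit ball that are continuous up to the boundary are smooth: they
are limits of harmonic polynomials, uniformly with all derivatives on smaller balls. -/
theorem smooth_ball [Nonempty ι] (hk : ∀ j, 0 ≤ D.k j) {v : (ι → ℝ) → ℝ}
    (hc : ContinuousOn v {x | x ⬝ᵥ x ≤ 1}) (h2 : ∀ x, x ⬝ᵥ x < 1 → ContDiffAt ℝ 2 v x)
    (hL : ∀ x, x ⬝ᵥ x < 1 → D.reg x → D.LapF v x = 0) {x : ι → ℝ} (hx : x ⬝ᵥ x < 1) :
    ContDiffAt ℝ (⊤ : ℕ∞) v x := by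
  have hD := D.maxPrin hk
  have happ : ∀ k : ℕ, ∃ H : MvPolynomial ι ℝ, D.lap H = 0 ∧
      ∀ x : ι → ℝ, x ⬝ᵥ x ≤ 1 → |v x - eval x H| ≤ 1 / ((k : ℝ) + 1) := by
    intro k
    obtain ⟨f, hf⟩ := exists_poly_near hc (ε := 1 / ((k : ℝ) + 1)) (by positivity)
    obtain ⟨H, hH, hHf⟩ := D.dirichlet hk f
    have cdH : ∀ (f : MvPolynomial ι ℝ) (x : ι → ℝ), ContDiffAt ℝ 2 (fun y => eval y f) x :=
      fun f x => (contDiff_eval f).contDiffAt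
    refine ⟨H, hH, fun x hx => abs_le'.2 ⟨?_, ?_⟩⟩
    · have := D.max_principle hk (F := v + fun y => eval y (-H)) (m := 1 / ((k : ℝ) + 1))
        (hc.add (contDiff_eval (n := 0) _).continuous.continuousOn)
        (fun y hy => (h2 y hy).add (cdH _ y))
        (fun y hy hr => by
          rw [D.LapF_add (h2 y hy) (cdH _ y), hL y hy hr, D.LapF_eval _ hr, map_neg, hH]; simp)
        (fun y hy => by
          have := (abs_le'.1 (hf y hy)).1
          simp only [Pi.add_apply, map_neg, hHf y hy]
          linarith) hx
      simp only [Pi.add_apply, map_neg] at this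
      linarith
    · have := D.max_principle hk (F := (-1 : ℝ) • v + fun y => eval y H) (m := 1 / ((k : ℝ) + 1))
        ((hc.const_smul (-1 : ℝ)).add (contDiff_eval (n := 0) _).continuous.continuousOn)
        (fun y hy => ((h2 y hy).const_smul (-1 : ℝ)).add (cdH _ y))
        (fun y hy hr => by
          rw [D.LapF_add (F := (-1 : ℝ) • v) ((h2 y hy).const_smul (-1 : ℝ)) (cdH _ y), LapF_smul,
            hL y hy hr, D.LapF_eval _ hr, hH]; simp)
        (fun y hy => by
          have := (abs_le'.1 (hf y hy)).2
          simp only [Pi.add_apply, Pi.smul_apply, smul_eq_mul, hHf y hy]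
          linarith) hx
      simp only [Pi.add_apply, Pi.smul_apply, smul_eq_mul] at this
      linarith
  choose H hH hHv using happ
  obtain ⟨r, hxr, hr1⟩ := exists_between
    ((Real.sqrt_lt' one_pos).2 (by simpa using hx) : Real.sqrt (x ⬝ᵥ x) < 1)
  have hr0 : 0 < r := lt_of_le_of_lt (Real.sqrt_nonneg _) hxr
  have hxr2 : x ⬝ᵥ x < r ^ 2 := (Real.sqrt_lt' hr0).1 hxr
  have hr2 : r ^ 2 < 1 := by nlinarith
  have hopen : IsOpen {x : ι → ℝ | x ⬝ᵥ x < r ^ 2} :=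
    isOpen_lt (Continuous.dotProduct continuous_id continuous_id) continuous_const
  have ht0 : Tendsto (fun k : ℕ => 1 / ((k : ℝ) + 1)) atTop (𝓝 0) :=
    tendsto_one_div_add_atTop_nhds_zero_nat
  refine contDiffAt_infty.2 fun m => ?_
  refine (contDiffOn_of_limit hopen m H v (fun β => ?_) (fun y hy => ?_)).contDiffAt
    (hopen.mem_nhds hxr2)
  · obtain ⟨B, hB⟩ := D.deriv_bound hD β hr0 hr1
    rw [Metric.uniformCauchySeqOn_iff]
    intro ε hε
    have ht1 : Tendsto (fun k : ℕ => |B| * (2 * (1 / ((k : ℝ) + 1)))) atTop (𝓝 0) := by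
      simpa using (ht0.const_mul 2).const_mul |B|
    obtain ⟨N, hN⟩ := eventually_atTop.1 (ht1.eventually (gt_mem_nhds hε))
    refine ⟨N, fun k hk l hl y hy => ?_⟩
    have hmono : ∀ k : ℕ, N ≤ k → 1 / ((k : ℝ) + 1) ≤ 1 / ((N : ℝ) + 1) := fun k hk =>
      Nat.one_div_le_one_div hk
    have h1 := hB (H k - H l) (2 * (1 / ((N : ℝ) + 1))) (by rw [map_sub, hH, hH, sub_zero])
      (fun z hz => by
        have a := abs_le.1 ((hHv k z hz.le).trans (hmono k hk))
        have b := abs_le.1 ((hHv l z hz.le).trans (hmono l hl))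
        rw [map_sub]
        exact abs_le.2 ⟨by linarith [a.1, b.2, a.2, b.1], by linarith [a.1, b.2, a.2, b.1]⟩)
      y (le_of_lt hy)
    rw [map_sub, map_sub] at h1
    rw [Real.dist_eq]
    refine h1.trans_lt (lt_of_le_of_lt ?_ (hN N le_rfl))
    exact mul_le_mul_of_nonneg_right (le_abs_self B) (by positivity)
  · refine tendsto_iff_dist_tendsto_zero.2 (squeeze_zero (fun _ => dist_nonneg) (fun k => ?_) ht0)
    rw [dist_comm, Real.dist_eq]
    exact hHv k y (le_of_lt (lt_trans hy hr2))

end RootData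

/-! ### Transport from the half-space to the unit ball -/

namespace RootData

theorem reflAt_reflAt {d : ℕ} {α : Ed d} (h : ⟪α, α⟫ = (2 : ℝ)) (x : Ed d) :
    reflAt α (reflAt α x) = x := by
  simp only [reflAt, inner_sub_right, inner_smul_right, h]
  module

theorem reflAt_self {d : ℕ} {α : Ed d} (h : ⟪α, α⟫ = (2 : ℝ)) : reflAt α α = -α := by
  simp only [reflAt, h]
  module

/-- `ℝ^d × ℝ` in coordinates indexed by `Option (Fin d)`; `none` is the last coordinate. -/
def coordL (d : ℕ) : (Option (Fin d) → ℝ) ≃ₗ[ℝ] Ed d × ℝ where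
  toFun z := (WithLp.toLp 2 fun i => z (some i), z none)
  invFun p := fun o => o.elim p.2 fun i => p.1 i
  map_add' z w := rfl
  map_smul' c z := rfl
  left_inv z := by funext o; cases o <;> rfl
  right_inv p := rfl

theorem coordL_apply {d : ℕ} (z : Option (Fin d) → ℝ) :
    coordL d z = (WithLp.toLp 2 fun i => z (some i), z none) := rfl

theorem dot_eq {d : ℕ} (α : Ed d) (z : Option (Fin d) → ℝ) :
    (fun o : Option (Fin d) => o.elim 0 fun i => α i) ⬝ᵥ z = ⟪α, (coordL d z).1⟫ := by
  simp [dotProduct, Fintype.sum_option, coordL_apply, PiLp.inner_apply, mul_comm]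

/-- The coordinate form of a root system in `ℝ^d`, acting trivially on the last coordinate of
`ℝ^d × ℝ`. -/
def ofRS {d : ℕ} {R Rp : Finset (Ed d)} {κ : Ed d → ℝ} (h : IsRootSystem R Rp κ) :
    RootData (Option (Fin d)) {α // α ∈ R} where
  a α := fun o => o.elim 0 fun i => α.1 i
  k α := κ α.1 / 2
  s α :=
    { toFun := fun β => ⟨reflAt α.1 β.1, h.refl_mem _ α.2 _ β.2⟩
      invFun := fun β => ⟨reflAt α.1 β.1, h.refl_mem _ α.2 _ β.2⟩
      left_inv := fun β => Subtype.ext (reflAt_reflAt (h.norm_two _ α.2) _)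
      right_inv := fun β => Subtype.ext (reflAt_reflAt (h.norm_two _ α.2) _) }
  norm α := by rw [dot_eq]; exact h.norm_two _ α.2
  a_s α β := by
    rw [dot_eq]
    funext o
    cases o with
    | none => simp
    | some i => simp [reflAt, coordL_apply]
  k_s α β := by
    have := h.kappa_inv (reflAt α.1) (Submonoid.subset_closure ⟨α.1, α.2, rfl⟩) β.1 β.2
    exact congrArg (· / 2) this

theorem neg_mem_root {d : ℕ} {R Rp : Finset (Ed d)} {κ : Ed d → ℝ} (h : IsRootSystem R Rp κ)
    {α : Ed d} (hα : α ∈ R) : -α ∈ R := by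
  rw [← reflAt_self (h.norm_two _ hα)]
  exact h.refl_mem _ hα _ hα

theorem kappa_neg {d : ℕ} {R Rp : Finset (Ed d)} {κ : Ed d → ℝ} (h : IsRootSystem R Rp κ)
    {α : Ed d} (hα : α ∈ R) : κ (-α) = κ α := by
  rw [← reflAt_self (h.norm_two _ hα)]
  exact h.kappa_inv (reflAt α) (Submonoid.subset_closure ⟨α, hα, rfl⟩) α hα

/-- An even summand sums over all roots to twice its sum over the positive ones. -/
theorem sum_roots {d : ℕ} {R Rp : Finset (Ed d)} {κ : Ed d → ℝ} (h : IsRootSystem R Rp κ)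
    (f : Ed d → ℝ) (hf : ∀ α ∈ R, f (-α) = f α) : ∑ α ∈ R, f α = 2 * ∑ α ∈ Rp, f α := by
  classical
  have hR : R = Rp ∪ Rp.image (fun α => -α) := by
    ext α
    simp only [Finset.mem_union, Finset.mem_image]
    constructor
    · intro hα
      rcases h.pos_split α hα with h1 | h1
      · exact Or.inl h1.1
      · exact Or.inr ⟨-α, h1.2, neg_neg α⟩
    · rintro (hα | ⟨β, hβ, rfl⟩)
      · exact h.pos_sub hα
      · exact neg_mem_root h (h.pos_sub hβ)
  have hdis : Disjoint Rp (Rp.image (fun α => -α)) := by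
    rw [Finset.disjoint_left]
    intro α hα hα'
    obtain ⟨β, hβ, rfl⟩ := Finset.mem_image.1 hα'
    rcases h.pos_split β (h.pos_sub hβ) with h1 | h1
    · exact h1.2 hα
    · exact h1.1 hβ
  rw [hR, Finset.sum_union hdis, Finset.sum_image (fun _ _ _ _ h => neg_injective h), two_mul]
  congr 1
  exact Finset.sum_congr rfl fun α hα => hf α (h.pos_sub hα)

/-- The affine change of variables `z ↦ (0, y) + ρ z` from coordinates to `ℝ^d × ℝ`. -/
def aff (d : ℕ) (y ρ : ℝ) (z : Option (Fin d) → ℝ) : Ed d × ℝ :=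
  ((0 : Ed d), y) + ρ • coordL d z

theorem hasFDerivAt_aff (d : ℕ) (y ρ : ℝ) (z : Option (Fin d) → ℝ) :
    HasFDerivAt (aff d y ρ)
      (ρ • ((coordL d).toContinuousLinearEquiv : (Option (Fin d) → ℝ) →L[ℝ] Ed d × ℝ)) z :=
  (((coordL d).toContinuousLinearEquiv.hasFDerivAt).const_smul ρ).const_add _

theorem contDiff_aff (d : ℕ) (y ρ : ℝ) {n : WithTop ℕ∞} : ContDiff ℝ n (aff d y ρ) :=
  contDiff_const.add ((coordL d).toContinuousLinearEquiv.contDiff.const_smul ρ)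

theorem fderiv_comp_aff {d : ℕ} {y ρ : ℝ} {u : Ed d × ℝ → ℝ} {z : Option (Fin d) → ℝ}
    (hu : DifferentiableAt ℝ u (aff d y ρ z)) (w : Option (Fin d) → ℝ) :
    fderiv ℝ (fun z => u (aff d y ρ z)) z w = ρ * fderiv ℝ u (aff d y ρ z) (coordL d w) := by
  have := (hu.hasFDerivAt.comp z (hasFDerivAt_aff d y ρ z)).fderiv
  have h2 := congrArg (fun L => L w) this
  simpa [Function.comp_def] using h2

theorem pdd_comp_aff {d : ℕ} {y ρ : ℝ} {u : Ed d × ℝ → ℝ} {z : Option (Fin d) → ℝ}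
    (hu : ContDiffAt ℝ 2 u (aff d y ρ z)) (w : Option (Fin d) → ℝ) :
    pdd (fun z => u (aff d y ρ z)) z w = ρ ^ 2 * pd2 u (aff d y ρ z) (coordL d w) := by
  have hd : DifferentiableAt ℝ (fun q => fderiv ℝ u q (coordL d w)) (aff d y ρ z) :=
    ((hu.fderiv_right (m := 1) (by norm_num)).differentiableAt (by norm_num)).clm_apply
      (differentiableAt_const _)
  have hev : (fun x => fderiv ℝ (fun z => u (aff d y ρ z)) x w) =ᶠ[𝓝 z]
      fun x => ρ * fderiv ℝ u (aff d y ρ x) (coordL d w) := by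
    have h1 : ∀ᶠ q in 𝓝 (aff d y ρ z), ContDiffAt ℝ 2 u q := hu.eventually (by simp)
    filter_upwards [(contDiff_aff d y ρ (n := 0)).continuous.continuousAt.eventually h1] with x hx
    exact fderiv_comp_aff (hx.differentiableAt (by norm_num)) w
  rw [pdd, hev.fderiv_eq, pd2, pow_two, mul_assoc, ← fderiv_comp_aff hd w, fderiv_const_mul]
  · simp
  · exact hd.comp z (hasFDerivAt_aff d y ρ z).differentiableAt

theorem LapF_comp_aff {d : ℕ} {R Rp : Finset (Ed d)} {κ : Ed d → ℝ} (h : IsRootSystem R Rp κ)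
    {y ρ : ℝ} (hρ : ρ ≠ 0) {u : Ed d × ℝ → ℝ} {z : Option (Fin d) → ℝ}
    (hu : ContDiffAt ℝ 2 u (aff d y ρ z)) :
    (ofRS h).LapF (fun z => u (aff d y ρ z)) z = ρ ^ 2 * dunklLap Rp κ u (aff d y ρ z) := by
  set p := aff d y ρ z with hp
  set F : Ed d → ℝ := fun α => κ α *
    (fderiv ℝ u p (α, 0) / ⟪α, p.1⟫ - (u p - u (reflAt α p.1, p.2)) / ⟪α, p.1⟫ ^ 2) with hF
  have hp1 : p.1 = ρ • (coordL d z).1 := by simp [hp, aff]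
  have hp2 : p.2 = y + ρ * (coordL d z).2 := by simp [hp, aff]
  have hFn : ∀ α ∈ R, F (-α) = F α := by
    intro α hα
    have e1 : ((-α, 0) : Ed d × ℝ) = -(α, 0) := by simp
    have e2 : reflAt (-α) p.1 = reflAt α p.1 := by simp [reflAt]
    simp only [hF, kappa_neg h hα, e1, e2, map_neg, inner_neg_left, neg_div_neg_eq, neg_sq]
  have hsum : ∑ j, 2 * (ofRS h).k j * (ofRS h).rt j (fun z => u (aff d y ρ z)) z
      = ∑ α ∈ R, ρ ^ 2 * F α := by
    rw [← Finset.sum_coe_sort R]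
    refine Finset.sum_congr rfl fun α _ => ?_
    have ha : (ofRS h).a α ⬝ᵥ z = ⟪α.1, (coordL d z).1⟫ := dot_eq _ _
    have hT : coordL d ((ofRS h).a α) = (α.1, 0) := rfl
    have hr : aff d y ρ ((ofRS h).r α z) = (reflAt α.1 p.1, p.2) := by
      rw [r_apply, ha, aff, map_sub, map_smul, hT]
      refine Prod.ext ?_ ?_
      · simp only [Prod.fst_add, Prod.smul_fst, Prod.fst_sub, zero_add, hp1, reflAt,
          inner_smul_right]
        module
      · simp [hp2]
    have hi : ⟪α.1, p.1⟫ = ρ * ⟪α.1, (coordL d z).1⟫ := by rw [hp1, inner_smul_right]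
    rw [rt, ha, fderiv_comp_aff (hu.differentiableAt (by norm_num)), hr, hT]
    simp only [hF, hi, ← hp, ofRS]
    rcases eq_or_ne (⟪α.1, (coordL d z).1⟫) 0 with h0 | h0
    · simp [h0]
    · field_simp
  rw [LapF, hsum, ← Finset.mul_sum, sum_roots h F hFn, dunklLap, lapE, mul_add]
  congr 1
  simp only [pdd_comp_aff hu]
  rw [← Finset.mul_sum, Fintype.sum_option, add_comm]
  congr 2
  · refine Finset.sum_congr rfl fun i _ => ?_
    congr 1
    refine Prod.ext ?_ ?_
    · ext l
      simp [coordL_apply, Pi.single_apply]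
    · simp [coordL_apply]

/-- Every point of the half-space lies in a ball, centred on the axis `x = 0`, whose closure is
contained in the half-space; such balls are invariant under the reflections. -/
theorem exists_ball {d : ℕ} {p : Ed d × ℝ} (hp : 0 < p.2) :
    ∃ y ρ : ℝ, 0 < ρ ∧ ρ < y ∧ ‖p.1‖ ^ 2 + (p.2 - y) ^ 2 < ρ ^ 2 := by
  set y := (‖p.1‖ ^ 2 + p.2 ^ 2) / (2 * p.2) + 1 with hy
  have hy0 : 0 < y := by positivity
  have h1 : ‖p.1‖ ^ 2 + (p.2 - y) ^ 2 < y ^ 2 := by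
    have : 2 * p.2 * y = ‖p.1‖ ^ 2 + p.2 ^ 2 + 2 * p.2 := by rw [hy]; field_simp
    nlinarith
  have h0 : 0 ≤ ‖p.1‖ ^ 2 + (p.2 - y) ^ 2 := by positivity
  obtain ⟨ρ, h2, h3⟩ := exists_between ((Real.sqrt_lt' hy0).2 h1)
  have hρ : 0 < ρ := (Real.sqrt_nonneg _).trans_lt h2
  exact ⟨y, ρ, hρ, h3, (Real.sqrt_lt' hρ).1 h2⟩

theorem dot_self_eq {d : ℕ} (z : Option (Fin d) → ℝ) :
    z ⬝ᵥ z = ‖(coordL d z).1‖ ^ 2 + (coordL d z).2 ^ 2 := by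
  simp [dotProduct, Fintype.sum_option, coordL_apply, EuclideanSpace.norm_sq_eq, ← pow_two, add_comm]

end RootData

/-- **Proposition 3.8.** A `C²` function on `ℝ^{d+1}₊` which is `κ`-harmonic is in fact
infinitely differentiable on `ℝ^{d+1}₊`. -/
theorem kHarmonic_smooth
    {d : ℕ} (hd : 1 ≤ d) (R Rp : Finset (Ed d)) (κ : Ed d → ℝ)
    (hRS : IsRootSystem R Rp κ)
    (u : Ed d × ℝ → ℝ) (hu : KHarmonicOn R Rp κ u (upperHS d)) :
    ContDiffOn ℝ (⊤ : ℕ∞) u (upperHS d) := by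
  intro p hp
  obtain ⟨y, ρ, hρ, hρy, hb⟩ := RootData.exists_ball (p := p) hp
  have hopen : IsOpen (upperHS d) := isOpen_lt continuous_const continuous_snd
  have hmem : ∀ z : Option (Fin d) → ℝ, z ⬝ᵥ z ≤ 1 → RootData.aff d y ρ z ∈ upperHS d := by
    intro z hz
    rw [RootData.dot_self_eq] at hz
    have h1 : -1 ≤ (RootData.coordL d z).2 := by nlinarith [sq_nonneg ‖(RootData.coordL d z).1‖]
    change 0 < y + ρ * (RootData.coordL d z).2
    nlinarith
  have hC2 : ∀ z : Option (Fin d) → ℝ, z ⬝ᵥ z ≤ 1 →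
      ContDiffAt ℝ 2 u (RootData.aff d y ρ z) := fun z hz =>
    hu.1.contDiffAt (hopen.mem_nhds (hmem z hz))
  have hv2 : ∀ z : Option (Fin d) → ℝ, z ⬝ᵥ z ≤ 1 →
      ContDiffAt ℝ 2 (fun z => u (RootData.aff d y ρ z)) z := fun z hz =>
    (hC2 z hz).comp z (RootData.contDiff_aff d y ρ).contDiffAt
  -- the inverse of `aff d y ρ`
  set ψ : Ed d × ℝ → (Option (Fin d) → ℝ) :=
    fun q => ρ⁻¹ • (RootData.coordL d).symm (q - (0, y)) with hψ
  have hψs : ContDiff ℝ (⊤ : ℕ∞) ψ :=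
    ((RootData.coordL d).symm.toContinuousLinearEquiv.contDiff.comp
      (contDiff_id.sub contDiff_const)).const_smul ρ⁻¹
  have hφψ : ∀ q, RootData.aff d y ρ (ψ q) = q := by
    intro q
    simp [RootData.aff, hψ, smul_smul, hρ.ne']
  have hψp : ψ p ⬝ᵥ ψ p < 1 := by
    have h1 := hφψ p
    have e1 : p.1 = ρ • (RootData.coordL d (ψ p)).1 := by
      rw [← h1, hφψ]; simpa [RootData.aff] using (congrArg Prod.fst h1).symm
    have e2 : p.2 - y = ρ * (RootData.coordL d (ψ p)).2 := by
      have := congrArg Prod.snd h1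
      simp only [RootData.aff, Prod.snd_add, Prod.smul_snd, smul_eq_mul] at this
      linarith
    rw [RootData.dot_self_eq]
    rw [e1, e2, norm_smul, Real.norm_of_nonneg hρ.le, mul_pow, mul_pow, ← mul_add] at hb
    have hρ2 : 0 < ρ ^ 2 := by positivity
    nlinarith
  have key : ContDiffAt ℝ (⊤ : ℕ∞) (fun z => u (RootData.aff d y ρ z)) (ψ p) := by
    refine (RootData.ofRS hRS).smooth_ball (fun j => ?_)
      (fun z hz => (hv2 z hz).continuousAt.continuousWithinAt)
      (fun z hz => hv2 z hz.le) (fun z hz hreg => ?_) hψp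
    · exact div_nonneg (hRS.kappa_nonneg _ j.2) zero_le_two
    · rw [RootData.LapF_comp_aff hRS hρ.ne' (hC2 z hz.le), hu.2 _ (hmem z hz.le), mul_zero]
      intro α hα
      have h1 := hreg ⟨α, hα⟩
      have h2 : (RootData.ofRS hRS).a ⟨α, hα⟩ ⬝ᵥ z = ⟪α, (RootData.coordL d z).1⟫ :=
        RootData.dot_eq _ _
      have h3 : (RootData.aff d y ρ z).1 = ρ • (RootData.coordL d z).1 := by simp [RootData.aff]
      rw [h3, inner_smul_right]
      exact mul_ne_zero hρ.ne' (h2 ▸ h1)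
  have := key.comp p hψs.contDiffAt
  simp only [Function.comp_def, hφψ] at this
  exact this.contDiffWithinAt

end
end

section
/- There exists a constant c ≥ 1, depending only on d, R and κ, such that for all x,t ∈ ℝ^d and all r > 0 with d(x,t) := min_{σ∈G} |x − σ(t)| ≤ r, one has c^{-1} |B(t,r)|_κ ≤ |B(x,r)|_κ ≤ c |B(t,r)|_κ. In particular, for all x,t ∈ ℝ^d and y > 0, |B(x, y+|x−t|)|_κ ≍ |B(t, y+|x−t|)|_κ and |B(x, y+d(x,t))|_κ ≍ |B(t, y+d(x,t))|_κ with constants independent of x, t, y. -/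
/-!
The measure `W_κ dx` is doubling, and it is invariant under `G`. Given these two facts, if
`d(x,t) ≤ r` there is `σ ∈ G` with `|x - σ(t)| < 2r`, so that `B(σ(t),r) ⊆ B(x,3r)` and
`B(x,r) ⊆ B(σ(t),3r)`; hence `|B(t,r)|_κ = |B(σ(t),r)|_κ ≤ |B(x,3r)|_κ ≤ C |B(x,r)|_κ`, and likewise
with the roles exchanged. Asking only for a distance below `2r` makes it unnecessary to know that
the infimum defining `d(x,t)` is attained, i.e. that `G` is finite.

Invariance (`wMeas_ball_group`) comes from the fact that each reflection is a linear isometry which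
permutes the positive roots up to sign (`Wk_reflAt`). Doubling (`exists_doubling`) comes from
comparing `|B(x,r)|_κ` with `r^d ∏ (|⟨α,x⟩| + r)^{2κ(α)}`; the lower bound there needs a ball of
comparable radius inside `B(x,r)` that avoids all the reflecting hyperplanes
(`exists_good_ball`).
-/

open MeasureTheory Filter Metric
open scoped RealInnerProductSpace Topology

noncomputable section

/-- The Dunkl weight `W_κ(x) = ∏_{α ∈ R₊} |⟨α,x⟩|^{2κ(α)}`. -/
def Wk {d : ℕ} (Rp : Finset (Ed d)) (κ : Ed d → ℝ) (x : Ed d) : ℝ :=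
  ∏ α ∈ Rp, |⟪α, x⟫| ^ (2 * κ α)

/-- The weighted measure `|A|_κ = ∫_A W_κ(x) dx`. -/
def wMeas {d : ℕ} (Rp : Finset (Ed d)) (κ : Ed d → ℝ) (A : Set (Ed d)) : ℝ :=
  ∫ x in A, Wk Rp κ x

/-- The `G`-orbit distance `d(x,t) = min_{σ ∈ G} |x - σ(t)|`. -/
def dG {d : ℕ} (R : Finset (Ed d)) (x t : Ed d) : ℝ :=
  sInf ((fun σ : Function.End (Ed d) => dist x (σ t)) ''
    (dunklGroup R : Set (Function.End (Ed d))))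

/-! ### Reflection invariance -/

lemma inner_reflAt {d : ℕ} (α x y : Ed d) : ⟪y, reflAt α x⟫ = ⟪reflAt α y, x⟫ := by
  simp only [reflAt, inner_sub_left, inner_sub_right, inner_smul_left, inner_smul_right,
    real_inner_comm α y]
  simp; ring

lemma reflAt_reflAt {d : ℕ} {α : Ed d} (h : ⟪α, α⟫ = (2 : ℝ)) (x : Ed d) :
    reflAt α (reflAt α x) = x := by
  simp only [reflAt, inner_sub_right, inner_smul_right, h]
  module

lemma reflAt_neg {d : ℕ} (α x : Ed d) : reflAt α (-x) = -reflAt α x := by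
  simp only [reflAt, inner_neg_right]
  module

/-- The reflection `σ_α` as a linear isometric equivalence, for a root normalized by
`⟨α,α⟩ = 2`. -/
def reflIso {d : ℕ} (α : Ed d) (h : ⟪α, α⟫ = (2 : ℝ)) : Ed d ≃ₗᵢ[ℝ] Ed d where
  toFun := reflAt α
  invFun := reflAt α
  left_inv := reflAt_reflAt h
  right_inv := reflAt_reflAt h
  map_add' x y := by simp only [reflAt, inner_add_right]; module
  map_smul' a x := by simp only [reflAt, inner_smul_right, RingHom.id_apply]; module
  norm_map' x := by
    change ‖reflAt α x‖ = ‖x‖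
    rw [norm_eq_sqrt_real_inner, norm_eq_sqrt_real_inner, inner_reflAt, reflAt_reflAt h]

lemma reflAt_mem_dunklGroup {d : ℕ} {R : Finset (Ed d)} {α : Ed d} (hα : α ∈ R) :
    (reflAt α : Function.End (Ed d)) ∈ dunklGroup R :=
  Submonoid.subset_closure ⟨α, hα, rfl⟩

lemma kappa_neg {d : ℕ} {R Rp : Finset (Ed d)} {κ : Ed d → ℝ} (hRS : IsRootSystem R Rp κ)
    {β : Ed d} (hβ : β ∈ R) : κ (-β) = κ β := by
  have h := hRS.kappa_inv _ (reflAt_mem_dunklGroup hβ) β hβ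
  have e : reflAt β β = -β := by
    simp only [reflAt, hRS.norm_two β hβ]; module
  rwa [e] at h

/-- The weight is invariant under every `σ_α`: up to signs, which neither `|⟨·,x⟩|` nor `κ`
sees, `σ_α` permutes the positive roots. -/
lemma Wk_reflAt {d : ℕ} {R Rp : Finset (Ed d)} {κ : Ed d → ℝ} (hRS : IsRootSystem R Rp κ)
    {α : Ed d} (hα : α ∈ R) (x : Ed d) : Wk Rp κ (reflAt α x) = Wk Rp κ x := by
  classical
  have h2 := hRS.norm_two α hα
  let i : Ed d → Ed d := fun β => if reflAt α β ∈ Rp then reflAt α β else -reflAt α β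
  have hi : ∀ β ∈ Rp, i β ∈ Rp := by
    intro β hβ
    have hm := hRS.refl_mem α hα β (hRS.pos_sub hβ)
    by_cases h : reflAt α β ∈ Rp
    · simp [i, h]
    · simpa [i, h] using hRS.pos_split _ hm
  have hii : ∀ β ∈ Rp, i (i β) = β := by
    intro β hβ
    by_cases h : reflAt α β ∈ Rp
    · simp [i, h, reflAt_reflAt h2, hβ]
    · have hn : -β ∉ Rp := by
        have := hRS.pos_split β (hRS.pos_sub hβ)
        tauto
      simp [i, h, reflAt_reflAt h2, reflAt_neg, hn]
  refine Finset.prod_bij' (fun β _ => i β) (fun β _ => i β) hi hi hii hii ?_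
  intro β hβ
  have hβR := hRS.pos_sub hβ
  have hm := hRS.refl_mem α hα β hβR
  have hk : κ (reflAt α β) = κ β := hRS.kappa_inv _ (reflAt_mem_dunklGroup hα) β hβR
  rw [inner_reflAt]
  by_cases h : reflAt α β ∈ Rp
  · simp [i, h, hk]
  · simp [i, h, hk, kappa_neg hRS hm]

lemma wMeas_ball_reflAt {d : ℕ} {R Rp : Finset (Ed d)} {κ : Ed d → ℝ}
    (hRS : IsRootSystem R Rp κ) {α : Ed d} (hα : α ∈ R) (t : Ed d) (r : ℝ) :
    wMeas Rp κ (ball (reflAt α t) r) = wMeas Rp κ (ball t r) := by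
  let e := reflIso α (hRS.norm_two α hα)
  have he : ∀ x, e x = reflAt α x := fun _ => rfl
  have h := e.measurePreserving.setIntegral_preimage_emb
    e.toHomeomorph.measurableEmbedding (Wk Rp κ) (ball (reflAt α t) r)
  simp only [he, Wk_reflAt hRS hα] at h
  have hp : e ⁻¹' ball (reflAt α t) r = ball t r := by
    rw [← he, LinearIsometryEquiv.preimage_ball]; simp
  rw [hp] at h
  exact h.symm

lemma wMeas_ball_group {d : ℕ} {R Rp : Finset (Ed d)} {κ : Ed d → ℝ}
    (hRS : IsRootSystem R Rp κ) {σ : Function.End (Ed d)} (hσ : σ ∈ dunklGroup R) :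
    ∀ (t : Ed d) (r : ℝ), wMeas Rp κ (ball (σ t) r) = wMeas Rp κ (ball t r) := by
  induction hσ using Submonoid.closure_induction with
  | mem f hf =>
    obtain ⟨α, hα, rfl⟩ := hf
    exact wMeas_ball_reflAt hRS hα
  | one => intro t r; rfl
  | mul f g _ _ hf hg => intro t r; exact (hf (g t) r).trans (hg t r)

/-! ### Doubling -/

lemma abs_inner_root_le {d : ℕ} {α : Ed d} (h : ⟪α, α⟫ = (2 : ℝ)) (v : Ed d) :
    |⟪α, v⟫| ≤ 3 / 2 * ‖v‖ := by
  have h1 : ‖α‖ ≤ 3 / 2 := by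
    rw [real_inner_self_eq_norm_sq] at h
    nlinarith [norm_nonneg α]
  exact (abs_real_inner_le_norm α v).trans (by gcongr)

/-- Every ball `B(x,r)` contains a ball of comparable radius that stays away from all the
hyperplanes `⟨α,·⟩ = 0`, quantitatively: there `|⟨α,·⟩|` is at least a constant times
`|⟨α,x⟩| + r`. Roots are added one by one; for a new root `β` the center is shifted along `±β`,
with the sign that increases `|⟨β,·⟩|`, and the radius is shrunk. -/
lemma exists_good_ball {d : ℕ} (S : Finset (Ed d)) (hS : ∀ α ∈ S, ⟪α, α⟫ = (2 : ℝ)) :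
    ∃ c : ℝ, 0 < c ∧ c ≤ 1 ∧ ∀ (x : Ed d) (r : ℝ), 0 < r → ∃ y : Ed d,
      ball y (c * r) ⊆ ball x r ∧
      ∀ z ∈ ball y (c * r), ∀ α ∈ S, c * (|⟪α, x⟫| + r) ≤ |⟪α, z⟫| := by
  classical
  induction S using Finset.induction_on with
  | empty => exact ⟨1, one_pos, le_rfl, fun x r _ => ⟨x, by simp, by simp⟩⟩
  | insert β S _ ih =>
    obtain ⟨c, c0, c1, hc⟩ := ih fun α hα => hS α (Finset.mem_insert_of_mem hα)
    have hβ := hS β (Finset.mem_insert_self _ _)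
    have hβn : ‖β‖ ≤ 3 / 2 := by
      have h := hβ
      rw [real_inner_self_eq_norm_sq] at h
      nlinarith [norm_nonneg β]
    refine ⟨c / 16, by positivity, by linarith, fun x r hr => ?_⟩
    obtain ⟨y, hy, hyz⟩ := hc x r hr
    have hcr : 0 < c * r := by positivity
    obtain ⟨s, hs, hsy⟩ : ∃ s : ℝ, |s| = 1 ∧ |⟪β, y⟫ + s * (c * r / 2)| = |⟪β, y⟫| + c * r / 2 := by
      rcases le_total 0 ⟪β, y⟫ with h | h
      · exact ⟨1, by simp, by rw [abs_of_nonneg h, abs_of_nonneg] <;> linarith⟩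
      · exact ⟨-1, by simp, by rw [abs_of_nonpos h, abs_of_nonpos] <;> linarith⟩
    let y' : Ed d := y + (s * (c * r / 4)) • β
    have hdist : dist y' y ≤ c * r / 4 * (3 / 2) := by
      simp only [y', dist_self_add_left, norm_smul, Real.norm_eq_abs, abs_mul s, hs]
      rw [one_mul, abs_of_pos (by positivity : 0 < c * r / 4)]
      gcongr
    have hsub : ball y' (c / 16 * r) ⊆ ball y (c * r) := by
      apply ball_subset_ball'
      linarith
    refine ⟨y', hsub.trans hy, fun z hz α hα => ?_⟩
    rcases Finset.mem_insert.1 hα with rfl | hα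
    · have e : ⟪α, y'⟫ = ⟪α, y⟫ + s * (c * r / 2) := by
        simp only [y', inner_add_right, inner_smul_right, hβ]; ring
      have hz' : ‖y' - z‖ < c / 16 * r := by
        rw [← dist_eq_norm, dist_comm]; exact hz
      have h1 := abs_inner_root_le hβ (y' - z)
      have h2 : |⟪α, y'⟫| ≤ |⟪α, z⟫| + |⟪α, y' - z⟫| := by
        rw [inner_sub_right]
        simpa using abs_add_le ⟪α, z⟫ (⟪α, y'⟫ - ⟪α, z⟫)
      rw [e, hsy] at h2
      have hxy : ‖x - y‖ < r := by
        rw [← dist_eq_norm, dist_comm]; exact hy (mem_ball_self hcr)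
      have h3 := abs_inner_root_le hβ (x - y)
      have h4 : |⟪α, x⟫| ≤ |⟪α, y⟫| + |⟪α, x - y⟫| := by
        rw [inner_sub_right]
        simpa using abs_add_le ⟪α, y⟫ (⟪α, x⟫ - ⟪α, y⟫)
      have h5 : |⟪α, x⟫| + r ≤ |⟪α, y⟫| + 5 / 2 * r := by linarith
      calc c / 16 * (|⟪α, x⟫| + r) ≤ c / 16 * (|⟪α, y⟫| + 5 / 2 * r) := by gcongr
        _ = c / 16 * |⟪α, y⟫| + 5 / 32 * (c * r) := by ring
        _ ≤ 1 * |⟪α, y⟫| + 5 / 32 * (c * r) := by gcongr; linarith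
        _ ≤ |⟪α, z⟫| := by linarith
    · refine le_trans ?_ (hyz z (hsub hz) α hα)
      gcongr
      linarith

lemma continuous_Wk {d : ℕ} {R Rp : Finset (Ed d)} {κ : Ed d → ℝ} (hRS : IsRootSystem R Rp κ) :
    Continuous (Wk Rp κ) := by
  unfold Wk
  refine continuous_finsetProd _ fun α hα => ?_
  have := hRS.kappa_nonneg α (hRS.pos_sub hα)
  refine Continuous.rpow_const (by fun_prop) fun x => Or.inr (by positivity)

lemma Wk_nonneg {d : ℕ} (Rp : Finset (Ed d)) (κ : Ed d → ℝ) (x : Ed d) : 0 ≤ Wk Rp κ x :=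
  Finset.prod_nonneg fun _ _ => by positivity

lemma integrableOn_Wk {d : ℕ} {R Rp : Finset (Ed d)} {κ : Ed d → ℝ} (hRS : IsRootSystem R Rp κ)
    (x : Ed d) (r : ℝ) : IntegrableOn (Wk Rp κ) (ball x r) :=
  ((continuous_Wk hRS).continuousOn.integrableOn_compact
    (isCompact_closedBall x r)).mono_set ball_subset_closedBall

lemma wMeas_nonneg {d : ℕ} (Rp : Finset (Ed d)) (κ : Ed d → ℝ) (A : Set (Ed d)) :
    0 ≤ wMeas Rp κ A := integral_nonneg fun x => Wk_nonneg Rp κ x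

lemma wMeas_ball_mono {d : ℕ} {R Rp : Finset (Ed d)} {κ : Ed d → ℝ} (hRS : IsRootSystem R Rp κ)
    {x y : Ed d} {r s : ℝ} (h : ball x r ⊆ ball y s) :
    wMeas Rp κ (ball x r) ≤ wMeas Rp κ (ball y s) :=
  setIntegral_mono_set (integrableOn_Wk hRS y s)
    (Eventually.of_forall fun x => Wk_nonneg Rp κ x) h.eventuallyLE

lemma volume_real_ball {d : ℕ} (x : Ed d) {r : ℝ} (hr : 0 < r) :
    volume.real (ball x r) = r ^ d * volume.real (ball (0 : Ed d) 1) := by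
  rw [measureReal_def, Measure.addHaar_ball_of_pos volume x hr, ENNReal.toReal_mul,
    ENNReal.toReal_ofReal (by positivity), finrank_euclideanSpace_fin, measureReal_def]

/-- The doubling property, from `|B(x,r)|_κ ≍ r^d ∏ (|⟨α,x⟩| + r)^{2κ(α)}`: the upper bound
holds pointwise for the weight, the lower one on the ball of `exists_good_ball`. -/
lemma exists_doubling {d : ℕ} {R Rp : Finset (Ed d)} {κ : Ed d → ℝ}
    (hRS : IsRootSystem R Rp κ) :
    ∃ C : ℝ, ∀ (x : Ed d) (r : ℝ), 0 < r →
      wMeas Rp κ (ball x (3 * r)) ≤ C * wMeas Rp κ (ball x r) := by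
  have h2 : ∀ α ∈ Rp, ⟪α, α⟫ = (2 : ℝ) := fun α hα => hRS.norm_two α (hRS.pos_sub hα)
  have hκ : ∀ α ∈ Rp, 0 ≤ 2 * κ α := fun α hα =>
    mul_nonneg two_pos.le (hRS.kappa_nonneg α (hRS.pos_sub hα))
  obtain ⟨c, c0, c1, hc⟩ := exists_good_ball Rp h2
  refine ⟨(3 / c) ^ d * ∏ α ∈ Rp, (6 / c) ^ (2 * κ α), fun x r hr => ?_⟩
  set V : ℝ := volume.real (ball (0 : Ed d) 1) with hV
  have hup : wMeas Rp κ (ball x (3 * r)) ≤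
      (∏ α ∈ Rp, (6 * (|⟪α, x⟫| + r)) ^ (2 * κ α)) * ((3 * r) ^ d * V) := by
    rw [hV, ← volume_real_ball x (by positivity)]
    refine (setIntegral_mono_on (g := fun _ => ∏ α ∈ Rp, (6 * (|⟪α, x⟫| + r)) ^ (2 * κ α))
      (integrableOn_Wk hRS x (3 * r))
      (integrableOn_const measure_ball_lt_top.ne) measurableSet_ball
      (fun z hz => ?_)).trans_eq (by rw [setIntegral_const, smul_eq_mul, mul_comm])
    refine Finset.prod_le_prod (fun _ _ => by positivity) fun α hα => ?_
    refine Real.rpow_le_rpow (abs_nonneg _) ?_ (hκ α hα)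
    have h1 := abs_inner_root_le (h2 α hα) (z - x)
    have h3 : |⟪α, z⟫| ≤ |⟪α, x⟫| + |⟪α, z - x⟫| := by
      rw [inner_sub_right]
      simpa using abs_add_le ⟪α, x⟫ (⟪α, z⟫ - ⟪α, x⟫)
    have hz' : ‖z - x‖ < 3 * r := by rw [← dist_eq_norm]; exact hz
    linarith [abs_nonneg ⟪α, x⟫]
  obtain ⟨y, hy, hyz⟩ := hc x r hr
  have hlow : (∏ α ∈ Rp, (c * (|⟪α, x⟫| + r)) ^ (2 * κ α)) * ((c * r) ^ d * V) ≤
      wMeas Rp κ (ball x r) := by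
    refine le_trans ?_ (wMeas_ball_mono hRS hy)
    rw [hV, ← volume_real_ball y (by positivity)]
    refine le_of_eq_of_le (by rw [setIntegral_const, smul_eq_mul, mul_comm])
      (setIntegral_mono_on (f := fun _ => ∏ α ∈ Rp, (c * (|⟪α, x⟫| + r)) ^ (2 * κ α))
        (integrableOn_const measure_ball_lt_top.ne) (integrableOn_Wk hRS y (c * r))
        measurableSet_ball (fun z hz => ?_))
    exact Finset.prod_le_prod (fun _ _ => by positivity) fun α hα =>
      Real.rpow_le_rpow (by positivity) (hyz z hz α hα) (hκ α hα)
  refine hup.trans (le_trans (le_of_eq ?_) (mul_le_mul_of_nonneg_left hlow (by positivity)))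
  have e1 : ∏ α ∈ Rp, (6 * (|⟪α, x⟫| + r)) ^ (2 * κ α) =
      (∏ α ∈ Rp, (6 / c) ^ (2 * κ α)) * ∏ α ∈ Rp, (c * (|⟪α, x⟫| + r)) ^ (2 * κ α) := by
    rw [← Finset.prod_mul_distrib]
    refine Finset.prod_congr rfl fun α _ => ?_
    rw [← Real.mul_rpow (by positivity) (by positivity)]
    congr 1
    field_simp
  have e2 : (3 * r) ^ d = (3 / c) ^ d * (c * r) ^ d := by
    rw [← mul_pow]
    congr 1
    field_simp
  rw [e1, e2]
  ring

/-! ### Orbit distance and conclusion -/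

lemma dG_nonneg {d : ℕ} (R : Finset (Ed d)) (x t : Ed d) : 0 ≤ dG R x t := by
  refine Real.sInf_nonneg ?_
  rintro _ ⟨σ, _, rfl⟩
  exact dist_nonneg

lemma dG_le_dist {d : ℕ} (R : Finset (Ed d)) (x t : Ed d) : dG R x t ≤ dist x t := by
  refine csInf_le ⟨0, ?_⟩ ⟨1, (dunklGroup R).one_mem, rfl⟩
  rintro _ ⟨σ, _, rfl⟩
  exact dist_nonneg

lemma exists_dist_lt_of_dG_lt {d : ℕ} {R : Finset (Ed d)} {x t : Ed d} {s : ℝ}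
    (h : dG R x t < s) : ∃ σ ∈ dunklGroup R, dist x (σ t) < s := by
  obtain ⟨_, ⟨σ, hσ, rfl⟩, h'⟩ := exists_lt_of_csInf_lt
    (Set.Nonempty.image _ ⟨1, (dunklGroup R).one_mem⟩) h
  exact ⟨σ, hσ, h'⟩

/-- **Lemma 4.2 (comparability of weighted balls).** There is a constant `c ≥ 1`,
depending only on `d`, `R` and `κ`, such that `|B(t,r)|_κ ≍ |B(x,r)|_κ` whenever
`d(x,t) ≤ r`; in particular `|B(x, y+|x−t|)|_κ ≍ |B(t, y+|x−t|)|_κ` and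
`|B(x, y+d(x,t))|_κ ≍ |B(t, y+d(x,t))|_κ`. -/
theorem weighted_ball_comparable
    {d : ℕ} (hd : 1 ≤ d) (R Rp : Finset (Ed d)) (κ : Ed d → ℝ)
    (hRS : IsRootSystem R Rp κ) :
    ∃ c : ℝ, 1 ≤ c ∧
      (∀ x t : Ed d, ∀ r : ℝ, 0 < r → dG R x t ≤ r →
        wMeas Rp κ (ball t r) ≤ c * wMeas Rp κ (ball x r) ∧
        wMeas Rp κ (ball x r) ≤ c * wMeas Rp κ (ball t r)) ∧
      (∀ x t : Ed d, ∀ y : ℝ, 0 < y →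
        (wMeas Rp κ (ball t (y + dist x t)) ≤ c * wMeas Rp κ (ball x (y + dist x t)) ∧
         wMeas Rp κ (ball x (y + dist x t)) ≤ c * wMeas Rp κ (ball t (y + dist x t))) ∧
        (wMeas Rp κ (ball t (y + dG R x t)) ≤ c * wMeas Rp κ (ball x (y + dG R x t)) ∧
         wMeas Rp κ (ball x (y + dG R x t)) ≤ c * wMeas Rp κ (ball t (y + dG R x t)))) := by
  obtain ⟨C, hC⟩ := exists_doubling hRS
  have hC' : ∀ (x : Ed d) (r : ℝ), 0 < r →
      wMeas Rp κ (ball x (3 * r)) ≤ max 1 C * wMeas Rp κ (ball x r) := fun x r hr =>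
    (hC x r hr).trans (mul_le_mul_of_nonneg_right (le_max_right _ _) (wMeas_nonneg _ _ _))
  have key : ∀ x t : Ed d, ∀ r : ℝ, 0 < r → dG R x t ≤ r →
      wMeas Rp κ (ball t r) ≤ max 1 C * wMeas Rp κ (ball x r) ∧
      wMeas Rp κ (ball x r) ≤ max 1 C * wMeas Rp κ (ball t r) := by
    intro x t r hr h
    obtain ⟨σ, hσ, hlt⟩ := exists_dist_lt_of_dG_lt (h.trans_lt (by linarith : r < 2 * r))
    rw [← wMeas_ball_group hRS hσ t r]
    constructor
    · refine (wMeas_ball_mono hRS (ball_subset_ball' ?_)).trans (hC' x r hr)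
      rw [dist_comm]
      linarith
    · refine (wMeas_ball_mono hRS (ball_subset_ball' ?_)).trans (hC' (σ t) r hr)
      linarith
  refine ⟨max 1 C, le_max_left _ _, key, fun x t y hy => ⟨?_, ?_⟩⟩
  · exact key x t _ (by positivity) (by linarith [dG_le_dist R x t])
  · exact key x t _ (by linarith [dG_nonneg R x t]) (by linarith)


end
end

section
/- (Maximum principle.) Let Ω be a G-invariant bounded domain in ℝ^{d+1} and let u be continuous on the closure of Ω. Assume that u is of class C² on the open set {(x,y) ∈ Ω : u(x,y) > 0} and that Δ_κu ≥ 0 at every point of this set whose x-coordinate is regular. If u ≤ 0 on ∂Ω, then u ≤ 0 on all of Ω. -/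
/-!
Suppose `u p₀ > 0` for some `p₀ ∈ Ω`. For small `ε > 0` the function `w = u + ε y²` attains its
maximum over `closure Ω` at a point `q` where `u q > 0`; hence `q ∈ Ω`, and `w` is `C²` near `q`.
Since `Δ_κ (y²) = 2` (`dunklLap_add_sq`), `Δ_κ w ≥ 2 ε` at every regular point near `q`.

On the other hand `limsup Δ_κ w ≤ 0` as regular points tend to `q`. Second derivatives at `q` are
nonpositive (`pd2_nonpos_of_isLocalMax`), so the Euclidean Laplacian causes no trouble. The root
terms are treated in `eventually_rootTerm_le`: if `⟨α, q⟩ ≠ 0`, the term is continuous at `q`, where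
its gradient part vanishes and its difference part has the right sign, as `σ_α q` lies in `Ω` by
invariance; if `⟨α, q⟩ = 0`, Taylor's formula along the segment from `p` to `σ_α p` turns the term
into half of a second derivative in direction `α`. Regular points are dense (`dense_regular`), so
the two bounds contradict each other even when `q` itself is not regular.
-/

open MeasureTheory Filter Metric
open scoped RealInnerProductSpace Topology

noncomputable section

/-! ### One-variable restrictions of a `C²` function -/

section Restriction

variable {d : ℕ} {U : Set (Ed d × ℝ)} {w : Ed d × ℝ → ℝ}

lemma hasDerivAt_line (hU : IsOpen U) (hw : ContDiffOn ℝ 2 w U) {p v : Ed d × ℝ} {r : ℝ}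
    (h : p + r • v ∈ U) :
    HasDerivAt (fun s : ℝ => w (p + s • v)) (fderiv ℝ w (p + r • v) v) r := by
  have h1 : DifferentiableAt ℝ w (p + r • v) :=
    (hw.contDiffAt (hU.mem_nhds h)).differentiableAt (by norm_num)
  have h2 : HasDerivAt (fun s : ℝ => p + s • v) v r := by
    simpa using ((hasDerivAt_id r).smul_const v).const_add p
  exact h1.hasFDerivAt.comp_hasDerivAt r h2

lemma contDiffOn_fderiv_apply (hU : IsOpen U) (hw : ContDiffOn ℝ 2 w U) (v : Ed d × ℝ) :
    ContDiffOn ℝ 1 (fun q => fderiv ℝ w q v) U :=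
  (hw.fderiv_of_isOpen hU (by norm_num)).clm_apply contDiffOn_const

lemma differentiableAt_fderiv_apply (hU : IsOpen U) (hw : ContDiffOn ℝ 2 w U) (v : Ed d × ℝ)
    {p : Ed d × ℝ} (hp : p ∈ U) : DifferentiableAt ℝ (fun q => fderiv ℝ w q v) p :=
  ((contDiffOn_fderiv_apply hU hw v).contDiffAt (hU.mem_nhds hp)).differentiableAt (by norm_num)

lemma hasDerivAt_line_two (hU : IsOpen U) (hw : ContDiffOn ℝ 2 w U) {p v : Ed d × ℝ} {r : ℝ}
    (h : p + r • v ∈ U) :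
    HasDerivAt (fun s : ℝ => fderiv ℝ w (p + s • v) v) (pd2 w (p + r • v) v) r := by
  have h1 := differentiableAt_fderiv_apply hU hw v h
  have h2 : HasDerivAt (fun s : ℝ => p + s • v) v r := by
    simpa using ((hasDerivAt_id r).smul_const v).const_add p
  exact h1.hasFDerivAt.comp_hasDerivAt r h2

lemma continuousAt_pd2 (hU : IsOpen U) (hw : ContDiffOn ℝ 2 w U) (v : Ed d × ℝ)
    {p : Ed d × ℝ} (hp : p ∈ U) : ContinuousAt (fun q => pd2 w q v) p :=
  (((contDiffOn_fderiv_apply hU hw v).continuousOn_fderiv_of_isOpen hU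
    (by norm_num)).clm_apply continuousOn_const).continuousAt (hU.mem_nhds hp)

lemma pd2_smul (hU : IsOpen U) (hw : ContDiffOn ℝ 2 w U) (c : ℝ) (v : Ed d × ℝ)
    {p : Ed d × ℝ} (hp : p ∈ U) : pd2 w p (c • v) = c ^ 2 * pd2 w p v := by
  have h := differentiableAt_fderiv_apply hU hw v hp
  unfold pd2
  simp only [map_smul, smul_eq_mul]
  rw [fderiv_const_mul h]
  simp only [smul_apply, smul_eq_mul]
  ring

/-- If the second derivative were positive, the point would be a local minimum along the line as
well, so the restriction to the line would be locally constant. -/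
lemma pd2_nonpos_of_isLocalMax (hU : IsOpen U) (hw : ContDiffOn ℝ 2 w U) {q : Ed d × ℝ}
    (hq : q ∈ U) (hmax : IsLocalMax w q) (v : Ed d × ℝ) : pd2 w q v ≤ 0 := by
  by_contra! hpos
  set g : ℝ → ℝ := fun s => w (q + s • v) with hg
  have hcont : Continuous fun s : ℝ => q + s • v := by fun_prop
  have ht : Tendsto (fun s : ℝ => q + s • v) (𝓝 0) (𝓝 q) := by
    have := hcont.tendsto 0
    simpa using this
  have hUev : ∀ᶠ s in 𝓝 (0 : ℝ), q + s • v ∈ U := ht.eventually (hU.mem_nhds hq)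
  have hd1 : deriv g =ᶠ[𝓝 0] fun s => fderiv ℝ w (q + s • v) v := by
    filter_upwards [hUev] with s hs using (hasDerivAt_line hU hw hs).deriv
  have hd2 : deriv (deriv g) 0 = pd2 w q v := by
    rw [hd1.deriv_eq]
    have h0 : q + (0 : ℝ) • v ∈ U := by simpa using hq
    simpa using (hasDerivAt_line_two hU hw h0).deriv
  have hgmax : IsLocalMax g 0 := by
    have : ∀ᶠ s in 𝓝 (0 : ℝ), w (q + s • v) ≤ w q := ht.eventually hmax
    simpa [IsLocalMax, IsMaxFilter, hg] using this
  have hgc : ContinuousAt g 0 := by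
    have h0 : q + (0 : ℝ) • v ∈ U := by simpa using hq
    exact (hasDerivAt_line hU hw h0).continuousAt
  have hgmin : IsLocalMin g 0 :=
    isLocalMin_of_deriv_deriv_pos (by rw [hd2]; exact hpos) hgmax.deriv_eq_zero hgc
  have hconst : g =ᶠ[𝓝 0] fun _ => g 0 := by
    filter_upwards [hgmax, hgmin] with s h1 h2 using le_antisymm h1 h2
  have : deriv (deriv g) 0 = 0 := by
    rw [hconst.deriv.deriv_eq]
    simp
  rw [hd2] at this
  exact hpos.ne' this

/-- Second-order Taylor upper bound along a segment. -/
lemma taylor_upper (hU : IsOpen U) (hw : ContDiffOn ℝ 2 w U) {p v : Ed d × ℝ} {C : ℝ}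
    (hseg : ∀ r ∈ Set.Icc (0 : ℝ) 1, p + r • v ∈ U)
    (hC : ∀ r ∈ Set.Icc (0 : ℝ) 1, pd2 w (p + r • v) v ≤ C) :
    w (p + v) ≤ w p + fderiv ℝ w p v + C / 2 := by
  set g1 : ℝ → ℝ := fun r => fderiv ℝ w (p + r • v) v - r * C with hg1
  set g : ℝ → ℝ := fun r => w (p + r • v) - r * fderiv ℝ w p v - r ^ 2 * (C / 2) with hg
  have hder1 : ∀ r ∈ Set.Icc (0 : ℝ) 1, HasDerivAt g1 (pd2 w (p + r • v) v - C) r := by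
    intro r hr
    simpa using (hasDerivAt_line_two hU hw (hseg r hr)).fun_sub ((hasDerivAt_id r).mul_const C)
  have hder : ∀ r ∈ Set.Icc (0 : ℝ) 1, HasDerivAt g (g1 r - fderiv ℝ w p v) r := by
    intro r hr
    refine (((hasDerivAt_line hU hw (hseg r hr)).fun_sub
      ((hasDerivAt_id r).mul_const (fderiv ℝ w p v))).fun_sub
      ((hasDerivAt_pow 2 r).mul_const (C / 2))).congr_deriv ?_
    simp only [hg1]
    norm_num
    ring
  have hsub : interior (Set.Icc (0 : ℝ) 1) ⊆ Set.Icc 0 1 := interior_subset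
  have h0 : (0 : ℝ) ∈ Set.Icc (0 : ℝ) 1 := by simp
  have h1 : (1 : ℝ) ∈ Set.Icc (0 : ℝ) 1 := by simp
  have hanti1 : AntitoneOn g1 (Set.Icc 0 1) :=
    antitoneOn_of_deriv_nonpos (convex_Icc 0 1)
      (fun r hr => (hder1 r hr).continuousAt.continuousWithinAt)
      (fun r hr => (hder1 r (hsub hr)).differentiableAt.differentiableWithinAt)
      (fun r hr => by rw [(hder1 r (hsub hr)).deriv]; linarith [hC r (hsub hr)])
  have hg10 : g1 0 = fderiv ℝ w p v := by simp [hg1]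
  have hanti : AntitoneOn g (Set.Icc 0 1) :=
    antitoneOn_of_deriv_nonpos (convex_Icc 0 1)
      (fun r hr => (hder r hr).continuousAt.continuousWithinAt)
      (fun r hr => (hder r (hsub hr)).differentiableAt.differentiableWithinAt)
      (fun r hr => by
        rw [(hder r (hsub hr)).deriv]
        linarith [hanti1 h0 (hsub hr) (hsub hr).1])
  have := hanti h0 h1 zero_le_one
  simp only [hg, one_smul, zero_smul, add_zero] at this
  linarith

end Restriction

/-! ### Reflections and regular points -/

/-- The reflection `σ_α` acting on `ℝ^{d+1}` through the `x`-variables. -/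
def reflPt {d : ℕ} (α : Ed d) (p : Ed d × ℝ) : Ed d × ℝ := (reflAt α p.1, p.2)

lemma continuous_reflPt {d : ℕ} (α : Ed d) : Continuous (reflPt α) := by
  unfold reflPt reflAt
  fun_prop

lemma reflPt_eq {d : ℕ} (α : Ed d) (p : Ed d × ℝ) :
    reflPt α p = p + (-⟪α, p.1⟫) • ((α, 0) : Ed d × ℝ) := by
  ext <;> simp [reflPt, reflAt, sub_eq_add_neg]

lemma dense_regular {d : ℕ} (R : Finset (Ed d)) (h0 : ∀ α ∈ R, α ≠ 0) :
    Dense {p : Ed d × ℝ | isRegular R p.1} := by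
  have key : Dense (⋂ α ∈ (R : Set (Ed d)), {x : Ed d | ⟪α, x⟫ ≠ (0 : ℝ)}) := by
    apply dense_biInter_of_isOpen
    · intro α _
      exact isOpen_ne_fun (by fun_prop) continuous_const
    · exact R.countable_toSet
    · intro α hα
      have hne : LinearMap.ker (innerSL ℝ α : Ed d →L[ℝ] ℝ).toLinearMap ≠ ⊤ := by
        intro h
        have : α ∈ LinearMap.ker (innerSL ℝ α : Ed d →L[ℝ] ℝ).toLinearMap := by rw [h]; trivial
        simp at this
        exact h0 α hα this
      have hint : interior (LinearMap.ker (innerSL ℝ α : Ed d →L[ℝ] ℝ).toLinearMap : Set (Ed d))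
          = ∅ := by
        by_contra h
        exact hne (Submodule.eq_top_of_nonempty_interior' _ (Set.nonempty_iff_ne_empty.2 h))
      exact interior_eq_empty_iff_dense_compl.1 hint
  have := key.preimage (isOpenMap_fst (X := Ed d) (Y := ℝ))
  convert this using 1
  ext p
  simp [isRegular]

/-! ### The root terms of the Dunkl Laplacian near an interior maximum -/

/-- The contribution of the root `α`, without its factor `2 κ(α)`, to the Dunkl Laplacian. -/
def rootTerm {d : ℕ} (w : Ed d × ℝ → ℝ) (α : Ed d) (p : Ed d × ℝ) : ℝ :=
  fderiv ℝ w p (α, 0) / ⟪α, p.1⟫ - (w p - w (reflAt α p.1, p.2)) / ⟪α, p.1⟫ ^ 2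

/-- Off the mirror of `α` the root term is continuous, and it is nonpositive at a maximum. On the
mirror, Taylor's formula along the segment from `p` to `σ_α p` bounds the root term at `p` by half
of a second derivative in direction `α`, whose limit is nonpositive. -/
lemma eventually_rootTerm_le {d : ℕ} {U : Set (Ed d × ℝ)} {w : Ed d × ℝ → ℝ}
    (hU : IsOpen U) (hw : ContDiffOn ℝ 2 w U) {q : Ed d × ℝ} (hq : q ∈ U)
    (hmax : IsLocalMax w q) (α : Ed d) (hle : w (reflPt α q) ≤ w q)
    (hc : ContinuousAt w (reflPt α q)) {η : ℝ} (hη : 0 < η) :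
    ∀ᶠ p in 𝓝 q, ⟪α, p.1⟫ ≠ (0 : ℝ) → rootTerm w α p ≤ η := by
  by_cases hα : ⟪α, q.1⟫ = (0 : ℝ)
  · have h1 : ∀ᶠ p in 𝓝 q, pd2 w p (α, 0) < 2 * η :=
      (continuousAt_pd2 hU hw (α, 0) hq).eventually_lt continuousAt_const
        (lt_of_le_of_lt (pd2_nonpos_of_isLocalMax hU hw hq hmax _) (by positivity))
    obtain ⟨r, hr, hball⟩ := Metric.eventually_nhds_iff_ball.1 (h1.and (hU.mem_nhds hq))
    have hfix : reflPt α q = q := by rw [reflPt_eq, hα]; simp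
    have h2 : ∀ᶠ p in 𝓝 q, reflPt α p ∈ ball q r := by
      apply (continuous_reflPt α).continuousAt.eventually
      rw [hfix]
      exact ball_mem_nhds q hr
    filter_upwards [h2, ball_mem_nhds q hr] with p hp1 hp2 hne
    set t : ℝ := ⟪α, p.1⟫ with ht
    have hseg : ∀ s ∈ Set.Icc (0 : ℝ) 1,
        p + s • ((-t) • ((α, 0) : Ed d × ℝ)) ∈ ball q r := by
      intro s hs
      have := (convex_ball q r).add_smul_sub_mem hp2 hp1 hs
      rwa [reflPt_eq, add_sub_cancel_left] at this
    have hT := taylor_upper (C := t ^ 2 * (2 * η)) hU hw (fun s hs => (hball _ (hseg s hs)).2)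
      (fun s hs => by
        rw [pd2_smul hU hw _ _ (hball _ (hseg s hs)).2, neg_sq]
        exact mul_le_mul_of_nonneg_left (hball _ (hseg s hs)).1.le (sq_nonneg t))
    rw [← reflPt_eq, map_smul, smul_eq_mul] at hT
    have heq : rootTerm w α p
        = (t * fderiv ℝ w p (α, 0) - w p + w (reflPt α p)) / t ^ 2 := by
      unfold rootTerm reflPt
      rw [← ht]
      field_simp
      ring
    rw [heq, div_le_iff₀ (by positivity)]
    linarith
  · have hca : ContinuousAt (rootTerm w α) q := by
      have a1 : ContinuousAt (fun p : Ed d × ℝ => (⟪α, p.1⟫ : ℝ)) q := by fun_prop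
      have a2 : ContinuousAt (fun p => fderiv ℝ w p (α, 0)) q :=
        (differentiableAt_fderiv_apply hU hw _ hq).continuousAt
      have a3 : ContinuousAt w q := (hw.contDiffAt (hU.mem_nhds hq)).continuousAt
      have a4 : ContinuousAt (fun p => w (reflPt α p)) q :=
        ContinuousAt.comp (f := reflPt α) hc (continuous_reflPt α).continuousAt
      exact (a2.div a1 hα).sub ((a3.sub a4).div (a1.pow 2) (pow_ne_zero 2 hα))
    have hval : rootTerm w α q ≤ 0 := by
      have h0 : fderiv ℝ w q = 0 := hmax.fderiv_eq_zero
      have h3 : 0 ≤ (w q - w (reflPt α q)) / (⟪α, q.1⟫ : ℝ) ^ 2 :=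
        div_nonneg (sub_nonneg.2 hle) (sq_nonneg _)
      unfold rootTerm
      rw [h0]
      simpa [reflPt] using h3
    filter_upwards [hca.eventually_lt continuousAt_const (lt_of_le_of_lt hval hη)] with p hp _
      using hp.le

/-! ### The perturbation by `ε y²` -/

/-- Only the second derivative in `y` sees `ε y²`: the gradient and difference parts of `Δ_κ` act in
the `x`-variables and annihilate it. -/
lemma dunklLap_add_sq {d : ℕ} (Rp : Finset (Ed d)) (κ : Ed d → ℝ)
    {U : Set (Ed d × ℝ)} {u : Ed d × ℝ → ℝ} (hU : IsOpen U) (hu : ContDiffOn ℝ 2 u U) (ε : ℝ)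
    {p : Ed d × ℝ} (hp : p ∈ U) :
    dunklLap Rp κ (fun q => u q + ε * q.2 ^ 2) p = dunklLap Rp κ u p + 2 * ε := by
  have hfd : ∀ q ∈ U, ∀ v : Ed d × ℝ,
      fderiv ℝ (fun q : Ed d × ℝ => u q + ε * q.2 ^ 2) q v
        = fderiv ℝ u q v + ε * (2 * q.2 * v.2) := by
    intro q hq v
    have h1 : DifferentiableAt ℝ u q :=
      (hu.contDiffAt (hU.mem_nhds hq)).differentiableAt (by norm_num)
    have h2 : HasFDerivAt (fun q : Ed d × ℝ => q.2 ^ 2)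
        ((2 * q.2) • ContinuousLinearMap.snd ℝ (Ed d) ℝ) q := by
      simpa using (hasFDerivAt_snd (𝕜 := ℝ) (p := q)).pow 2
    rw [(h1.hasFDerivAt.fun_add (h2.const_mul ε)).fderiv]
    simp
  have hpd : ∀ v : Ed d × ℝ, pd2 (fun q : Ed d × ℝ => u q + ε * q.2 ^ 2) p v
      = pd2 u p v + 2 * ε * v.2 ^ 2 := by
    intro v
    unfold pd2
    have hev : (fun q => fderiv ℝ (fun q : Ed d × ℝ => u q + ε * q.2 ^ 2) q v)
        =ᶠ[𝓝 p] fun q => fderiv ℝ u q v + (2 * ε * v.2) * q.2 := by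
      filter_upwards [hU.mem_nhds hp] with q hq
      rw [hfd q hq v]
      ring
    rw [hev.fderiv_eq]
    have h1 := (differentiableAt_fderiv_apply hU hu v hp).hasFDerivAt
    have h2 := (hasFDerivAt_snd (𝕜 := ℝ) (p := p)).const_mul (2 * ε * v.2)
    rw [(h1.fun_add h2).fderiv]
    simp
    ring
  unfold dunklLap lapE
  simp only [hpd, hfd p hp]
  simp
  ring

/-- **Lemma 4.3 (maximum principle).** Let `Ω` be a `G`-invariant bounded domain in
`ℝ^{d+1}` and `u` continuous on `closure Ω`, `C²` on the region of `Ω` where `u > 0` with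
`Δ_κ u ≥ 0` there (at points with regular `x`-coordinate). If `u ≤ 0` on `∂Ω` then
`u ≤ 0` on `Ω`. -/
theorem dunkl_maximum_principle
    {d : ℕ} (hd : 1 ≤ d) (R Rp : Finset (Ed d)) (κ : Ed d → ℝ)
    (hRS : IsRootSystem R Rp κ)
    (Ω : Set (Ed d × ℝ)) (hΩo : IsOpen Ω) (hΩconn : IsConnected Ω)
    (hΩbdd : Bornology.IsBounded Ω)
    (hΩinv : ∀ σ ∈ dunklGroup R, (fun p : Ed d × ℝ => (σ p.1, p.2)) '' Ω = Ω)
    (u : Ed d × ℝ → ℝ) (hucont : ContinuousOn u (closure Ω))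
    (huC2 : ContDiffOn ℝ 2 u {p ∈ Ω | 0 < u p})
    (husub : ∀ p ∈ Ω, 0 < u p → isRegular R p.1 → 0 ≤ dunklLap Rp κ u p)
    (hbd : ∀ p ∈ frontier Ω, u p ≤ 0) :
    ∀ p ∈ Ω, u p ≤ 0 := by
  by_contra! hcon
  obtain ⟨p₀, hp₀, hu₀⟩ := hcon
  have hcpt : IsCompact (closure Ω) := hΩbdd.isCompact_closure
  obtain ⟨B, hB⟩ := hcpt.exists_bound_of_continuousOn (f := fun p : Ed d × ℝ => p.2 ^ 2)
    (by fun_prop)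
  have hBsq : ∀ p ∈ closure Ω, p.2 ^ 2 ≤ B := fun p hp => (le_abs_self _).trans (hB p hp)
  have hB0 : 0 ≤ B := (sq_nonneg _).trans (hBsq p₀ (subset_closure hp₀))
  -- `ε` is small enough that `ε y² < u p₀` on `closure Ω`.
  obtain ⟨ε, hε, hεB⟩ : ∃ ε > 0, ε * B < u p₀ :=
    ⟨u p₀ / (B + 1), by positivity, by
      rw [div_mul_eq_mul_div, div_lt_iff₀ (by positivity)]
      nlinarith⟩
  set w : Ed d × ℝ → ℝ := fun p => u p + ε * p.2 ^ 2 with hwdef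
  have hwcont : ContinuousOn w (closure Ω) := hucont.add (by fun_prop)
  obtain ⟨q, hqcl, hqmax⟩ := hcpt.exists_isMaxOn ⟨p₀, subset_closure hp₀⟩ hwcont
  have hqle : ∀ p ∈ closure Ω, w p ≤ w q := fun p hp => hqmax hp
  have huq : 0 < u q := by
    have h1 := hqle p₀ (subset_closure hp₀)
    have h2 := mul_le_mul_of_nonneg_left (hBsq q hqcl) hε.le
    have h3 : 0 ≤ ε * p₀.2 ^ 2 := by positivity
    simp only [hwdef] at h1
    linarith
  have hqΩ : q ∈ Ω := by
    by_contra hq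
    have : q ∈ frontier Ω := by
      rw [frontier, hΩo.interior_eq]
      exact ⟨hqcl, hq⟩
    exact absurd (hbd q this) (not_le.2 huq)
  set U : Set (Ed d × ℝ) := {p ∈ Ω | 0 < u p} with hUdef
  have hUo : IsOpen U :=
    (hucont.mono subset_closure).isOpen_inter_preimage hΩo isOpen_Ioi
  have hqU : q ∈ U := ⟨hqΩ, huq⟩
  have hwC2 : ContDiffOn ℝ 2 w U := huC2.add (by fun_prop)
  have hlm : IsLocalMax w q := by
    filter_upwards [hΩo.mem_nhds hqΩ] with p hp using hqle p (subset_closure hp)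
  have hrefl : ∀ α ∈ R, reflPt α q ∈ Ω := by
    intro α hα
    rw [← hΩinv (reflAt α) (Submonoid.subset_closure ⟨α, hα, rfl⟩)]
    exact ⟨q, hqΩ, rfl⟩
  -- `η` makes the limiting upper bound `η + 2 η ∑ κ(α)` equal to `ε`, below the `2 ε` gained
  -- from the perturbation.
  set K : ℝ := ∑ α ∈ Rp, κ α with hK
  have hK0 : 0 ≤ K := Finset.sum_nonneg fun α hα => hRS.kappa_nonneg α (hRS.pos_sub hα)
  set η : ℝ := ε / (1 + 2 * K) with hηdef
  have hη : 0 < η := by positivity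
  have hηK : η + 2 * (K * η) = ε := by
    rw [hηdef]
    field_simp
  have hlap : ∀ᶠ p in 𝓝 q, lapE w p < η := by
    have hca : ContinuousAt (lapE w) q :=
      (tendsto_finsetSum _ fun i _ => continuousAt_pd2 hUo hwC2 _ hqU).add
        (continuousAt_pd2 hUo hwC2 _ hqU)
    refine hca.eventually_lt continuousAt_const (lt_of_le_of_lt ?_ hη)
    exact add_nonpos (Finset.sum_nonpos fun i _ => pd2_nonpos_of_isLocalMax hUo hwC2 hqU hlm _)
      (pd2_nonpos_of_isLocalMax hUo hwC2 hqU hlm _)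
  have hroot : ∀ᶠ p in 𝓝 q, ∀ α ∈ Rp, ⟪α, p.1⟫ ≠ (0 : ℝ) → rootTerm w α p ≤ η := by
    rw [Filter.eventually_all_finset]
    intro α hα
    have hm := hrefl α (hRS.pos_sub hα)
    exact eventually_rootTerm_le hUo hwC2 hqU hlm α (hqle _ (subset_closure hm))
      (hwcont.continuousAt (mem_of_superset (hΩo.mem_nhds hm) subset_closure)) hη
  obtain ⟨p, hreg, hp1, hp2, hpU⟩ := ((dense_regular R hRS.nonzero).inter_nhds_nonempty
    (hlap.and (hroot.and (hUo.mem_nhds hqU))))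
  have hlow := husub p hpU.1 hpU.2 hreg
  have hadd := dunklLap_add_sq Rp κ hUo huC2 ε hpU
  have hup : dunklLap Rp κ w p ≤ η + 2 * (K * η) := by
    have : ∑ α ∈ Rp, κ α * rootTerm w α p ≤ K * η := by
      rw [hK, Finset.sum_mul]
      exact Finset.sum_le_sum fun α hα => mul_le_mul_of_nonneg_left
        (hp2 α hα (hreg α (hRS.pos_sub hα))) (hRS.kappa_nonneg α (hRS.pos_sub hα))
    change lapE w p + 2 * ∑ α ∈ Rp, κ α * rootTerm w α p ≤ _
    linarith
  rw [hηK] at hup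
  have hadd' : dunklLap Rp κ w p = dunklLap Rp κ u p + 2 * ε := hadd
  linarith

end
end
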